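/- Assume the abc-conjecture. Then there exist absolute constants c > 0 and C > 0 such that for all real x ≥ 1 and all real y with 1 ≤ y ≤ x, the number of squarefull integers in the interval (x, x + y] satisfies Q_2(x + y) − Q_2(x) ≤ C · y / (log(y + 1))^{1+c}. -/

import Mathlib

/-- A positive integer `n` is squarefull if every prime dividing `n` does so to at
least the second power. -/
def IsSquarefull (n : ℕ) : Prop := ∀ p : ℕ, p.Prime → p ∣ n → p ^ 2 ∣ n

/-- The radical (kernel) of a natural number: the product of its prime divisors. -/
def natRadical (n : ℕ) : ℕ := ∏ p ∈ n.primeFactors, p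

/-- The abc-conjecture: for every `ε > 0` there is `C_ε > 0` such that for all
coprime positive integers `a`, `b`, `c` with `a + b = c`, one has
`c ≤ C_ε · rad(a·b·c)^(1+ε)`. -/
def ABCConjecture : Prop :=
  ∀ ε : ℝ, 0 < ε → ∃ Cε : ℝ, 0 < Cε ∧ ∀ a b c : ℕ,
    0 < a → 0 < b → 0 < c → Nat.Coprime a b → a + b = c →
    (c : ℝ) ≤ Cε * (natRadical (a * b * c) : ℝ) ^ (1 + ε)

/-!
For squarefull `n`, `n + d`, `n + 2 * d` with `n = a * e`, `d = b * e` and `e = gcd n d`, the terms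
of `a * (a + 2 * b) + b ^ 2 = (a + b) ^ 2` have product of radical `O(n ^ (3 / 2) * d)`, whereas the
right-hand side is at least `(n / d) ^ 2`. Hence the abc-conjecture excludes three-term progressions
of large squarefull numbers with `d ^ 8 ≤ n`, and the squarefull numbers in a block of length about
`y ^ (1 / 8)` form a set without three-term progressions. The Kelley–Meka theorem bounds the size of
such sets with a saving larger than any power of the logarithm; two powers suffice here.

The Kelley–Meka theorem is proved by density increments on Bohr sets. If `A` has density `α` and no
three-term progressions, the doubled elements of `A` are atypical values of the convolution of `A`
with itself, so by Hölder's inequality the balanced indicator function has a large moment of order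
`O(log (1 / α))`. Since autocorrelations have nonnegative Fourier transform, this passes to a large
moment of the autocorrelation of `A`. Sifting then finds two dense sets almost all of whose
differences are popular differences of `A`, and almost periodicity together with Chang's inequality
shows that popular differences nearly fill a translate of a Bohr set of only slightly larger rank.
There `A` has density at least `1.01 * α` on a translate.
-/

namespace KelleyMeka

open Finset
open scoped ComplexConjugate

section Indicator

variable {G : Type*} [DecidableEq G]

/-- The real-valued indicator function of a finite set. -/
noncomputable def indicator (A : Finset G) (x : G) : ℝ := if x ∈ A then 1 else 0

lemma indicator_nonneg (A : Finset G) (x : G) : 0 ≤ indicator A x := by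
  unfold indicator; split_ifs <;> norm_num

lemma indicator_le_one (A : Finset G) (x : G) : indicator A x ≤ 1 := by
  unfold indicator; split_ifs <;> norm_num

variable [Fintype G]

lemma sum_indicator_mul (A : Finset G) (f : G → ℝ) : ∑ a, indicator A a * f a = ∑ a ∈ A, f a := by
  simp [indicator]

lemma sum_indicator (A : Finset G) : ∑ a, indicator A a = #A := by simp [indicator]

variable [AddCommGroup G]

lemma sum_indicator_add (A : Finset G) (x : G) : ∑ a, indicator A (a + x) = #A :=
  (Equiv.sum_comp (Equiv.addRight x) (indicator A)).trans (sum_indicator A)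

end Indicator

section Correlations

variable {G : Type*} [Fintype G] [AddCommGroup G]

/-- The self-convolution `f ∗ f`: for an indicator function, the number of representations of `w`
as a sum. -/
noncomputable def autoconv (f : G → ℝ) (w : G) : ℝ := ∑ a, f a * f (w - a)

/-- The autocorrelation `f ∘ f`: for an indicator function, the number of representations of `w`
as a difference. -/
noncomputable def autocorr (f : G → ℝ) (w : G) : ℝ := ∑ a, f (a + w) * f a

/-- The sum over `x ∈ D` of the product of the shifts of `f` by the entries of the tuple `s`; its
second moment over `s` is a moment of `autocorr f`. -/
noncomputable def shiftProdSum (f : G → ℝ) (D : Finset G) {p : ℕ} (s : Fin p → G) : ℝ :=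
  ∑ x ∈ D, ∏ i, f (s i + x)

lemma autocorr_sub (f : G → ℝ) (x y : G) :
    autocorr f (x - y) = ∑ a, f (a + x) * f (a + y) := by
  rw [autocorr, ← Equiv.sum_comp (Equiv.addRight y)]
  refine sum_congr rfl fun a _ => ?_
  rw [Equiv.coe_addRight, add_assoc, add_sub_cancel]

lemma autoconv_sub_add (f : G → ℝ) (x y t : G) :
    autoconv f (x - y + t) = ∑ a, f (a + x) * f (t - a - y) := by
  rw [autoconv, ← Equiv.sum_comp (Equiv.addRight x)]
  refine sum_congr rfl fun a _ => ?_
  rw [Equiv.coe_addRight, show x - y + t - (a + x) = t - a - y by abel]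

lemma autocorr_sub_pow (f : G → ℝ) (p : ℕ) (x y : G) :
    autocorr f (x - y) ^ p = ∑ s : Fin p → G, (∏ i, f (s i + x)) * ∏ i, f (s i + y) := by
  simp_rw [autocorr_sub, Fintype.sum_pow, prod_mul_distrib]

lemma autoconv_sub_add_pow (f : G → ℝ) (p : ℕ) (x y t : G) :
    autoconv f (x - y + t) ^ p =
      ∑ s : Fin p → G, (∏ i, f (s i + x)) * ∏ i, f (t - s i - y) := by
  simp_rw [autoconv_sub_add, Fintype.sum_pow, prod_mul_distrib]

lemma sum_autocorr_pow (f : G → ℝ) (D : Finset G) (p : ℕ) :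
    ∑ x ∈ D, ∑ y ∈ D, autocorr f (x - y) ^ p = ∑ s : Fin p → G, shiftProdSum f D s ^ 2 := by
  simp_rw [autocorr_sub_pow, sq, shiftProdSum, sum_mul_sum]
  exact sum_comm_cycle

lemma sum_autoconv_pow {D : Finset G} (hD : ∀ x ∈ D, -x ∈ D) (f : G → ℝ) (p : ℕ) (t : G) :
    ∑ x ∈ D, ∑ y ∈ D, autoconv f (x - y + t) ^ p =
      ∑ s : Fin p → G, shiftProdSum f D s * shiftProdSum f D fun i => t - s i := by
  have reflect (s : Fin p → G) :
      (shiftProdSum f D fun i => t - s i) = ∑ y ∈ D, ∏ i, f (t - s i - y) :=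
    sum_nbij' (fun y => -y) (fun y => -y) hD hD (by simp) (by simp) (by simp)
  simp_rw [autoconv_sub_add_pow, reflect, shiftProdSum, sum_mul_sum]
  exact sum_comm_cycle

lemma sum_autoconv_pow_le_sum_autocorr_pow {D : Finset G} (hD : ∀ x ∈ D, -x ∈ D) (f : G → ℝ)
    (p : ℕ) (t : G) :
    ∑ x ∈ D, ∑ y ∈ D, autoconv f (x - y + t) ^ p ≤
      ∑ x ∈ D, ∑ y ∈ D, autocorr f (x - y) ^ p := by
  have reflect : ∑ s : Fin p → G, (shiftProdSum f D fun i => t - s i) ^ 2 =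
      ∑ s : Fin p → G, shiftProdSum f D s ^ 2 :=
    Equiv.sum_comp (Equiv.piCongrRight fun _ : Fin p => Equiv.subLeft t)
      fun s => shiftProdSum f D s ^ 2
  rw [sum_autoconv_pow hD, sum_autocorr_pow]
  calc ∑ s : Fin p → G, shiftProdSum f D s * (shiftProdSum f D fun i => t - s i)
      ≤ ∑ s : Fin p → G,
          (shiftProdSum f D s ^ 2 + (shiftProdSum f D fun i => t - s i) ^ 2) / 2 := by
        gcongr with s
        linarith [two_mul_le_add_sq (shiftProdSum f D s) (shiftProdSum f D fun i => t - s i)]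
    _ = ∑ s : Fin p → G, shiftProdSum f D s ^ 2 := by
        rw [← sum_div, sum_add_distrib, reflect]; ring

end Correlations

section Unbalancing

lemma four_mul_pow_le_pow {p : ℕ} (hp : 12 ≤ p) : 4 * (0.8 : ℝ) ^ p ≤ 0.9 ^ p := by
  induction p, hp using Nat.le_induction with
  | base => norm_num
  | succ p _ ih =>
    rw [pow_succ, pow_succ]
    nlinarith [pow_pos (show (0 : ℝ) < 0.8 by norm_num) p]

lemma pow_two_mul_succ_le {p : ℕ} (hp : 3 ≤ p) :
    (1.5 : ℝ) ^ (2 * (p + 1)) ≤ 1.9 ^ (2 * (p + 1)) * (0.3 * 0.9 ^ p) := by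
  induction p, hp using Nat.le_induction with
  | base => norm_num
  | succ p _ ih =>
    rw [mul_add_one 2 (p + 1), pow_add, pow_add, pow_succ (0.9 : ℝ)]
    nlinarith [show (0 : ℝ) < 1.5 ^ (2 * (p + 1)) by positivity]

lemma pow_mul_positive_part_le {g r : ℝ} {n : ℕ} (hn : Odd n) (hr : 0 ≤ r) (hgr : g + 0.98 ≤ r) :
    (1.9 : ℝ) ^ (2 * n) * ((g ^ n + |g| ^ n) / 2) ≤ r ^ (2 * n) := by
  rcases le_or_gt g 0 with hg | hg
  · rw [abs_of_nonpos hg, hn.neg_pow]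
    simpa using pow_nonneg hr (2 * n)
  · have hsq : (1.9 : ℝ) ^ 2 * g ≤ r ^ 2 := by nlinarith [sq_nonneg (g - 0.98)]
    rw [abs_of_pos hg, add_self_div_two, pow_mul, pow_mul, ← mul_pow]
    exact pow_le_pow_left₀ (by positivity) hsq n

lemma mul_pow_sub_pow_le_abs_pow_succ (g : ℝ) {p : ℕ} (hp : Even p) :
    0.8 * (g ^ p - 0.8 ^ p) ≤ |g| ^ (p + 1) := by
  rw [← hp.pow_abs g]
  rcases le_or_gt (0.8 : ℝ) |g| with hg | hg
  · have : 0 ≤ |g| ^ p := by positivity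
    have : (0 : ℝ) ≤ 0.8 ^ p := by positivity
    rw [pow_succ]; nlinarith
  · have : |g| ^ p ≤ 0.8 ^ p := pow_le_pow_left₀ (abs_nonneg _) hg.le _
    have : 0 ≤ |g| ^ (p + 1) := by positivity
    linarith

/-- A large even moment forces the first absolute moment of order `p + 1` to be large; as the
signed one is nonnegative, the positive part of `g` carries half of it. -/
lemma unbalancing {Ω : Type*} (S : Finset Ω) (g R : Ω → ℝ) {p : ℕ} (hp : Even p) (hp12 : 12 ≤ p)
    (hR0 : ∀ w ∈ S, 0 ≤ R w) (hR : ∀ w ∈ S, g w + 0.98 ≤ R w)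
    (hodd : 0 ≤ ∑ w ∈ S, g w ^ (p + 1)) (heven : (0.9 : ℝ) ^ p * #S ≤ ∑ w ∈ S, g w ^ p) :
    (1.5 : ℝ) ^ (2 * (p + 1)) * #S ≤ ∑ w ∈ S, R w ^ (2 * (p + 1)) := by
  have habs : ∑ w ∈ S, 0.8 * (g w ^ p - 0.8 ^ p) ≤ ∑ w ∈ S, |g w| ^ (p + 1) :=
    sum_le_sum fun w _ => mul_pow_sub_pow_le_abs_pow_succ (g w) hp
  rw [← mul_sum, sum_sub_distrib, sum_const, nsmul_eq_mul] at habs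
  have hpos : 0.3 * (0.9 : ℝ) ^ p * #S ≤
      (∑ w ∈ S, g w ^ (p + 1) + ∑ w ∈ S, |g w| ^ (p + 1)) / 2 := by
    nlinarith [four_mul_pow_le_pow hp12, (#S).cast_nonneg (α := ℝ)]
  calc (1.5 : ℝ) ^ (2 * (p + 1)) * #S
      ≤ 1.9 ^ (2 * (p + 1)) * (0.3 * 0.9 ^ p) * #S := by
        gcongr; exact pow_two_mul_succ_le (by lia)
    _ = 1.9 ^ (2 * (p + 1)) * (0.3 * 0.9 ^ p * #S) := mul_assoc _ _ _
    _ ≤ 1.9 ^ (2 * (p + 1)) *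
          ((∑ w ∈ S, g w ^ (p + 1) + ∑ w ∈ S, |g w| ^ (p + 1)) / 2) := by gcongr
    _ = ∑ w ∈ S, 1.9 ^ (2 * (p + 1)) * ((g w ^ (p + 1) + |g w| ^ (p + 1)) / 2) := by
        rw [← mul_sum, ← sum_div, sum_add_distrib]
    _ ≤ ∑ w ∈ S, R w ^ (2 * (p + 1)) :=
        sum_le_sum fun w hw => pow_mul_positive_part_le hp.add_one (hR0 w hw) (hR w hw)

end Unbalancing

section Sifting

variable {G : Type*} [AddCommGroup G] [DecidableEq G]

/-- The elements of `D` all of whose translates by the tuple `s` lie in `A`; sifting finds a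
useful one among these sets. -/
def siftedSet (A D : Finset G) {q : ℕ} (s : Fin q → G) : Finset G :=
  {x ∈ D | ∀ i, s i + x ∈ A}

lemma sum_siftedSet (A D : Finset G) {q : ℕ} (s : Fin q → G) (F : G → ℝ) :
    ∑ x ∈ siftedSet A D s, F x = ∑ x ∈ D, (∏ i, indicator A (s i + x)) * F x := by
  simp [siftedSet, indicator, sum_filter, prod_ite_zero]

variable [Fintype G]

lemma autocorr_indicator_nonneg (A : Finset G) (x : G) : 0 ≤ autocorr (indicator A) x :=
  sum_nonneg fun _ _ => mul_nonneg (indicator_nonneg _ _) (indicator_nonneg _ _)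

lemma sum_card_siftedSet (A D : Finset G) (q : ℕ) :
    ∑ s : Fin q → G, (#(siftedSet A D s) : ℝ) = #D * (#A : ℝ) ^ q := by
  have count (s : Fin q → G) :
      (#(siftedSet A D s) : ℝ) = ∑ x ∈ D, ∏ i, indicator A (s i + x) := by
    simpa using sum_siftedSet A D s fun _ => 1
  have tuples (x : G) : ∑ s : Fin q → G, ∏ i, indicator A (s i + x) = (#A : ℝ) ^ q := by
    rw [← Fintype.sum_pow fun a => indicator A (a + x), sum_indicator_add]
  simp_rw [count]
  rw [sum_comm]
  simp_rw [tuples, sum_const, nsmul_eq_mul]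

lemma sum_siftedSet_pairs (A D : Finset G) (q : ℕ) (F : G → G → ℝ) :
    ∑ s : Fin q → G, ∑ x ∈ siftedSet A D s, ∑ y ∈ siftedSet A D s, F x y =
      ∑ x ∈ D, ∑ y ∈ D, F x y * autocorr (indicator A) (x - y) ^ q := by
  simp_rw [sum_siftedSet, autocorr_sub_pow, mul_sum]
  rw [← sum_comm_cycle]
  exact sum_congr rfl fun x _ => sum_congr rfl fun y _ => sum_congr rfl fun s _ => by ring

lemma exists_sifted_subset (A : Finset G) {D : Finset G} (hD : D.Nonempty) {q : ℕ} {m θ : ℝ}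
    (hm : 0 ≤ m) (hθ : 0 ≤ θ)
    (hmoment : (1.5 * m) ^ q * (#D : ℝ) ^ 2 ≤
      ∑ x ∈ D, ∑ y ∈ D, autocorr (indicator A) (x - y) ^ q)
    (hnum : 100 * (1.3 * m) ^ q + θ * (#A : ℝ) ^ q < (1.5 * m) ^ q) :
    ∃ A' ⊆ D, A'.Nonempty ∧ θ * #D ≤ #A' ∧
      ∑ x ∈ A', ∑ y ∈ A', (if autocorr (indicator A) (x - y) < 1.3 * m then (1 : ℝ) else 0) ≤
        (#A' : ℝ) ^ 2 / 100 := by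
  by_contra! hcon
  set unpopular : G → ℝ := fun w => if autocorr (indicator A) w < 1.3 * m then 1 else 0
  have unpopular_nonneg (w : G) : 0 ≤ unpopular w := by
    simp only [unpopular]; split_ifs <;> norm_num
  have hsifted (s : Fin q → G) : (#(siftedSet A D s) : ℝ) ^ 2 ≤ θ * #D * #(siftedSet A D s) +
      100 * ∑ x ∈ siftedSet A D s, ∑ y ∈ siftedSet A D s, unpopular (x - y) := by
    have hsum : 0 ≤ ∑ x ∈ siftedSet A D s, ∑ y ∈ siftedSet A D s, unpopular (x - y) :=
      sum_nonneg fun _ _ => sum_nonneg fun _ _ => unpopular_nonneg _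
    have : (0 : ℝ) ≤ #(siftedSet A D s) := Nat.cast_nonneg _
    rcases (siftedSet A D s).eq_empty_or_nonempty with h | h
    · simp [h]
    rcases le_or_gt (θ * #D) #(siftedSet A D s) with hlarge | hsmall
    · have : (#(siftedSet A D s) : ℝ) ^ 2 / 100 <
          ∑ x ∈ siftedSet A D s, ∑ y ∈ siftedSet A D s, unpopular (x - y) :=
        hcon (siftedSet A D s) (filter_subset _ _) h hlarge
      have : 0 ≤ θ * (#D : ℝ) * #(siftedSet A D s) := by positivity
      linarith
    · nlinarith
  have hunpopular (w : G) : unpopular w * autocorr (indicator A) w ^ q ≤ (1.3 * m) ^ q := by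
    simp only [unpopular]
    split_ifs with h
    · rw [one_mul]; exact pow_le_pow_left₀ (autocorr_indicator_nonneg _ _) h.le _
    · rw [zero_mul]; positivity
  have hupper : ∑ x ∈ D, ∑ y ∈ D, unpopular (x - y) * autocorr (indicator A) (x - y) ^ q ≤
      (#D : ℝ) ^ 2 * (1.3 * m) ^ q :=
    (sum_le_sum fun x _ => sum_le_sum fun y _ => hunpopular (x - y)).trans_eq
      (by simp only [sum_const, nsmul_eq_mul]; ring)
  have hlower := sum_le_sum fun s (_ : s ∈ univ) => hsifted s
  have hsquare := sum_siftedSet_pairs A D q fun _ _ => 1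
  simp only [sum_const, nsmul_eq_mul, mul_one, one_mul, ← sq] at hsquare
  rw [sum_add_distrib, ← mul_sum, ← mul_sum, sum_card_siftedSet,
    sum_siftedSet_pairs A D q fun x y => unpopular (x - y), hsquare] at hlower
  have hDsq : (0 : ℝ) < (#D : ℝ) ^ 2 := by have := hD.card_pos; positivity
  nlinarith [mul_lt_mul_of_pos_left hnum hDsq]

end Sifting

section Localization

variable {G : Type*} [AddCommGroup G]

lemma sum_sum_filter_add [DecidableEq G] (A' D' W : Finset G) (hW : ∀ x ∈ A', ∀ y ∈ D', x - y ∈ W)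
    (F : G → ℝ) :
    ∑ z ∈ W, ∑ b ∈ D' with z + b ∈ A', F (z + b) = #D' * ∑ a ∈ A', F a := by
  have fiber : ∀ b ∈ D', ∑ z ∈ W, (if z + b ∈ A' then F (z + b) else 0) = ∑ a ∈ A', F a := by
    intro b hb
    rw [← sum_filter]
    exact sum_nbij' (· + b) (· - b) (by simp) (by simpa +contextual using fun a ha => hW a ha b hb)
      (by simp) (by simp) (by simp)
  simp_rw [sum_filter]
  rw [sum_comm, sum_congr rfl fiber, sum_const, nsmul_eq_mul]

lemma exists_localized_subset {A' D' W : Finset G} (hA' : A'.Nonempty) (hD' : D'.Nonempty)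
    {w : G → ℝ} (hw : ∀ x, 0 ≤ w x) {θ : ℝ} (hθ : 0 ≤ θ)
    (hbad : ∑ x ∈ A', ∑ y ∈ A', w (x - y) ≤ (#A' : ℝ) ^ 2 / 100)
    (hW : ∀ x ∈ A', ∀ y ∈ D', x - y ∈ W) (hWcard : θ * #W ≤ 2 * #A') :
    ∃ z, ∃ A₂ ⊆ D', (∀ b ∈ A₂, z + b ∈ A') ∧ θ / 4 * #D' ≤ #A₂ ∧
      ∑ a ∈ A', ∑ b ∈ A₂, w (a - (z + b)) ≤ (#A' : ℝ) * #A₂ / 40 := by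
  classical
  by_contra! hcon
  have hA'pos : (0 : ℝ) < #A' := mod_cast hA'.card_pos
  have hD'pos : (0 : ℝ) < #D' := mod_cast hD'.card_pos
  have translate (z : G) : (#A' : ℝ) * #{b ∈ D' | z + b ∈ A'} ≤ #A' * (θ / 4 * #D') +
      40 * ∑ b ∈ D' with z + b ∈ A', ∑ a ∈ A', w (a - (z + b)) := by
    rw [sum_comm]
    have hsum : 0 ≤ ∑ a ∈ A', ∑ b ∈ D' with z + b ∈ A', w (a - (z + b)) :=
      sum_nonneg fun _ _ => sum_nonneg fun _ _ => hw _
    rcases le_or_gt (θ / 4 * #D') #{b ∈ D' | z + b ∈ A'} with hlarge | hsmall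
    · have := hcon z {b ∈ D' | z + b ∈ A'} (filter_subset _ _) (by simp) hlarge
      have : 0 ≤ (#A' : ℝ) * (θ / 4 * #D') := by positivity
      linarith
    · nlinarith
  have htotal := sum_le_sum fun z (_ : z ∈ W) => translate z
  have hcard := sum_sum_filter_add A' D' W hW fun _ => 1
  have hweight := sum_sum_filter_add A' D' W hW fun z => ∑ a ∈ A', w (a - z)
  simp only [sum_const, nsmul_eq_mul, mul_one] at hcard
  rw [← mul_sum, hcard, sum_add_distrib, ← mul_sum (a := (40 : ℝ)), hweight, sum_const,
    nsmul_eq_mul] at htotal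
  rw [sum_comm] at hbad
  have hsmall : (#W : ℝ) * (#A' * (θ / 4 * #D')) ≤ #A' * #D' * #A' / 2 := by
    nlinarith [mul_le_mul_of_nonneg_left hWcard (mul_pos hA'pos hD'pos).le]
  have hlight := mul_le_mul_of_nonneg_left hbad hD'pos.le
  nlinarith [mul_pos (mul_pos hA'pos hD'pos) hA'pos]

end Localization

section Sampling

lemma card_filter_lt_sum_le {G : Type*} (A : Finset G) {Z : G → ℝ}
    (hZ : ∀ a ∈ A, |Z a| ≤ 1) (hsum : ∑ a ∈ A, Z a = 0) (k : ℕ) {ε : ℝ} (hε : 0 ≤ ε) :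
    (#{v ∈ Fintype.piFinset fun _ : Fin k => A | k * ε < ∑ i, Z (v i)} : ℝ) ≤
      Real.exp (-(k * ε ^ 2 / 2)) * (#A : ℝ) ^ k := by
  have markov (v : Fin k → G) : (if k * ε < ∑ i, Z (v i) then (1 : ℝ) else 0) ≤
      Real.exp (-(k * ε ^ 2)) * ∏ i, Real.exp (Z (v i) * ε) := by
    rw [← Real.exp_sum, ← Real.exp_add, ← sum_mul]
    split_ifs with h
    · exact Real.one_le_exp (by nlinarith)
    · positivity
  have mgf : ∑ a ∈ A, Real.exp (Z a * ε) ≤ #A * Real.exp (ε ^ 2 / 2) := by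
    calc ∑ a ∈ A, Real.exp (Z a * ε)
        ≤ ∑ a ∈ A, (Real.cosh ε + Z a * Real.sinh ε) :=
          sum_le_sum fun a ha => Real.exp_mul_le_cosh_add_mul_sinh (hZ a ha) ε
      _ = #A * Real.cosh ε := by rw [sum_add_distrib, ← sum_mul, hsum]; simp
      _ ≤ #A * Real.exp (ε ^ 2 / 2) := by gcongr; exact Real.cosh_le_exp_half_sq ε
  rw [card_filter, Nat.cast_sum]
  push_cast
  calc ∑ v ∈ Fintype.piFinset fun _ : Fin k => A, (if k * ε < ∑ i, Z (v i) then (1 : ℝ) else 0)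
      ≤ ∑ v ∈ Fintype.piFinset fun _ : Fin k => A,
          Real.exp (-(k * ε ^ 2)) * ∏ i, Real.exp (Z (v i) * ε) := sum_le_sum fun v _ => markov v
    _ = Real.exp (-(k * ε ^ 2)) * (∑ a ∈ A, Real.exp (Z a * ε)) ^ k := by
        rw [← mul_sum, sum_prod_piFinset A fun (_ : Fin k) a => Real.exp (Z a * ε)]
        simp
    _ ≤ Real.exp (-(k * ε ^ 2)) * (#A * Real.exp (ε ^ 2 / 2)) ^ k := by gcongr
    _ = Real.exp (-(k * ε ^ 2 / 2)) * (#A : ℝ) ^ k := by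
        rw [mul_pow, ← Real.exp_nat_mul, mul_left_comm, ← Real.exp_add, mul_comm]
        congr 2; ring

lemma card_filter_lt_abs_sum_le {G : Type*} (A : Finset G) {Z : G → ℝ}
    (hZ : ∀ a ∈ A, |Z a| ≤ 1) (hsum : ∑ a ∈ A, Z a = 0) (k : ℕ) {ε : ℝ} (hε : 0 ≤ ε) :
    (#{v ∈ Fintype.piFinset fun _ : Fin k => A | k * ε < |∑ i, Z (v i)|} : ℝ) ≤
      2 * Real.exp (-(k * ε ^ 2 / 2)) * (#A : ℝ) ^ k := by
  classical
  have hpos := card_filter_lt_sum_le A hZ hsum k hε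
  have hneg := card_filter_lt_sum_le A (Z := -Z) (by simpa using hZ) (by simp [hsum]) k hε
  simp only [Pi.neg_apply, sum_neg_distrib] at hneg
  simp_rw [lt_abs]
  rw [filter_or]
  have hunion := card_union_le
    {v ∈ Fintype.piFinset fun _ : Fin k => A | k * ε < ∑ i, Z (v i)}
    {v ∈ Fintype.piFinset fun _ : Fin k => A | k * ε < -∑ i, Z (v i)}
  have : (_ : ℝ) ≤ _ := Nat.cast_le.2 hunion
  push_cast at this
  linarith

variable {G : Type*} [AddCommGroup G] [DecidableEq G]

/-- The number of elements of `X` that are moved into `S` by the translation by `t`. -/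
noncomputable def shiftCount (S X : Finset G) (t : G) : ℝ := ∑ x ∈ X, indicator S (x + t)

/-- The proportion of elements of `X` that are moved into `S` by the translation by `t`. -/
noncomputable def shiftDensity (S X : Finset G) (t : G) : ℝ := shiftCount S X t / #X

/-- The estimate for `shiftDensity S X t` obtained from the sample `v` of elements of `X`. -/
noncomputable def sampleDensity (S : Finset G) {k : ℕ} (v : Fin k → G) (t : G) : ℝ :=
  (∑ i, indicator S (v i + t)) / k

open Classical in
/-- The translations in `W` for which the sample `v` misjudges the density by more than `ε`. -/
noncomputable def deviantSet (S X W : Finset G) (ε : ℝ) {k : ℕ} (v : Fin k → G) : Finset G :=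
  {t ∈ W | ε < |sampleDensity S v t - shiftDensity S X t|}

lemma shiftCount_eq_card (S X : Finset G) (t : G) :
    shiftCount S X t = #{x ∈ X | x + t ∈ S} := by
  simp [shiftCount, indicator, sum_boole]

lemma shiftCount_nonneg (S X : Finset G) (t : G) : 0 ≤ shiftCount S X t :=
  sum_nonneg fun _ _ => indicator_nonneg _ _

lemma shiftCount_le_card (S X : Finset G) (t : G) : shiftCount S X t ≤ #X := by
  simpa [shiftCount] using sum_le_sum fun x (_ : x ∈ X) => indicator_le_one S (x + t)

lemma shiftDensity_nonneg (S X : Finset G) (t : G) : 0 ≤ shiftDensity S X t :=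
  div_nonneg (shiftCount_nonneg _ _ _) (Nat.cast_nonneg _)

lemma shiftDensity_le_one (S X : Finset G) (t : G) : shiftDensity S X t ≤ 1 :=
  div_le_one_of_le₀ (shiftCount_le_card _ _ _) (Nat.cast_nonneg _)

lemma card_filter_lt_abs_sampleDensity_sub_le (S : Finset G) {X : Finset G} (hX : X.Nonempty)
    (t : G) {ε : ℝ} (hε : 0 ≤ ε) {k : ℕ} (hk : 0 < k) :
    (#{v ∈ Fintype.piFinset fun _ : Fin k => X |
      ε < |sampleDensity S v t - shiftDensity S X t|} : ℝ) ≤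
      2 * Real.exp (-(k * ε ^ 2 / 2)) * (#X : ℝ) ^ k := by
  have hXne : (#X : ℝ) ≠ 0 := mod_cast hX.card_ne_zero
  have hkpos : (0 : ℝ) < k := mod_cast hk
  have hcentred : ∑ x ∈ X, (indicator S (x + t) - shiftDensity S X t) = 0 := by
    rw [sum_sub_distrib, sum_const, nsmul_eq_mul, shiftDensity, mul_div_cancel₀ _ hXne, shiftCount,
      sub_self]
  have hbounded : ∀ x ∈ X, |indicator S (x + t) - shiftDensity S X t| ≤ 1 := by
    intro x _
    rw [abs_le]
    constructor <;> linarith [indicator_nonneg S (x + t), indicator_le_one S (x + t),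
      shiftDensity_nonneg S X t, shiftDensity_le_one S X t]
  have hscale (v : Fin k → G) : ∑ i, (indicator S (v i + t) - shiftDensity S X t) =
      k * (sampleDensity S v t - shiftDensity S X t) := by
    rw [sum_sub_distrib, sum_const, sampleDensity, card_univ, Fintype.card_fin, nsmul_eq_mul]
    field_simp
  simpa only [hscale, abs_mul, abs_of_pos hkpos, mul_lt_mul_iff_right₀ hkpos] using
    card_filter_lt_abs_sum_le X hbounded hcentred k hε

lemma sum_card_deviantSet_le (S : Finset G) {X : Finset G} (hX : X.Nonempty) (W : Finset G) {ε : ℝ}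
    (hε : 0 ≤ ε) {k : ℕ} (hk : 0 < k) :
    ∑ v ∈ Fintype.piFinset fun _ : Fin k => X, (#(deviantSet S X W ε v) : ℝ) ≤
      2 * Real.exp (-(k * ε ^ 2 / 2)) * (#X : ℝ) ^ k * #W := by
  classical
  calc ∑ v ∈ Fintype.piFinset fun _ : Fin k => X, (#(deviantSet S X W ε v) : ℝ)
      = ∑ t ∈ W, (#{v ∈ Fintype.piFinset fun _ : Fin k => X |
          ε < |sampleDensity S v t - shiftDensity S X t|} : ℝ) := by
        simp only [deviantSet, card_filter, Nat.cast_sum]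
        exact sum_comm
    _ ≤ ∑ t ∈ W, 2 * Real.exp (-(k * ε ^ 2 / 2)) * (#X : ℝ) ^ k :=
        sum_le_sum fun t _ => by
          convert card_filter_lt_abs_sampleDensity_sub_le S hX t hε hk
    _ = 2 * Real.exp (-(k * ε ^ 2 / 2)) * (#X : ℝ) ^ k * #W := by
        rw [sum_const, nsmul_eq_mul, mul_comm]

open Classical in
/-- The samples from `X` that misjudge the density for only few translations in `W`. The bound is
twice the average number of misjudged translations. -/
noncomputable def goodSamples (S X W : Finset G) (ε : ℝ) (k : ℕ) : Finset (Fin k → G) :=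
  {v ∈ Fintype.piFinset fun _ : Fin k => X |
    (#(deviantSet S X W ε v) : ℝ) ≤ 4 * Real.exp (-(k * ε ^ 2 / 2)) * #W}

lemma card_pow_le_two_mul_card_goodSamples (S : Finset G) {X W : Finset G} (hX : X.Nonempty)
    (hW : W.Nonempty) {ε : ℝ} (hε : 0 ≤ ε) {k : ℕ} (hk : 0 < k) :
    (#X : ℝ) ^ k ≤ 2 * #(goodSamples S X W ε k) := by
  classical
  set ξ := Real.exp (-(k * ε ^ 2 / 2)) * #W with hξ
  have hξpos : 0 < ξ := mul_pos (Real.exp_pos _) (mod_cast hW.card_pos)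
  set tuples := Fintype.piFinset fun _ : Fin k => X
  have markov : ∑ v ∈ tuples, 4 * ξ * (1 - if v ∈ goodSamples S X W ε k then (1 : ℝ) else 0) ≤
      2 * ξ * (#X : ℝ) ^ k := by
    refine (sum_le_sum fun v hv => ?_).trans
      ((sum_card_deviantSet_le S hX W hε hk).trans_eq (by rw [hξ]; ring))
    split_ifs with hgood
    · simp
    · have : ¬(#(deviantSet S X W ε v) : ℝ) ≤ 4 * Real.exp (-(k * ε ^ 2 / 2)) * #W :=
        fun h => hgood (mem_filter.2 ⟨hv, h⟩)
      rw [hξ]; linarith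
  have hgoodCard : ∑ v ∈ tuples, (if v ∈ goodSamples S X W ε k then (1 : ℝ) else 0) =
      #(goodSamples S X W ε k) := by
    rw [sum_boole, filter_mem_eq_inter, inter_eq_right.2 (by exact filter_subset _ _)]
  have htuplesCard : (#tuples : ℝ) = (#X : ℝ) ^ k := by simp [tuples]
  rw [← mul_sum, sum_sub_distrib, hgoodCard, sum_const, nsmul_eq_mul, mul_one, htuplesCard]
    at markov
  nlinarith

lemma exists_tuple_many_translates {P E : Finset G} {k : ℕ} {L : Finset (Fin k → G)}
    (hP : ∀ v ∈ L, ∀ t ∈ E, ∀ i, v i + t ∈ P) :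
    ∃ v : Fin k → G, #E * #L ≤ #P ^ k * #{t ∈ E | (fun i => v i - t) ∈ L} := by
  by_contra! hcon
  set sums := Fintype.piFinset fun _ : Fin k => P
  have fiber (w : Fin k → G) :
      #{x ∈ E ×ˢ L | (fun i => x.2 i + x.1) = w} = #{t ∈ E | (fun i => w i - t) ∈ L} :=
    card_nbij' Prod.fst (fun t => (t, fun i => w i - t))
      (by rintro ⟨t, v⟩ h; aesop) (by intro t; simp +contextual) (by rintro ⟨t, v⟩ h; aesop)
      (by intro t; simp)
  have hcount : #E * #L = ∑ w ∈ sums, #{t ∈ E | (fun i => w i - t) ∈ L} := by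
    rw [← card_product, card_eq_sum_card_fiberwise (f := fun x i => x.2 i + x.1) (t := sums)]
    · exact sum_congr rfl fun w _ => fiber w
    · rintro ⟨t, v⟩ h
      rw [mem_coe, mem_product] at h
      exact Fintype.mem_piFinset.2 fun i => hP v h.2 t h.1 i
  rcases sums.eq_empty_or_nonempty with hsums | hsums
  · rw [hsums, sum_empty] at hcount
    have := hcon 0
    lia
  · have hlt := sum_lt_sum_of_nonempty hsums fun w _ => hcon w
    rw [← mul_sum, ← hcount, sum_const, smul_eq_mul, Fintype.card_piFinset_const] at hlt
    exact hlt.false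

lemma sampleDensity_sub (S : Finset G) {k : ℕ} (v : Fin k → G) (s t : G) :
    sampleDensity S (fun i => v i - s) t = sampleDensity S v (t - s) := by
  simp only [sampleDensity, sub_add_eq_add_sub, add_sub_assoc]

lemma abs_shiftDensity_sub_le (S X W : Finset G) {ε : ℝ} (hε : 0 ≤ ε) {k : ℕ} (v : Fin k → G)
    {s s' t t' : G} (hst : t - s = t' - s') (ht : t ∈ W) (ht' : t' ∈ W) :
    |shiftDensity S X t - shiftDensity S X t'| ≤
      2 * ε + indicator (deviantSet S X W ε fun i => v i - s) t +
        indicator (deviantSet S X W ε fun i => v i - s') t' := by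
  have htrivial : |shiftDensity S X t - shiftDensity S X t'| ≤ 1 := by
    rw [abs_le]
    constructor <;> linarith [shiftDensity_nonneg S X t, shiftDensity_le_one S X t,
      shiftDensity_nonneg S X t', shiftDensity_le_one S X t']
  by_cases hdev : t ∈ deviantSet S X W ε fun i => v i - s
  · rw [indicator, if_pos hdev]
    linarith [indicator_nonneg (deviantSet S X W ε fun i => v i - s') t']
  by_cases hdev' : t' ∈ deviantSet S X W ε fun i => v i - s'
  · rw [indicator.eq_def _ t', if_pos hdev']
    linarith [indicator_nonneg (deviantSet S X W ε fun i => v i - s) t]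
  rw [indicator, indicator, if_neg hdev, if_neg hdev']
  simp only [deviantSet, mem_filter, ht, ht', true_and, not_lt, sampleDensity_sub, ← hst, abs_le]
    at hdev hdev'
  rw [abs_le]
  constructor <;> linarith [hdev.1, hdev.2, hdev'.1, hdev'.2]

lemma sum_indicator_sub_le (Y B : Finset G) (c : G) : ∑ b ∈ B, indicator Y (c - b) ≤ #Y := by
  simp only [indicator, sum_boole, Nat.cast_le]
  exact card_le_card_of_injOn (c - ·) (by simp [Set.MapsTo]) sub_right_injective.injOn

/-- Croot–Sisask almost periodicity: two translates of one sample that are both good give the same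
estimate for the density. -/
lemma exists_almostPeriods (S B : Finset G) {X W P E : Finset G} (hX : X.Nonempty)
    (hW : W.Nonempty) (hP : ∀ x ∈ X, ∀ t ∈ E, x + t ∈ P) {ε : ℝ} (hε : 0 ≤ ε) {k : ℕ}
    (hk : 0 < k) :
    ∃ T ⊆ E, (#E : ℝ) * (#X : ℝ) ^ k ≤ 2 * (#P : ℝ) ^ k * #T ∧
      ∀ u, ∀ t ∈ T, ∀ t' ∈ T, (∀ b ∈ B, u - b ∈ W ∧ u + (t - t') - b ∈ W) →
        |∑ b ∈ B, shiftDensity S X (u + (t - t') - b) - ∑ b ∈ B, shiftDensity S X (u - b)| ≤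
          2 * ε * #B + 8 * Real.exp (-(k * ε ^ 2 / 2)) * #W := by
  classical
  obtain ⟨v, hv⟩ := exists_tuple_many_translates (L := goodSamples S X W ε k) (E := E) (P := P)
    fun v hv t ht i => hP _ (Fintype.mem_piFinset.1 (mem_filter.1 hv).1 i) t ht
  refine ⟨{t ∈ E | (fun i => v i - t) ∈ goodSamples S X W ε k}, filter_subset _ _, ?_, ?_⟩
  · have hgood := card_pow_le_two_mul_card_goodSamples S hX hW hε hk
    have hv' : (#E : ℝ) * #(goodSamples S X W ε k) ≤ (#P : ℝ) ^ k *
        #{t ∈ E | (fun i => v i - t) ∈ goodSamples S X W ε k} := mod_cast hv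
    nlinarith [mul_le_mul_of_nonneg_left hgood (#E).cast_nonneg]
  intro u t ht t' ht' hu
  have hfew := (mem_filter.1 (mem_filter.1 ht).2).2
  have hfew' := (mem_filter.1 (mem_filter.1 ht').2).2
  set Y := deviantSet S X W ε fun i => v i - t
  set Y' := deviantSet S X W ε fun i => v i - t'
  rw [← sum_sub_distrib]
  calc |∑ b ∈ B, (shiftDensity S X (u + (t - t') - b) - shiftDensity S X (u - b))|
      ≤ ∑ b ∈ B, |shiftDensity S X (u + (t - t') - b) - shiftDensity S X (u - b)| :=
        abs_sum_le_sum_abs _ _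
    _ ≤ ∑ b ∈ B, (2 * ε + indicator Y (u + (t - t') - b) + indicator Y' (u - b)) :=
        sum_le_sum fun b hb =>
          abs_shiftDensity_sub_le S X W hε v (by abel) (hu b hb).2 (hu b hb).1
    _ = 2 * ε * #B + ∑ b ∈ B, indicator Y (u + (t - t') - b) + ∑ b ∈ B, indicator Y' (u - b) := by
        rw [sum_add_distrib, sum_add_distrib, sum_const, nsmul_eq_mul]; ring
    _ ≤ 2 * ε * #B + 8 * Real.exp (-(k * ε ^ 2 / 2)) * #W := by
        linarith [sum_indicator_sub_le Y B (u + (t - t')), sum_indicator_sub_le Y' B u]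

end Sampling

section DifferenceAverages

variable {G : Type*} [AddCommGroup G]

/-- The average of `g` over the translates of `x` by the differences `t - t'` of elements of `T`.
On the Fourier side this multiplies coefficients by `|1_T^|²`, hence damps all but the large
spectrum of `T`. -/
noncomputable def diffAvg (T : Finset G) (g : G → ℝ) (x : G) : ℝ :=
  (∑ t ∈ T, ∑ t' ∈ T, g (x + (t - t'))) / (#T : ℝ) ^ 2

lemma abs_diffAvg_sub_le {T : Finset G} (hT : T.Nonempty) {g : G → ℝ} {x : G} {c δ : ℝ}
    (hg : ∀ t ∈ T, ∀ t' ∈ T, |g (x + (t - t')) - c| ≤ δ) : |diffAvg T g x - c| ≤ δ := by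
  have hTpos : (0 : ℝ) < #T := mod_cast hT.card_pos
  have hcentre : diffAvg T g x - c =
      (∑ t ∈ T, ∑ t' ∈ T, (g (x + (t - t')) - c)) / (#T : ℝ) ^ 2 := by
    simp only [diffAvg, sum_sub_distrib, sum_const, nsmul_eq_mul]
    field_simp
  rw [hcentre, abs_div, abs_of_pos (pow_pos hTpos 2), div_le_iff₀ (by positivity)]
  calc |∑ t ∈ T, ∑ t' ∈ T, (g (x + (t - t')) - c)|
      ≤ ∑ t ∈ T, ∑ t' ∈ T, |g (x + (t - t')) - c| :=
        (abs_sum_le_sum_abs _ _).trans (sum_le_sum fun t _ => abs_sum_le_sum_abs _ _)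
    _ ≤ ∑ _t ∈ T, ∑ _t' ∈ T, δ := sum_le_sum fun t ht => sum_le_sum fun t' ht' => hg t ht t' ht'
    _ = δ * (#T : ℝ) ^ 2 := by simp only [sum_const, nsmul_eq_mul]; ring

lemma abs_iterate_diffAvg_sub_le {T : Finset G} (hT : T.Nonempty) {g : G → ℝ} {K : ℕ} {ε : ℝ}
    {V : ℕ → Set G} (hV : ∀ n, ∀ u ∈ V n, ∀ t ∈ T, ∀ t' ∈ T, u + (t - t') ∈ V (n + 1))
    (hg : ∀ n < K, ∀ u ∈ V n, ∀ t ∈ T, ∀ t' ∈ T, |g (u + (t - t')) - g u| ≤ ε) (j : ℕ) :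
    ∀ n, n + j ≤ K → ∀ u ∈ V n, |(diffAvg T)^[j] g u - g u| ≤ j * ε := by
  induction j with
  | zero => simp
  | succ j ih =>
    intro n hn u hu
    rw [Function.iterate_succ_apply']
    refine abs_diffAvg_sub_le hT fun t ht t' ht' => ?_
    have hiterate := ih (n + 1) (by lia) _ (hV n u hu t ht t' ht')
    have hstep := hg n (by lia) u hu t ht t' ht'
    push_cast
    linarith [abs_sub_le ((diffAvg T)^[j] g (u + (t - t'))) (g (u + (t - t'))) (g u)]

end DifferenceAverages

section CharSum

variable {G : Type*} [AddCommGroup G]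

/-- The Fourier transform of the indicator function of `A`, unnormalised and without conjugation. -/
noncomputable def charSum (A : Finset G) (γ : AddChar G ℂ) : ℂ := ∑ a ∈ A, γ a

variable [Finite G]

lemma norm_charSum_le (A : Finset G) (γ : AddChar G ℂ) : ‖charSum A γ‖ ≤ #A :=
  (norm_sum_le _ _).trans (by simp)

lemma norm_charSum_sq (A : Finset G) (γ : AddChar G ℂ) :
    ((‖charSum A γ‖ ^ 2 : ℝ) : ℂ) = ∑ a ∈ A, ∑ b ∈ A, γ (a - b) := by
  rw [← Complex.normSq_eq_norm_sq, ← Complex.mul_conj, charSum, map_sum, sum_mul_sum]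
  simp_rw [← AddChar.map_neg_eq_conj, ← AddChar.map_add_eq_mul, sub_eq_add_neg]

lemma norm_one_sub_char_le_two (γ : AddChar G ℂ) (x : G) : ‖1 - γ x‖ ≤ 2 :=
  (norm_sub_le _ _).trans (by simp; norm_num)

end CharSum

section Fourier

variable {G : Type*} [AddCommGroup G] [Fintype G]

lemma sum_norm_charSum_sq (A : Finset G) :
    ∑ γ : AddChar G ℂ, ‖charSum A γ‖ ^ 2 = Fintype.card G * #A := by
  classical
  have hcomplex : ((∑ γ : AddChar G ℂ, ‖charSum A γ‖ ^ 2 : ℝ) : ℂ) =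
      ((Fintype.card G * #A : ℝ) : ℂ) := by
    rw [Complex.ofReal_sum]
    simp_rw [norm_charSum_sq]
    rw [← sum_comm_cycle]
    simp_rw [AddChar.sum_apply_eq_ite, sub_eq_zero]
    simp [mul_comm]
  exact_mod_cast hcomplex

/-- The Fourier coefficients of `smoothedDensity S X B`. -/
noncomputable def smoothedCoeff (S X B : Finset G) (γ : AddChar G ℂ) : ℂ :=
  charSum S γ⁻¹ / Fintype.card G * (charSum X γ / #X) * (charSum B γ⁻¹ / #B)

lemma sum_norm_smoothedCoeff_le (S : Finset G) {X : Finset G} (hX : X.Nonempty) (B : Finset G) :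
    ∑ γ, ‖smoothedCoeff S X B γ‖ ≤ √(#S / #X) := by
  have : (0 : ℝ) < Fintype.card G := mod_cast Fintype.card_pos
  have : (0 : ℝ) < #X := mod_cast hX.card_pos
  have hB (γ : AddChar G ℂ) : ‖charSum B γ⁻¹ / #B‖ ≤ 1 := by
    rw [norm_div, Complex.norm_natCast]
    exact div_le_one_of_le₀ (norm_charSum_le _ _) (Nat.cast_nonneg _)
  have hbound (γ : AddChar G ℂ) : ‖smoothedCoeff S X B γ‖ ≤
      ‖charSum S γ⁻¹‖ / Fintype.card G * (‖charSum X γ‖ / #X) := by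
    rw [smoothedCoeff, norm_mul, norm_mul, norm_div (charSum S γ⁻¹), norm_div (charSum X γ),
      Complex.norm_natCast, Complex.norm_natCast]
    exact mul_le_of_le_one_right (by positivity) (hB γ)
  have hinv : ∑ γ : AddChar G ℂ, ‖charSum S γ⁻¹‖ ^ 2 = Fintype.card G * #S := by
    rw [← sum_norm_charSum_sq]
    exact Equiv.sum_comp (Equiv.inv _) fun γ : AddChar G ℂ => ‖charSum S γ‖ ^ 2
  refine (sum_le_sum fun γ _ => hbound γ).trans (Real.le_sqrt_of_sq_le ?_)
  refine (sum_mul_sq_le_sq_mul_sq _ _ _).trans_eq ?_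
  simp_rw [div_pow]
  rw [← sum_div, ← sum_div, sum_norm_charSum_sq, hinv]
  field_simp

lemma sum_norm_smoothedCoeff_le_of_card_le {S X : Finset G} (hX : X.Nonempty) (B : Finset G)
    {c : ℝ} (hc : 1 ≤ c) (hS : (#S : ℝ) ≤ c * #X) : ∑ γ, ‖smoothedCoeff S X B γ‖ ≤ c := by
  refine (sum_norm_smoothedCoeff_le S hX B).trans ((Real.sqrt_le_left (by positivity)).2 ?_)
  exact ((div_le_iff₀ (Nat.cast_pos.2 hX.card_pos)).2 hS).trans (le_self_pow₀ hc two_ne_zero)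

variable [DecidableEq G]

lemma indicator_eq_sum_char (S : Finset G) (z : G) :
    (indicator S z : ℂ) = ∑ γ : AddChar G ℂ, charSum S γ⁻¹ / Fintype.card G * γ z := by
  have hN : (Fintype.card G : ℂ) ≠ 0 := mod_cast Fintype.card_ne_zero
  have hswap : ∑ γ : AddChar G ℂ, charSum S γ⁻¹ / Fintype.card G * γ z =
      (∑ s ∈ S, ∑ γ : AddChar G ℂ, γ (z - s)) / Fintype.card G := by
    rw [sum_comm, sum_div]
    refine sum_congr rfl fun γ _ => ?_
    rw [charSum, div_mul_eq_mul_div, sum_mul]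
    simp_rw [AddChar.inv_apply, ← AddChar.map_add_eq_mul, neg_add_eq_sub]
  rw [hswap]
  simp_rw [AddChar.sum_apply_eq_ite, sub_eq_zero, sum_ite_eq, indicator]
  split_ifs <;> simp [hN]

/-- The average over `b ∈ B` of the density of `S` on the translates of `X` by `x - b`. -/
noncomputable def smoothedDensity (S X B : Finset G) (x : G) : ℝ :=
  (∑ b ∈ B, shiftDensity S X (x - b)) / #B

lemma smoothedDensity_eq_sum_char (S X B : Finset G) (x : G) :
    (smoothedDensity S X B x : ℂ) = ∑ γ, smoothedCoeff S X B γ * γ x := by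
  have hterm (γ : AddChar G ℂ) : smoothedCoeff S X B γ * γ x =
      (∑ b ∈ B, ∑ a ∈ X, charSum S γ⁻¹ / Fintype.card G * γ (a + (x - b))) / #X / #B := by
    have hfactor : ∑ b ∈ B, ∑ a ∈ X, γ (a + (x - b)) = charSum X γ * charSum B γ⁻¹ * γ x := by
      rw [charSum, charSum, sum_mul_sum, sum_comm, sum_mul]
      simp_rw [sum_mul, AddChar.inv_apply, ← AddChar.map_add_eq_mul]
      exact sum_congr rfl fun a _ => sum_congr rfl fun b _ => by congr 1; abel
    simp_rw [← mul_sum]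
    rw [hfactor, smoothedCoeff]
    ring
  simp_rw [hterm]
  rw [← sum_div, ← sum_div, sum_comm, smoothedDensity]
  simp_rw [shiftDensity, shiftCount]
  push_cast
  simp_rw [indicator_eq_sum_char, ← sum_div]
  congr 2
  exact sum_congr rfl fun b _ => sum_comm

end Fourier

section Damping

variable {G : Type*} [AddCommGroup G] [Finite G]

lemma diffAvg_eq_sum_char (T : Finset G) {g : G → ℝ} {c : AddChar G ℂ → ℂ}
    (hc : ∀ x, (g x : ℂ) = ∑ γ, c γ * γ x) (x : G) :
    (diffAvg T g x : ℂ) = ∑ γ, c γ * ((‖charSum T γ‖ ^ 2 / (#T : ℝ) ^ 2 : ℝ) : ℂ) * γ x := by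
  have hnorm (γ : AddChar G ℂ) : (‖charSum T γ‖ : ℂ) ^ 2 = ∑ t ∈ T, ∑ t' ∈ T, γ (t - t') :=
    mod_cast norm_charSum_sq T γ
  rw [diffAvg]
  push_cast
  simp_rw [hc, hnorm]
  rw [sum_comm_cycle, sum_div]
  refine sum_congr rfl fun γ _ => ?_
  simp_rw [AddChar.map_add_eq_mul, ← mul_sum]
  ring

lemma iterate_diffAvg_eq_sum_char (T : Finset G) {g : G → ℝ} {c : AddChar G ℂ → ℂ}
    (hc : ∀ x, (g x : ℂ) = ∑ γ, c γ * γ x) (K : ℕ) (x : G) :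
    ((diffAvg T)^[K] g x : ℂ) =
      ∑ γ, c γ * ((‖charSum T γ‖ ^ 2 / (#T : ℝ) ^ 2 : ℝ) : ℂ) ^ K * γ x := by
  induction K generalizing x with
  | zero => simp [hc]
  | succ K ih =>
    rw [Function.iterate_succ_apply', diffAvg_eq_sum_char T ih]
    simp_rw [pow_succ, mul_assoc]

lemma damping_mul_norm_one_sub_char_le {T : Finset G} (hT : T.Nonempty) (K : ℕ) {δ : ℝ}
    (hδ : 0 ≤ δ) {γ : AddChar G ℂ} {x : G} (hx : (#T : ℝ) / 2 ≤ ‖charSum T γ‖ → ‖1 - γ x‖ ≤ δ) :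
    (‖charSum T γ‖ ^ 2 / (#T : ℝ) ^ 2) ^ K * ‖1 - γ x‖ ≤ δ + 2 * (1 / 4) ^ K := by
  have hTpos : (0 : ℝ) < #T := mod_cast hT.card_pos
  rcases le_or_gt ((#T : ℝ) / 2) ‖charSum T γ‖ with hlarge | hsmall
  · have hratio : (‖charSum T γ‖ ^ 2 / (#T : ℝ) ^ 2) ^ K ≤ 1 := by
      refine pow_le_one₀ (by positivity) (div_le_one_of_le₀ ?_ (by positivity))
      exact pow_le_pow_left₀ (norm_nonneg _) (norm_charSum_le T γ) 2
    have := mul_le_mul hratio (hx hlarge) (norm_nonneg _) zero_le_one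
    linarith [show (0 : ℝ) ≤ 2 * (1 / 4) ^ K by positivity]
  · have hratio : (‖charSum T γ‖ ^ 2 / (#T : ℝ) ^ 2) ^ K ≤ (1 / 4) ^ K := by
      refine pow_le_pow_left₀ (by positivity) ?_ K
      rw [div_le_iff₀ (by positivity)]
      nlinarith [norm_nonneg (charSum T γ)]
    have := mul_le_mul hratio (norm_one_sub_char_le_two γ x) (norm_nonneg _) (by positivity)
    linarith

lemma abs_iterate_diffAvg_sub_zero_le {T : Finset G} (hT : T.Nonempty) {g : G → ℝ}
    {c : AddChar G ℂ → ℂ} (hc : ∀ x, (g x : ℂ) = ∑ γ, c γ * γ x) (K : ℕ) {δ : ℝ} (hδ : 0 ≤ δ)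
    {x : G} (hx : ∀ γ : AddChar G ℂ, (#T : ℝ) / 2 ≤ ‖charSum T γ‖ → ‖1 - γ x‖ ≤ δ) :
    |(diffAvg T)^[K] g x - (diffAvg T)^[K] g 0| ≤ (∑ γ, ‖c γ‖) * (δ + 2 * (1 / 4) ^ K) := by
  have hexpand : (((diffAvg T)^[K] g x - (diffAvg T)^[K] g 0 : ℝ) : ℂ) =
      ∑ γ, c γ * ((‖charSum T γ‖ ^ 2 / (#T : ℝ) ^ 2 : ℝ) : ℂ) ^ K * (γ x - 1) := by
    rw [Complex.ofReal_sub, iterate_diffAvg_eq_sum_char T hc, iterate_diffAvg_eq_sum_char T hc,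
      ← sum_sub_distrib]
    simp_rw [AddChar.map_zero_eq_one, mul_sub]
  rw [← Real.norm_eq_abs, ← Complex.norm_real, hexpand, sum_mul]
  refine (norm_sum_le _ _).trans (sum_le_sum fun γ _ => ?_)
  rw [norm_mul, norm_mul, norm_pow, Complex.norm_real, Real.norm_of_nonneg (by positivity),
    mul_assoc, norm_sub_rev]
  exact mul_le_mul_of_nonneg_left (damping_mul_norm_one_sub_char_le hT K hδ (hx γ)) (norm_nonneg _)

end Damping

section LargeSpectrum

variable {G : Type*} [AddCommGroup G]

/-- A family of characters is dissociated relative to `E` if no nontrivial product of its members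
with exponents in `{-1, 0, 1}` correlates with `E` by more than `θ`. -/
def RelDissociated {ι : Type*} [Fintype ι] (E : Finset G) (θ : ℝ) (χ : ι → AddChar G ℂ) : Prop :=
  ∀ e : ι → SignType, e ≠ 0 → ‖charSum E (∏ i, χ i ^ (e i : ℤ))‖ ≤ θ * #E

/-- The coefficients of the characters `γ ^ s` in the factor `cosh (1/2) + sinh (1/2) Re (c γ)` of a
Riesz product. -/
noncomputable def rieszCoeff (c : ℂ) : SignType → ℂ
  | 0 => Real.cosh (1 / 2)
  | 1 => Real.sinh (1 / 2) / 2 * c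
  | -1 => Real.sinh (1 / 2) / 2 * conj c

lemma sum_norm_rieszCoeff {c : ℂ} (hc : ‖c‖ = 1) : ∑ s, ‖rieszCoeff c s‖ = Real.exp (1 / 2) := by
  have hsinh : 0 ≤ Real.sinh (1 / 2) := Real.sinh_nonneg_iff.2 (by norm_num)
  rw [SignType.univ_eq, sum_insert (by decide), sum_insert (by decide), sum_singleton]
  simp only [rieszCoeff, norm_mul, norm_div, Complex.norm_real, RCLike.norm_conj, hc,
    Real.norm_of_nonneg (Real.cosh_pos _).le, Real.norm_of_nonneg hsinh, Complex.norm_two]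
  linarith [Real.cosh_add_sinh (1 / 2)]

lemma prod_char_apply {ι : Type*} (s : Finset ι) (χ : ι → AddChar G ℂ) (x : G) :
    (∏ i ∈ s, χ i) x = ∏ i ∈ s, χ i x := by
  classical
  induction s using Finset.induction_on with
  | empty => simp
  | insert i s hi ih => rw [prod_insert hi, prod_insert hi, AddChar.mul_apply, ih]

lemma card_mul_exp_le_sum_exp {α : Type*} (T : Finset α) {f : α → ℝ} {a : ℝ}
    (hf : #T * a ≤ ∑ x ∈ T, f x) : #T * Real.exp a ≤ ∑ x ∈ T, Real.exp (f x) := by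
  have tangent (x : α) : Real.exp a * (1 + (f x - a)) ≤ Real.exp (f x) := by
    rw [← sub_add_cancel (f x) a, Real.exp_add, mul_comm, add_sub_cancel_right, add_comm]
    exact mul_le_mul_of_nonneg_right (Real.add_one_le_exp _) (Real.exp_pos _).le
  refine le_trans ?_ (sum_le_sum fun x _ => tangent x)
  rw [← mul_sum, mul_comm, sum_add_distrib, sum_sub_distrib, sum_const, sum_const, nsmul_eq_mul,
    nsmul_eq_mul]
  exact mul_le_mul_of_nonneg_left (by linarith) (Real.exp_pos _).le

variable [Finite G]

lemma sum_rieszCoeff_mul (c : ℂ) (γ : AddChar G ℂ) (x : G) :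
    ((Real.cosh (1 / 2) + (c * γ x).re * Real.sinh (1 / 2) : ℝ) : ℂ) =
      ∑ s : SignType, rieszCoeff c s * (γ ^ (s : ℤ)) x := by
  rw [SignType.univ_eq, sum_insert (by decide), sum_insert (by decide), sum_singleton]
  simp only [rieszCoeff, SignType.coe_zero, SignType.coe_one, SignType.coe_neg_one, zpow_zero,
    zpow_one, zpow_neg, AddChar.one_apply, AddChar.inv_apply, AddChar.map_neg_eq_conj]
  push_cast
  rw [Complex.re_eq_add_conj, map_mul]
  ring

variable {ι : Type*} [Fintype ι]

lemma sum_prod_riesz_eq [DecidableEq ι] (E : Finset G) (χ : ι → AddChar G ℂ) (c : ι → ℂ) :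
    ((∑ x ∈ E, ∏ i, (Real.cosh (1 / 2) + (c i * χ i x).re * Real.sinh (1 / 2)) : ℝ) : ℂ) =
      ∑ e : ι → SignType, (∏ i, rieszCoeff (c i) (e i)) *
        charSum E (∏ i, χ i ^ (e i : ℤ)) := by
  rw [Complex.ofReal_sum]
  simp_rw [Complex.ofReal_prod, sum_rieszCoeff_mul, prod_univ_sum, Fintype.piFinset_univ, charSum,
    mul_sum]
  rw [sum_comm]
  simp_rw [prod_mul_distrib, prod_char_apply]

lemma RelDissociated.sum_prod_riesz_le {E : Finset G} {θ : ℝ} {χ : ι → AddChar G ℂ}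
    (hχ : RelDissociated E θ χ) {c : ι → ℂ} (hc : ∀ i, ‖c i‖ = 1) (hθ : 0 ≤ θ) :
    ∑ x ∈ E, ∏ i, (Real.cosh (1 / 2) + (c i * χ i x).re * Real.sinh (1 / 2)) ≤
      (Real.cosh (1 / 2) ^ Fintype.card ι + Real.exp (1 / 2) ^ Fintype.card ι * θ) * #E := by
  classical
  set weight : (ι → SignType) → ℝ := fun e => ∏ i, ‖rieszCoeff (c i) (e i)‖
  have weight_nonneg (e : ι → SignType) : 0 ≤ weight e := prod_nonneg fun _ _ => norm_nonneg _
  have hweight : ∑ e, weight e = Real.exp (1 / 2) ^ Fintype.card ι := by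
    have hprod := prod_univ_sum (fun _ : ι => (univ : Finset SignType))
      fun i s => ‖rieszCoeff (c i) s‖
    simp_rw [sum_norm_rieszCoeff (hc _), prod_const, card_univ, Fintype.piFinset_univ] at hprod
    exact hprod.symm
  have hweight_zero : weight 0 = Real.cosh (1 / 2) ^ Fintype.card ι := by
    simp only [weight, rieszCoeff, Complex.norm_real,
      Real.norm_of_nonneg (Real.cosh_pos _).le, prod_const, card_univ]
  calc ∑ x ∈ E, ∏ i, (Real.cosh (1 / 2) + (c i * χ i x).re * Real.sinh (1 / 2))
      ≤ ∑ e : ι → SignType, weight e * ‖charSum E (∏ i, χ i ^ (e i : ℤ))‖ := by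
        refine (le_abs_self _).trans ?_
        rw [← Real.norm_eq_abs, ← Complex.norm_real, sum_prod_riesz_eq]
        refine (norm_sum_le _ _).trans_eq (sum_congr rfl fun e _ => ?_)
        rw [norm_mul, norm_prod]
    _ ≤ weight 0 * #E + ∑ e ∈ univ.erase 0, weight e * (θ * #E) := by
        rw [← add_sum_erase _ _ (mem_univ 0)]
        gcongr with e he
        · exact norm_charSum_le _ _
        · exact hχ e (ne_of_mem_erase he)
    _ ≤ weight 0 * #E + ∑ e, weight e * (θ * #E) := by
        refine add_le_add_right (sum_le_sum_of_subset_of_nonneg (erase_subset _ _) ?_) _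
        exact fun e _ _ => mul_nonneg (weight_nonneg e) (by positivity)
    _ = (Real.cosh (1 / 2) ^ Fintype.card ι + Real.exp (1 / 2) ^ Fintype.card ι * θ) * #E := by
        rw [← sum_mul, hweight, hweight_zero]; ring

lemma cosh_half_pow_add_le (m : ℕ) :
    Real.cosh (1 / 2) ^ m + Real.exp (1 / 2) ^ m * (1 / 2) ^ m ≤ 2 * Real.exp (m / 8) := by
  have hcosh : Real.cosh (1 / 2) ^ m ≤ Real.exp (m / 8) := by
    rw [show (m / 8 : ℝ) = m * ((1 / 2) ^ 2 / 2) by ring, Real.exp_nat_mul]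
    exact pow_le_pow_left₀ (Real.cosh_pos _).le (Real.cosh_le_exp_half_sq _) m
  have hexp_half : Real.exp (1 / 2) ≤ 2 := by
    have hsq : Real.exp (1 / 2) ^ 2 = Real.exp 1 := by rw [← Real.exp_nat_mul]; norm_num
    nlinarith [Real.exp_one_lt_d9, Real.exp_pos (1 / 2)]
  have hexp : Real.exp (1 / 2) ^ m * (1 / 2) ^ m ≤ Real.exp (m / 8) := by
    rw [← mul_pow]
    exact (pow_le_one₀ (by positivity) (by linarith)).trans (Real.one_le_exp (by positivity))
  linarith

/-- Chang's inequality: the exponential moment of the Riesz product over `T ⊆ E` is large because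
every factor correlates with `T`, while over `E` only the trivial character contributes. -/
lemma RelDissociated.card_mul_exp_le {E T : Finset G} (hTE : T ⊆ E) {χ : ι → AddChar G ℂ}
    (hχ : RelDissociated E ((1 / 2) ^ Fintype.card ι) χ)
    (hlarge : ∀ i, (#T : ℝ) / 2 ≤ ‖charSum T (χ i)‖) :
    (#T : ℝ) * Real.exp (Fintype.card ι / 4) ≤ 2 * Real.exp (Fintype.card ι / 8) * #E := by
  choose c hc hphase using fun i => Complex.exists_norm_eq_mul_self (charSum T (χ i))
  have hmean : #T * (Fintype.card ι / 4 : ℝ) ≤ ∑ x ∈ T, ∑ i, (c i * χ i x).re * (1 / 2) := by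
    have hcorr (i : ι) : (#T : ℝ) / 4 ≤ ∑ x ∈ T, (c i * χ i x).re * (1 / 2) := by
      rw [← sum_mul, ← Complex.re_sum, ← mul_sum, ← charSum, ← hphase, Complex.ofReal_re]
      linarith [hlarge i]
    rw [sum_comm]
    refine le_trans (le_of_eq ?_) (sum_le_sum fun i _ => hcorr i)
    rw [sum_const, nsmul_eq_mul, card_univ]; ring
  have hfactor (i : ι) (x : G) : Real.exp ((c i * χ i x).re * (1 / 2)) ≤
      Real.cosh (1 / 2) + (c i * χ i x).re * Real.sinh (1 / 2) := by
    refine Real.exp_mul_le_cosh_add_mul_sinh ?_ _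
    simpa [hc] using Complex.abs_re_le_norm (c i * χ i x)
  calc (#T : ℝ) * Real.exp (Fintype.card ι / 4)
      ≤ ∑ x ∈ T, Real.exp (∑ i, (c i * χ i x).re * (1 / 2)) := card_mul_exp_le_sum_exp T hmean
    _ ≤ ∑ x ∈ E, Real.exp (∑ i, (c i * χ i x).re * (1 / 2)) :=
        sum_le_sum_of_subset_of_nonneg hTE fun _ _ _ => (Real.exp_pos _).le
    _ ≤ ∑ x ∈ E, ∏ i, (Real.cosh (1 / 2) + (c i * χ i x).re * Real.sinh (1 / 2)) :=
        sum_le_sum fun x _ => by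
          rw [Real.exp_sum]
          exact prod_le_prod (fun _ _ => (Real.exp_pos _).le) fun i _ => hfactor i x
    _ ≤ (Real.cosh (1 / 2) ^ Fintype.card ι +
          Real.exp (1 / 2) ^ Fintype.card ι * (1 / 2) ^ Fintype.card ι) * #E :=
        hχ.sum_prod_riesz_le hc (by positivity)
    _ ≤ 2 * Real.exp (Fintype.card ι / 8) * #E := by gcongr; exact cosh_half_pow_add_le _

end LargeSpectrum

section CharacterDistance

variable {G : Type*} [AddCommGroup G]

lemma norm_one_sub_mul_le {a : ℂ} (ha : ‖a‖ ≤ 1) (b : ℂ) : ‖1 - a * b‖ ≤ ‖1 - a‖ + ‖1 - b‖ := by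
  rw [show 1 - a * b = (1 - a) + a * (1 - b) by ring]
  refine (norm_add_le _ _).trans ?_
  rw [norm_mul]
  linarith [mul_le_mul_of_nonneg_right ha (norm_nonneg (1 - b))]

variable [Finite G]

lemma norm_one_sub_inv_char (γ : AddChar G ℂ) (x : G) : ‖1 - γ⁻¹ x‖ = ‖1 - γ x‖ := by
  rw [AddChar.inv_apply, AddChar.map_neg_eq_conj, ← Complex.norm_conj (1 - γ x), map_sub, map_one]

lemma norm_one_sub_char_sub (γ : AddChar G ℂ) (x y : G) : ‖1 - γ (x - y)‖ = ‖γ x - γ y‖ := by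
  rw [← one_mul ‖1 - γ (x - y)‖, ← AddChar.norm_apply γ y, ← norm_mul, mul_sub, mul_one,
    ← AddChar.map_add_eq_mul, add_sub_cancel, norm_sub_rev]

lemma norm_one_sub_mul_char_le (γ γ' : AddChar G ℂ) (x : G) :
    ‖1 - (γ * γ') x‖ ≤ ‖1 - γ x‖ + ‖1 - γ' x‖ :=
  norm_one_sub_mul_le (AddChar.norm_apply γ x).le _

lemma norm_one_sub_zpow_sign_of_ne_zero (γ : AddChar G ℂ) {s : SignType} (hs : s ≠ 0) (x : G) :
    ‖1 - (γ ^ (s : ℤ)) x‖ = ‖1 - γ x‖ := by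
  rcases s.trichotomy with rfl | rfl | rfl
  · simpa using norm_one_sub_inv_char γ x
  · contradiction
  · simp

lemma norm_one_sub_zpow_sign_le (γ : AddChar G ℂ) (s : SignType) (x : G) :
    ‖1 - (γ ^ (s : ℤ)) x‖ ≤ ‖1 - γ x‖ := by
  rcases eq_or_ne s 0 with rfl | hs
  · simp
  · exact (norm_one_sub_zpow_sign_of_ne_zero γ hs x).le

lemma norm_one_sub_prod_char_le {ι : Type*} (s : Finset ι) (χ : ι → AddChar G ℂ) (x : G) :
    ‖1 - (∏ i ∈ s, χ i) x‖ ≤ ∑ i ∈ s, ‖1 - χ i x‖ := by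
  classical
  induction s using Finset.induction_on with
  | empty => simp
  | insert i s hi ih =>
    rw [prod_insert hi, sum_insert hi]
    exact (norm_one_sub_mul_char_le _ _ x).trans (by gcongr)

lemma norm_charSum_sub_le (χ : AddChar G ℂ) {F P : Finset G} (hFP : F ⊆ P) :
    ‖charSum P χ - charSum F χ‖ ≤ #P - #F := by
  classical
  have hdiff : charSum P χ - charSum F χ = charSum (P \ F) χ := by
    rw [charSum, charSum, charSum, ← sum_sdiff hFP, add_sub_cancel_right]
  rw [hdiff, ← Nat.cast_sub (card_le_card hFP), ← card_sdiff_of_subset hFP]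
  exact norm_charSum_le _ _

lemma norm_one_sub_char_mul_norm_charSum_le (χ : AddChar G ℂ) {E P : Finset G} (hEP : E ⊆ P)
    {z : G} (hz : ∀ x ∈ E, x + z ∈ P) {η : ℝ} (hP : (#P : ℝ) ≤ (1 + η) * #E) :
    ‖1 - χ z‖ * ‖charSum E χ‖ ≤ 2 * η * #E := by
  set translate := E.map (addRightEmbedding z)
  have htranslate : charSum translate χ = χ z * charSum E χ := by
    simp_rw [charSum, translate, sum_map, addRightEmbedding_apply, AddChar.map_add_eq_mul, mul_sum,
      mul_comm]
  have hsub : translate ⊆ P := by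
    intro y hy
    obtain ⟨x, hx, rfl⟩ := mem_map.1 hy
    exact hz x hx
  have hcard : #translate = #E := card_map _
  have hdist := norm_charSum_sub_le χ hEP
  have hdist' := norm_charSum_sub_le χ hsub
  rw [hcard] at hdist'
  rw [← norm_mul, sub_mul, one_mul, ← htranslate]
  calc ‖charSum E χ - charSum translate χ‖
      = ‖(charSum P χ - charSum translate χ) - (charSum P χ - charSum E χ)‖ := by
        rw [sub_sub_sub_cancel_left]
    _ ≤ 2 * η * #E := (norm_sub_le _ _).trans (by linarith)

end CharacterDistance

section SpectrumControl

variable {G : Type*} [AddCommGroup G]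

lemma RelDissociated.exists_large_zpow_mul_prod {E : Finset G} {θ : ℝ} {n : ℕ}
    {χ : Fin n → AddChar G ℂ} (hχ : RelDissociated E θ χ) {γ : AddChar G ℂ}
    (hγ : ¬RelDissociated E θ (Fin.cons γ χ : Fin (n + 1) → AddChar G ℂ)) :
    ∃ s : SignType, s ≠ 0 ∧ ∃ e : Fin n → SignType,
      θ * #E < ‖charSum E (γ ^ (s : ℤ) * ∏ i, χ i ^ (e i : ℤ))‖ := by
  simp only [RelDissociated, not_forall, not_le] at hγ
  obtain ⟨e, he, hlarge⟩ := hγ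
  simp only [Fin.prod_univ_succ, Fin.cons_zero, Fin.cons_succ] at hlarge
  refine ⟨e 0, fun hzero => ?_, fun i => e i.succ, hlarge⟩
  rw [hzero, SignType.coe_zero, zpow_zero, one_mul] at hlarge
  refine hlarge.not_ge (hχ _ fun htail => he (funext (Fin.cases hzero fun i => congrFun htail i)))

variable [Finite G]

lemma exists_maximal_relDissociated {E T : Finset G} (hTE : T ⊆ E) {M : ℕ}
    (hM : 2 * (#E : ℝ) < #T * Real.exp ((M + 1) / 8)) :
    ∃ n ≤ M, ∃ χ : Fin n → AddChar G ℂ, RelDissociated E ((1 / 2) ^ (M + 1)) χ ∧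
      ∀ γ : AddChar G ℂ, (#T : ℝ) / 2 ≤ ‖charSum T γ‖ →
        ¬RelDissociated E ((1 / 2) ^ (M + 1)) (Fin.cons γ χ : Fin (n + 1) → AddChar G ℂ) := by
  classical
  set dissociated : ℕ → Prop := fun n => ∃ χ : Fin n → AddChar G ℂ,
    RelDissociated E ((1 / 2) ^ (M + 1)) χ ∧ ∀ i, (#T : ℝ) / 2 ≤ ‖charSum T (χ i)‖
  have hempty : dissociated 0 :=
    ⟨Fin.elim0, fun e he => absurd (Subsingleton.elim e 0) he, fun i => i.elim0⟩
  have hbound : ¬dissociated (M + 1) := by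
    rintro ⟨χ, hχ, hlarge⟩
    have hchang := RelDissociated.card_mul_exp_le hTE (χ := χ) (by simpa using hχ) hlarge
    rw [Fintype.card_fin, Nat.cast_add_one,
      show ((M : ℝ) + 1) / 4 = (M + 1) / 8 + (M + 1) / 8 by ring, Real.exp_add] at hchang
    nlinarith [Real.exp_pos ((M + 1 : ℝ) / 8)]
  obtain ⟨n, hn, ⟨χ, hχ, hlarge⟩, hmax⟩ : ∃ n ≤ M, dissociated n ∧ ¬dissociated (n + 1) := by
    by_contra! hstep
    have hall : ∀ n ≤ M + 1, dissociated n := by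
      intro n hn
      induction n with
      | zero => exact hempty
      | succ n ih => exact hstep n (by omega) (ih (by omega))
    exact hbound (hall _ le_rfl)
  refine ⟨n, hn, χ, hχ, fun γ hγ hcons => hmax ⟨_, hcons, Fin.cases hγ hlarge⟩⟩

lemma exists_spectrum_control {E T P : Finset G} (hTE : T ⊆ E) {M : ℕ}
    (hM : 2 * (#E : ℝ) < #T * Real.exp ((M + 1) / 8)) {η ρ : ℝ} (hρ : 0 ≤ ρ) (hEP : E ⊆ P)
    (hP : (#P : ℝ) ≤ (1 + η) * #E) :
    ∃ Λ : Finset (AddChar G ℂ), #Λ ≤ M ∧ ∀ γ : AddChar G ℂ, (#T : ℝ) / 2 ≤ ‖charSum T γ‖ →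
      ∀ z, (∀ x ∈ E, x + z ∈ P) → (∀ l ∈ Λ, ‖1 - l z‖ ≤ ρ) →
        ‖1 - γ z‖ ≤ M * ρ + 2 * η * 2 ^ (M + 1) := by
  classical
  have hT : T.Nonempty := by
    rw [nonempty_iff_ne_empty]
    rintro rfl
    simp only [card_empty, Nat.cast_zero, zero_mul] at hM
    linarith [(#E).cast_nonneg (α := ℝ)]
  have hE : (0 : ℝ) < #E := Nat.cast_pos.2 (hT.mono hTE).card_pos
  obtain ⟨n, hn, χ, hχ, hmax⟩ := exists_maximal_relDissociated hTE hM
  refine ⟨univ.image χ, card_image_le.trans (by simpa using hn), fun γ hγ z hz hΛ => ?_⟩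
  obtain ⟨s, hs, e, hlarge⟩ := hχ.exists_large_zpow_mul_prod (hmax γ hγ)
  set tail := ∏ i, χ i ^ (e i : ℤ)
  have hproduct : ‖1 - (γ ^ (s : ℤ) * tail) z‖ ≤ 2 * η * 2 ^ (M + 1) := by
    have hcorr := norm_one_sub_char_mul_norm_charSum_le (γ ^ (s : ℤ) * tail) hEP hz hP
    have hlower := (mul_le_mul_of_nonneg_left hlarge.le (norm_nonneg _)).trans hcorr
    rw [← mul_assoc] at hlower
    have hcancel := le_of_mul_le_mul_right hlower hE
    rwa [one_div, inv_pow, ← div_eq_mul_inv, div_le_iff₀ (by positivity)] at hcancel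
  have htail : ‖1 - tail z‖ ≤ M * ρ := by
    refine (norm_one_sub_prod_char_le _ _ z).trans ((sum_le_card_nsmul univ _ ρ fun i _ =>
      (norm_one_sub_zpow_sign_le _ _ z).trans (hΛ _ (mem_image_of_mem χ (mem_univ i)))).trans ?_)
    rw [card_univ, Fintype.card_fin, nsmul_eq_mul]
    gcongr
  calc ‖1 - γ z‖ = ‖1 - ((γ ^ (s : ℤ) * tail) * tail⁻¹) z‖ := by
        rw [mul_inv_cancel_right, norm_one_sub_zpow_sign_of_ne_zero γ hs]
    _ ≤ ‖1 - (γ ^ (s : ℤ) * tail) z‖ + ‖1 - tail⁻¹ z‖ := norm_one_sub_mul_char_le _ _ z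
    _ ≤ M * ρ + 2 * η * 2 ^ (M + 1) := by rw [norm_one_sub_inv_char]; linarith

end SpectrumControl

section BohrSets

variable {G : Type*} [AddCommGroup G] [Fintype G]

open Classical in
/-- The Bohr set of radius `ρ` with frequency set `Γ`, measuring the distance of `γ x` to `1` by
the chord `‖1 - γ x‖`. -/
noncomputable def bohrSet (Γ : Finset (AddChar G ℂ)) (ρ : ℝ) : Finset G :=
  {x | ∀ γ ∈ Γ, ‖1 - γ x‖ ≤ ρ}

variable {Γ : Finset (AddChar G ℂ)} {ρ σ τ : ℝ} {x y : G}

lemma mem_bohrSet : x ∈ bohrSet Γ ρ ↔ ∀ γ ∈ Γ, ‖1 - γ x‖ ≤ ρ := by simp [bohrSet]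

lemma zero_mem_bohrSet (Γ : Finset (AddChar G ℂ)) (hρ : 0 ≤ ρ) : (0 : G) ∈ bohrSet Γ ρ :=
  mem_bohrSet.2 fun γ _ => by simpa using hρ

lemma bohrSet_nonempty (Γ : Finset (AddChar G ℂ)) (hρ : 0 ≤ ρ) : (bohrSet Γ ρ).Nonempty :=
  ⟨0, zero_mem_bohrSet Γ hρ⟩

lemma card_bohrSet_pos (Γ : Finset (AddChar G ℂ)) (hρ : 0 ≤ ρ) : (0 : ℝ) < #(bohrSet Γ ρ) :=
  Nat.cast_pos.2 (bohrSet_nonempty Γ hρ).card_pos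

lemma neg_mem_bohrSet (hx : x ∈ bohrSet Γ ρ) : -x ∈ bohrSet Γ ρ := by
  rw [mem_bohrSet] at hx ⊢
  intro γ hγ
  rw [← AddChar.inv_apply, norm_one_sub_inv_char]
  exact hx γ hγ

lemma bohrSet_mono (Γ : Finset (AddChar G ℂ)) (h : ρ ≤ σ) : bohrSet Γ ρ ⊆ bohrSet Γ σ :=
  fun _ hx => mem_bohrSet.2 fun γ hγ => (mem_bohrSet.1 hx γ hγ).trans h

lemma add_mem_bohrSet (hx : x ∈ bohrSet Γ ρ) (hy : y ∈ bohrSet Γ σ) (h : ρ + σ ≤ τ) :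
    x + y ∈ bohrSet Γ τ := by
  rw [mem_bohrSet] at hx hy ⊢
  intro γ hγ
  rw [AddChar.map_add_eq_mul]
  linarith [norm_one_sub_mul_le (AddChar.norm_apply γ x).le (γ y), hx γ hγ, hy γ hγ]

lemma sub_mem_bohrSet (hx : x ∈ bohrSet Γ ρ) (hy : y ∈ bohrSet Γ σ) (h : ρ + σ ≤ τ) :
    x - y ∈ bohrSet Γ τ := by
  rw [sub_eq_add_neg]
  exact add_mem_bohrSet hx (neg_mem_bohrSet hy) h

/-- Between `ρ / 2` and `ρ` there is a radius at which enlarging the Bohr set by `κ * ρ` multiplies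
its size by at most `1 + η`: a quantitative form of Bourgain's regular Bohr sets. -/
def ThinAnnuli (Γ : Finset (AddChar G ℂ)) (η κ : ℝ) : Prop :=
  ∀ ρ, 0 < ρ → ∃ r, ρ / 2 ≤ r ∧ r + κ * ρ ≤ ρ ∧
    (#(bohrSet Γ (r + κ * ρ)) : ℝ) ≤ (1 + η) * #(bohrSet Γ r)

/-- By pigeonhole, one of the `J` steps from radius `ρ / 2` to `ρ` grows the Bohr set by a factor
of at most `1 + η`. -/
lemma thinAnnuli_of_card_lt (Γ : Finset (AddChar G ℂ)) {η : ℝ} (hη : 0 ≤ η) {J : ℕ}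
    (hJ : (Fintype.card G : ℝ) < (1 + η) ^ J) : ThinAnnuli Γ η (1 / (2 * J)) := by
  intro ρ hρ
  by_contra! hgrow
  set δ := 1 / (2 * J) * ρ
  have hδ : 0 ≤ δ := by positivity
  have hJ_ne : (J : ℝ) ≠ 0 := by
    rintro hzero
    rw [Nat.cast_eq_zero.1 hzero, pow_zero] at hJ
    exact hJ.not_ge (Nat.one_le_cast.2 Fintype.card_pos)
  have hJδ : J * δ = ρ / 2 := by simp only [δ]; field_simp
  have hcard (i : ℕ) : i ≤ J → (1 + η) ^ i ≤ (#(bohrSet Γ (ρ / 2 + i * δ)) : ℝ) := by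
    induction i with
    | zero =>
      intro _
      rw [pow_zero]
      exact Nat.one_le_cast.2 (bohrSet_nonempty Γ (by positivity)).card_pos
    | succ i ih =>
      intro hi
      have hradius : ((i : ℝ) + 1) * δ ≤ J * δ :=
        mul_le_mul_of_nonneg_right (by exact_mod_cast hi) hδ
      have hnext := hgrow (ρ / 2 + i * δ) (le_add_of_nonneg_right (by positivity)) (by linarith)
      rw [Nat.cast_succ, add_mul, one_mul, ← add_assoc, pow_succ']
      exact (mul_le_mul_of_nonneg_left (ih (by omega)) (by linarith)).trans hnext.le
  exact hJ.not_ge ((hcard J le_rfl).trans (Nat.cast_le.2 (card_le_univ _)))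

lemma floor_mul_mem_Icc (M : ℕ) {r : ℝ} (hr : |r| ≤ 1) : ⌊M * r⌋ ∈ Icc (-(M : ℤ)) M := by
  obtain ⟨hlower, hupper⟩ := abs_le.1 hr
  rw [mem_Icc, Int.le_floor, ← @Int.cast_le ℝ]
  push_cast
  exact ⟨by nlinarith, (Int.floor_le _).trans (mul_le_of_le_one_right (by positivity) hupper)⟩

lemma norm_sub_le_of_floor_mul_eq {M : ℕ} (hM : 0 < M) {z w : ℂ} (hre : ⌊M * z.re⌋ = ⌊M * w.re⌋)
    (him : ⌊M * z.im⌋ = ⌊M * w.im⌋) : ‖z - w‖ ≤ 2 / M := by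
  have hM' : (0 : ℝ) < M := Nat.cast_pos.2 hM
  have hdist {a b : ℝ} (h : ⌊M * a⌋ = ⌊M * b⌋) : |a - b| ≤ 1 / M := by
    have hlt := Int.abs_sub_lt_one_of_floor_eq_floor h
    rw [← mul_sub, abs_mul, abs_of_pos hM'] at hlt
    rw [le_div_iff₀' hM']
    exact hlt.le
  calc ‖z - w‖ ≤ |(z - w).re| + |(z - w).im| := Complex.norm_le_abs_re_add_abs_im _
    _ ≤ 1 / M + 1 / M := add_le_add (hdist hre) (hdist him)
    _ = 2 / M := by ring

lemma card_le_card_bohrSet_mul (Γ : Finset (AddChar G ℂ)) {ρ : ℝ} {M : ℕ} (hM : 0 < M)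
    (hMρ : 2 ≤ M * ρ) :
    (Fintype.card G : ℝ) ≤ #(bohrSet Γ ρ) * ((2 * M + 1 : ℕ) : ℝ) ^ (2 * #Γ) := by
  classical
  set I := Icc (-(M : ℤ)) M
  set cell : G → (Γ → ℤ × ℤ) := fun x γ => (⌊M * (γ.1 x).re⌋, ⌊M * (γ.1 x).im⌋)
  set cells := Fintype.piFinset fun _ : Γ => I ×ˢ I
  have hcell : ∀ x ∈ (univ : Finset G), cell x ∈ cells := fun x _ =>
    Fintype.mem_piFinset.2 fun γ => mem_product.2
      ⟨floor_mul_mem_Icc M ((Complex.abs_re_le_norm _).trans (by simp)),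
        floor_mul_mem_Icc M ((Complex.abs_im_le_norm _).trans (by simp))⟩
  have hcells : #cells = (2 * M + 1) ^ (2 * #Γ) := by
    have hI : #I = 2 * M + 1 := by rw [Int.card_Icc]; omega
    simp only [cells, Fintype.card_piFinset, card_product, prod_const, card_univ,
      Fintype.card_coe, hI]
    rw [← pow_two, ← pow_mul]
  have hfiber : ∀ c ∈ cells, #{x | cell x = c} ≤ #(bohrSet Γ ρ) := by
    intro c _
    rcases ({x | cell x = c} : Finset G).eq_empty_or_nonempty with hempty | ⟨x₀, hx₀⟩
    · simp [hempty]
    refine card_le_card_of_injOn (· - x₀) (fun x hx => ?_) (sub_left_injective.injOn)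
    simp only [coe_filter, mem_univ, true_and, Set.mem_ofPred_eq, mem_filter] at hx hx₀
    refine mem_bohrSet.2 fun γ hγ => ?_
    obtain ⟨hre, him⟩ := Prod.mk.inj (congrFun (hx.trans hx₀.symm) ⟨γ, hγ⟩)
    rw [norm_one_sub_char_sub]
    refine (norm_sub_le_of_floor_mul_eq hM hre him).trans ?_
    rwa [div_le_iff₀' (Nat.cast_pos.2 hM)]
  have hpigeon := card_le_mul_card_image_of_maps_to hcell _ hfiber
  rw [card_univ, hcells] at hpigeon
  exact_mod_cast hpigeon

end BohrSets

section Pullback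

variable {G : Type*} [AddCommGroup G]

open Classical in
/-- The frequency set of the preimage of a Bohr set under `φ`. -/
noncomputable def pullback (φ : G →+ G) (Γ : Finset (AddChar G ℂ)) : Finset (AddChar G ℂ) :=
  Γ.image fun γ => γ.compAddMonoidHom φ

lemma card_pullback_le (φ : G →+ G) (Γ : Finset (AddChar G ℂ)) : #(pullback φ Γ) ≤ #Γ :=
  card_image_le

variable [Fintype G] {half : G →+ G}

lemma mem_bohrSet_pullback {φ : G →+ G} {Γ : Finset (AddChar G ℂ)} {ρ : ℝ} {x : G} :
    x ∈ bohrSet (pullback φ Γ) ρ ↔ φ x ∈ bohrSet Γ ρ := by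
  simp [mem_bohrSet, pullback]

lemma add_self_mem_bohrSet_pullback (hhalf : ∀ x, half x + half x = x)
    {Γ : Finset (AddChar G ℂ)} {ρ : ℝ} {x : G} :
    x + x ∈ bohrSet (pullback half Γ) ρ ↔ x ∈ bohrSet Γ ρ := by
  rw [mem_bohrSet_pullback, map_add, hhalf]

lemma bohrSet_pullback_subset (hhalf : ∀ x, half x + half x = x) (Γ : Finset (AddChar G ℂ))
    {ρ σ : ℝ} (h : 2 * ρ ≤ σ) : bohrSet (pullback half Γ) ρ ⊆ bohrSet Γ σ := fun x hx => by
  rw [mem_bohrSet_pullback] at hx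
  rw [← hhalf x]
  exact add_mem_bohrSet hx hx (by linarith)

lemma card_bohrSet_pullback (hhalf : ∀ x, half x + half x = x) (Γ : Finset (AddChar G ℂ))
    (ρ : ℝ) : #(bohrSet (pullback half Γ) ρ) = #(bohrSet Γ ρ) :=
  card_nbij' half (fun x => x + x) (fun _ => mem_bohrSet_pullback.1)
    (fun _ => (add_self_mem_bohrSet_pullback hhalf).2) (fun x _ => hhalf x)
    fun x _ => by rw [map_add, hhalf]

end Pullback

section DensityIncrements

variable {G : Type*} [AddCommGroup G] [DecidableEq G]

lemma card_mul_shiftCount_le (A : Finset G) {B X P : Finset G}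
    (hP : ∀ b ∈ B, ∀ x ∈ X, b - x ∈ P) (t : G) :
    #X * shiftCount A B t ≤ ∑ s ∈ P, shiftCount A X (s + t) := by
  have hsub (x : G) (hx : x ∈ X) :
      ∑ b ∈ B, indicator A (b + t) ≤ ∑ s ∈ P, indicator A (x + (s + t)) := by
    calc ∑ b ∈ B, indicator A (b + t)
        = ∑ s ∈ B.image (· - x), indicator A (x + (s + t)) := by
          rw [sum_image sub_left_injective.injOn]
          refine sum_congr rfl fun b _ => ?_
          rw [← add_assoc, add_sub_cancel]
      _ ≤ ∑ s ∈ P, indicator A (x + (s + t)) :=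
          sum_le_sum_of_subset_of_nonneg (image_subset_iff.2 fun b hb => hP b hb x hx)
            fun _ _ _ => indicator_nonneg _ _
  simp only [shiftCount]
  rw [sum_comm, ← nsmul_eq_mul, ← sum_const]
  exact sum_le_sum hsub

lemma exists_le_sum_shiftDensity {ι : Type*} (I : Finset ι) {X : ι → Finset G}
    (hX : ∀ i ∈ I, (X i).Nonempty) {A B P : Finset G} (hP : P.Nonempty)
    (hBXP : ∀ i ∈ I, ∀ b ∈ B, ∀ x ∈ X i, b - x ∈ P) {β η : ℝ} (hβ : 0 ≤ β) (hη : 0 ≤ η)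
    (hcard : (#P : ℝ) ≤ (1 + η) * #B) {t : G} (ht : β ≤ shiftDensity A B t) :
    ∃ s, #I * (β / (1 + η)) ≤ ∑ i ∈ I, shiftDensity A (X i) s := by
  have hcount : β * #B ≤ shiftCount A B t :=
    mul_le_of_le_div₀ (shiftCount_nonneg _ _ _) (Nat.cast_nonneg _) ht
  have hβP : β / (1 + η) * #P ≤ β * #B := by
    rw [div_mul_eq_mul_div, div_le_iff₀ (by linarith)]
    nlinarith
  have hsum : ∑ s ∈ P, #I * (β / (1 + η)) ≤
      ∑ s ∈ P, ∑ i ∈ I, shiftDensity A (X i) (s + t) := by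
    calc ∑ s ∈ P, #I * (β / (1 + η)) = ∑ i ∈ I, β / (1 + η) * #P := by
          simp only [sum_const, nsmul_eq_mul]; ring
      _ ≤ ∑ i ∈ I, ∑ s ∈ P, shiftDensity A (X i) (s + t) := by
          refine sum_le_sum fun i hi => (hβP.trans hcount).trans ?_
          simp only [shiftDensity]
          rw [← sum_div, le_div_iff₀' (Nat.cast_pos.2 (hX i hi).card_pos)]
          exact card_mul_shiftCount_le A (hBXP i hi) t
      _ = ∑ s ∈ P, ∑ i ∈ I, shiftDensity A (X i) (s + t) := sum_comm
  obtain ⟨s, -, hs⟩ := exists_le_of_sum_le hP hsum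
  exact ⟨s + t, hs⟩

variable [Fintype G]

/-- `A` has a translate of relative density at least `α` on every nonempty subset of the Bohr set.
Quantifying over all subsets makes the property hereditary, so that it can be passed to smaller
Bohr sets without keeping track of translations. -/
def DenseOnSubsets (A : Finset G) (Γ : Finset (AddChar G ℂ)) (ρ α : ℝ) : Prop :=
  ∀ X ⊆ bohrSet Γ ρ, X.Nonempty → ∃ t, α ≤ shiftDensity A X t

lemma DenseOnSubsets.mono {A : Finset G} {Γ : Finset (AddChar G ℂ)} {ρ α ρ' α' : ℝ}
    (h : DenseOnSubsets A Γ ρ α) (hρ : ρ' ≤ ρ) (hα : α' ≤ α) : DenseOnSubsets A Γ ρ' α' :=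
  fun X hX hne => (h X (hX.trans (bohrSet_mono Γ hρ)) hne).imp fun _ => hα.trans

lemma DenseOnSubsets.le_one {A : Finset G} {Γ : Finset (AddChar G ℂ)} {ρ α : ℝ}
    (h : DenseOnSubsets A Γ ρ α) (hρ : 0 ≤ ρ) : α ≤ 1 :=
  have ⟨_, ht⟩ := h _ subset_rfl (bohrSet_nonempty Γ hρ)
  ht.trans (shiftDensity_le_one _ _ _)

lemma denseOnSubsets_of_le_shiftDensity {A B P : Finset G} {Γ : Finset (AddChar G ℂ)} {ρ : ℝ}
    (hP : P.Nonempty) (hBP : ∀ b ∈ B, ∀ x ∈ bohrSet Γ ρ, b - x ∈ P) {β η : ℝ} (hβ : 0 ≤ β)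
    (hη : 0 ≤ η) (hcard : (#P : ℝ) ≤ (1 + η) * #B) {t : G} (ht : β ≤ shiftDensity A B t) :
    DenseOnSubsets A Γ ρ (β / (1 + η)) := by
  intro X hX hne
  simpa using exists_le_sum_shiftDensity {()} (X := fun _ => X) (fun _ _ => hne) hP
    (fun _ _ b hb x hx => hBP b hb x (hX hx)) hβ hη hcard ht

end DensityIncrements

section BalancedIndicator

variable {G : Type*} [DecidableEq G]

/-- The indicator function of `A` minus `α` times that of `B`; it has mean zero when `α` is the
relative density of `A` in `B`. -/
noncomputable def balancedIndicator (A B : Finset G) (α : ℝ) (x : G) : ℝ :=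
  indicator A x - α * indicator B x

lemma card_sub_le_sum_indicator_comp {X B P : Finset G} (hBP : B ⊆ P) {η : ℝ}
    (hcard : (#P : ℝ) ≤ (1 + η) * #B) (σ : G ≃ G) (hσ : ∀ a ∈ X, σ a ∈ P) :
    #X - η * #B ≤ ∑ a ∈ X, indicator B (σ a) := by
  have hsplit := card_filter_add_card_filter_not (s := X) fun a => σ a ∈ B
  have hout : #{a ∈ X | σ a ∉ B} ≤ #(P \ B) :=
    card_le_card_of_injOn σ (fun a ha => by
      obtain ⟨haX, haB⟩ := mem_filter.1 ha
      exact mem_sdiff.2 ⟨hσ a haX, haB⟩) σ.injective.injOn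
  have hPB := card_sdiff_add_card_eq_card hBP
  have hin : ∑ a ∈ X, indicator B (σ a) = #{a ∈ X | σ a ∈ B} := by simp [indicator]
  rify at hsplit hout hPB
  rw [hin]
  linarith

variable [Fintype G]

lemma sum_balancedIndicator_comp_mul_le {A B P : Finset G} (hA : A ⊆ B) (hBP : B ⊆ P) {α η : ℝ}
    (hα : 0 ≤ α) (hαcard : (#A : ℝ) = α * #B) (hcard : (#P : ℝ) ≤ (1 + η) * #B) (σ : G ≃ G)
    (hσ : ∀ a ∈ B, σ a ∈ P) (hσ' : ∀ a ∈ B, σ.symm a ∈ P) :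
    ∑ a, balancedIndicator A B α (σ a) * balancedIndicator A B α a ≤
      ∑ a, indicator A (σ a) * indicator A a - α * #A + 2 * η * α * #B := by
  have hAB := card_sub_le_sum_indicator_comp hBP hcard σ fun a ha => hσ a (hA ha)
  have hBA := card_sub_le_sum_indicator_comp hBP hcard σ.symm fun a ha => hσ' a (hA ha)
  have hBB : ∑ a ∈ B, indicator B (σ a) ≤ #B :=
    (sum_le_sum fun a _ => indicator_le_one B (σ a)).trans_eq (by simp)
  rw [← sum_indicator_mul] at hAB hBA hBB
  rw [← Equiv.sum_comp σ] at hBA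
  simp only [Equiv.symm_apply_apply] at hBA
  have hexpand : ∑ a, balancedIndicator A B α (σ a) * balancedIndicator A B α a =
      ∑ a, indicator A (σ a) * indicator A a - α * ∑ a, indicator A (σ a) * indicator B a -
        α * ∑ a, indicator A a * indicator B (σ a) +
          α ^ 2 * ∑ a, indicator B a * indicator B (σ a) := by
    simp only [balancedIndicator, mul_sum, ← sum_sub_distrib, ← sum_add_distrib]
    exact sum_congr rfl fun a _ => by ring
  rw [hexpand]
  have := mul_le_mul_of_nonneg_left hAB hα
  have := mul_le_mul_of_nonneg_left hBA hα
  have := mul_le_mul_of_nonneg_left hBB (sq_nonneg α)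
  have : α ^ 2 * #B = α * #A := by rw [hαcard]; ring
  linarith

variable [AddCommGroup G]

lemma autocorr_balancedIndicator_le {A B P : Finset G} (hA : A ⊆ B) (hBP : B ⊆ P) {α η : ℝ}
    (hα : 0 ≤ α) (hαcard : (#A : ℝ) = α * #B) (hcard : (#P : ℝ) ≤ (1 + η) * #B) {w : G}
    (hadd : ∀ a ∈ B, a + w ∈ P) (hsub : ∀ a ∈ B, a - w ∈ P) :
    autocorr (balancedIndicator A B α) w ≤
      autocorr (indicator A) w - α * #A + 2 * η * α * #B :=
  sum_balancedIndicator_comp_mul_le hA hBP hα hαcard hcard (Equiv.addRight w) hadd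
    fun a ha => by simpa [← sub_eq_add_neg] using hsub a ha

lemma autoconv_balancedIndicator_le {A B P : Finset G} (hA : A ⊆ B) (hBP : B ⊆ P) {α η : ℝ}
    (hα : 0 ≤ α) (hαcard : (#A : ℝ) = α * #B) (hcard : (#P : ℝ) ≤ (1 + η) * #B) {w : G}
    (hsub : ∀ a ∈ B, w - a ∈ P) :
    autoconv (balancedIndicator A B α) w ≤
      autoconv (indicator A) w - α * #A + 2 * η * α * #B := by
  have h := sum_balancedIndicator_comp_mul_le hA hBP hα hαcard hcard (Equiv.subLeft w) hsub
    fun a ha => by simpa [add_comm, ← sub_eq_add_neg] using hsub a ha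
  simpa only [autoconv, Equiv.subLeft_apply, mul_comm] using h

end BalancedIndicator

section Moments

variable {G : Type*} [Fintype G] [AddCommGroup G]

lemma pow_mul_card_mul_card_sq_le (f : G → ℝ) {D W T : Finset G} (hD : ∀ x ∈ D, -x ∈ D) {p : ℕ}
    (hp : Even p) {c : ℝ} (hc : 0 ≤ c) (hW : ∀ w ∈ W, c ≤ |autoconv f w|)
    (hT : ∀ x ∈ D, ∀ y ∈ D, ∀ w ∈ W, w - (x - y) ∈ T) :
    c ^ p * #W * (#D : ℝ) ^ 2 ≤ #T * ∑ x ∈ D, ∑ y ∈ D, autocorr f (x - y) ^ p := by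
  classical
  have hlower (x : G) (hx : x ∈ D) (y : G) (hy : y ∈ D) :
      c ^ p * #W ≤ ∑ t ∈ T, autoconv f (x - y + t) ^ p := by
    calc c ^ p * #W = ∑ _w ∈ W, c ^ p := by rw [sum_const, nsmul_eq_mul, mul_comm]
      _ ≤ ∑ w ∈ W, autoconv f w ^ p := by
          refine sum_le_sum fun w hw => ?_
          rw [← hp.pow_abs (autoconv f w)]
          exact pow_le_pow_left₀ hc (hW w hw) p
      _ = ∑ t ∈ W.image (· - (x - y)), autoconv f (x - y + t) ^ p := by
          rw [sum_image sub_left_injective.injOn]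
          simp only [add_sub_cancel]
      _ ≤ ∑ t ∈ T, autoconv f (x - y + t) ^ p :=
          sum_le_sum_of_subset_of_nonneg (image_subset_iff.2 (hT x hx y hy))
            fun _ _ _ => hp.pow_nonneg _
  calc c ^ p * #W * (#D : ℝ) ^ 2 = ∑ _x ∈ D, ∑ _y ∈ D, c ^ p * #W := by
        simp only [sum_const, nsmul_eq_mul]; ring
    _ ≤ ∑ x ∈ D, ∑ y ∈ D, ∑ t ∈ T, autoconv f (x - y + t) ^ p :=
        sum_le_sum fun x hx => sum_le_sum fun y hy => hlower x hx y hy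
    _ = ∑ t ∈ T, ∑ x ∈ D, ∑ y ∈ D, autoconv f (x - y + t) ^ p := sum_comm_cycle
    _ ≤ ∑ _t ∈ T, ∑ x ∈ D, ∑ y ∈ D, autocorr f (x - y) ^ p :=
        sum_le_sum fun t _ => sum_autoconv_pow_le_sum_autocorr_pow hD f p t
    _ = #T * ∑ x ∈ D, ∑ y ∈ D, autocorr f (x - y) ^ p := by rw [sum_const, nsmul_eq_mul]

lemma sum_autocorr_pow_nonneg (f : G → ℝ) (D : Finset G) (p : ℕ) :
    0 ≤ ∑ x ∈ D, ∑ y ∈ D, autocorr f (x - y) ^ p := by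
  rw [sum_autocorr_pow]
  exact sum_nonneg fun _ _ => sq_nonneg _

lemma pow_mul_card_sq_le_sum_autocorr_indicator_pow [DecidableEq G] {A D : Finset G} {f : G → ℝ}
    {m : ℝ} (hm : 0 < m) {p : ℕ} (hp : Even p) (hp12 : 12 ≤ p)
    (hf : ∀ x ∈ D, ∀ y ∈ D,
      autocorr f (x - y) + 0.98 * m ≤ autocorr (indicator A) (x - y))
    (hmoment : (0.9 * m) ^ p * (#D : ℝ) ^ 2 ≤ ∑ x ∈ D, ∑ y ∈ D, autocorr f (x - y) ^ p) :
    (1.5 * m) ^ (2 * (p + 1)) * (#D : ℝ) ^ 2 ≤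
      ∑ x ∈ D, ∑ y ∈ D, autocorr (indicator A) (x - y) ^ (2 * (p + 1)) := by
  have h := unbalancing (D ×ˢ D) (fun w => autocorr f (w.1 - w.2) / m)
    (fun w => autocorr (indicator A) (w.1 - w.2) / m) hp hp12
    (fun w _ => div_nonneg (autocorr_indicator_nonneg _ _) hm.le)
    (fun w hw => by
      obtain ⟨hx, hy⟩ := mem_product.1 hw
      rw [le_div_iff₀ hm, add_mul, div_mul_cancel₀ _ hm.ne']
      exact hf _ hx _ hy)
    (by
      simp only [div_pow]
      rw [← sum_div, sum_product]
      exact div_nonneg (sum_autocorr_pow_nonneg f D _) (by positivity))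
    (by
      simp only [div_pow]
      rw [← sum_div, sum_product, le_div_iff₀ (by positivity), card_product]
      rw [mul_pow] at hmoment
      push_cast
      linarith)
  simp only [div_pow] at h
  rw [← sum_div, sum_product, le_div_iff₀ (by positivity), card_product] at h
  push_cast at h
  rw [mul_pow]
  linarith

end Moments

section TranslateAverages

variable {G : Type*} [AddCommGroup G]

lemma sum_average_translates_le {X : Finset G} {g : G → ℝ} {c : ℝ}
    (hg : ∀ u, ∑ x ∈ X, g (x + u) ≤ c) {ι : Type*} {I : Finset ι} (hI : I.Nonempty) (v : ι → G)
    (u : G) : ∑ x ∈ X, (∑ i ∈ I, g (x + u + v i)) / #I ≤ c := by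
  rw [← sum_div, div_le_iff₀ (Nat.cast_pos.2 hI.card_pos), sum_comm, mul_comm, ← nsmul_eq_mul,
    ← sum_const]
  refine sum_le_sum fun i _ => ?_
  simp only [add_assoc]
  exact hg (u + v i)

lemma sum_iterate_diffAvg_le {T X : Finset G} (hT : T.Nonempty) {g : G → ℝ} {c : ℝ}
    (hg : ∀ u, ∑ x ∈ X, g (x + u) ≤ c) (K : ℕ) :
    ∀ u, ∑ x ∈ X, (diffAvg T)^[K] g (x + u) ≤ c := by
  induction K with
  | zero => exact hg
  | succ K ih =>
    intro u
    rw [Function.iterate_succ_apply']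
    have h := sum_average_translates_le ih (hT.product hT) (fun t => t.1 - t.2) u
    simpa only [sum_product, card_product, ← sq, Nat.cast_pow, diffAvg] using h

variable [DecidableEq G]

lemma exists_le_shiftCount_of_le_sum_iterate_diffAvg {S A A₂ T X : Finset G} (hA : A.Nonempty)
    (hA₂ : A₂.Nonempty) (hT : T.Nonempty) [Finite G] {K : ℕ} {c : ℝ}
    (hc : c ≤ ∑ x ∈ X, (diffAvg T)^[K] (smoothedDensity S A A₂) x) :
    ∃ u, c ≤ shiftCount S X u := by
  obtain ⟨u, hu⟩ := Finite.exists_max (shiftCount S X)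
  refine ⟨u, hc.trans ?_⟩
  have hdensity (v : G) : ∑ x ∈ X, shiftDensity S A (x + v) ≤ shiftCount S X u := by
    simpa only [id, add_comm, shiftDensity, shiftCount] using
      sum_average_translates_le hu hA id v
  have hsmoothed (v : G) : ∑ x ∈ X, smoothedDensity S A A₂ (x + v) ≤ shiftCount S X u := by
    simpa only [← sub_eq_add_neg, smoothedDensity] using
      sum_average_translates_le hdensity hA₂ (fun b => -b) v
  simpa only [add_zero] using sum_iterate_diffAvg_le hT hsmoothed K 0

variable [Fintype G]

lemma exists_mul_shiftDensity_le_of_popular {A A₁ S : Finset G} (hA₁ : A₁.Nonempty) {s : G}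
    (hs : ∀ a ∈ A₁, a + s ∈ A) {c : ℝ} (hS : ∀ w ∈ S, c ≤ autocorr (indicator A₁) w)
    (X : Finset G) (u : G) :
    ∃ t, c * shiftDensity S X u ≤ #A₁ * shiftDensity A X t := by
  have hcount : ∑ _a ∈ A₁, c * shiftCount S X u / #A₁ ≤ ∑ a ∈ A₁, shiftCount A X (a + u + s) := by
    calc ∑ _a ∈ A₁, c * shiftCount S X u / #A₁ = ∑ x ∈ X, c * indicator S (x + u) := by
          rw [sum_const, nsmul_eq_mul, mul_div_cancel₀ _ (by simpa using hA₁.ne_empty),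
            shiftCount, mul_sum]
      _ ≤ ∑ x ∈ X, autocorr (indicator A₁) (x + u) := by
          refine sum_le_sum fun x _ => ?_
          unfold indicator
          split_ifs with h
          · rw [mul_one]; exact hS _ h
          · rw [mul_zero]; exact autocorr_indicator_nonneg _ _
      _ = ∑ a ∈ A₁, ∑ x ∈ X, indicator A₁ (a + (x + u)) := by
          rw [sum_comm]
          refine sum_congr rfl fun x _ => ?_
          rw [← sum_indicator_mul]
          exact sum_congr rfl fun a _ => mul_comm _ _
      _ ≤ ∑ a ∈ A₁, shiftCount A X (a + u + s) := by
          refine sum_le_sum fun a _ => sum_le_sum fun x _ => ?_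
          rw [show x + (a + u + s) = a + (x + u) + s by abel]
          by_cases h : a + (x + u) ∈ A₁
          · simp [indicator, h, hs _ h]
          · simpa [indicator, h] using indicator_nonneg A (a + (x + u) + s)
  obtain ⟨a, -, ha⟩ := exists_le_of_sum_le hA₁ hcount
  refine ⟨a + u + s, ?_⟩
  rw [div_le_iff₀' (Nat.cast_pos.2 hA₁.card_pos)] at ha
  simp only [shiftDensity, ← mul_div_assoc]
  gcongr

lemma autoconv_indicator_add_self_le_one {A A₁ : Finset G} (hA : ThreeAPFree (A : Set G)) {s : G}
    (hs : ∀ a ∈ A₁, a + s ∈ A) {z : G} (hz : z + s ∈ A) :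
    autoconv (indicator A₁) (z + z) ≤ 1 := by
  have hterm (a : G) (ha : a ∈ A₁) : indicator A₁ (z + z - a) ≤ if a = z then 1 else 0 := by
    by_cases h : z + z - a ∈ A₁
    · have heq : a = z := add_right_cancel (hA (hs a ha) hz (hs _ h) (by abel))
      rw [if_pos heq]
      exact indicator_le_one _ _
    · rw [indicator, if_neg h]; positivity
  rw [autoconv, sum_indicator_mul]
  refine (sum_le_sum hterm).trans ?_
  rw [sum_ite_eq']
  split_ifs <;> norm_num

end TranslateAverages

section AlmostPeriodicity

/-- Numerical conditions for the almost-periodicity argument on a set of relative density `θ`: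
`k` samples estimate densities up to `ε`, the differences of almost periods are averaged `K` times,
and `M` characters control the large spectrum. The Bohr sets in use have `ThinAnnuli` with
parameters `η` and `κ`. -/
structure SmoothingParameters (η κ θ ε : ℝ) (K k M : ℕ) : Prop where
  η_nonneg : 0 ≤ η
  η_le_one : η ≤ 1
  κ_pos : 0 < κ
  κ_mul_le : κ * (2 * K + 2) ≤ 1
  θ_pos : 0 < θ
  θ_le_one : θ ≤ 1
  K_pos : 0 < K
  k_pos : 0 < k
  ε_nonneg : 0 ≤ ε
  sampling_error_le : K * (2 * ε + 64 * Real.exp (-(k * ε ^ 2 / 2)) / θ) ≤ 1 / 100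
  lt_exp : 4 * (2 / θ) ^ k < Real.exp ((M + 1) / 8)
  spectral_error_le : 2 / θ * (M * κ + 2 * η * 2 ^ (M + 1) + 2 * (1 / 4) ^ K) ≤ 1 / 50

lemma SmoothingParameters.κ_le_one {η κ θ ε : ℝ} {K k M : ℕ}
    (h : SmoothingParameters η κ θ ε K k M) : κ ≤ 1 := by
  nlinarith [h.κ_mul_le, h.κ_pos, mul_nonneg h.κ_pos.le (Nat.cast_nonneg (α := ℝ) K)]

lemma SmoothingParameters.two_mul_lt_mul_exp {η κ θ ε : ℝ} {K k M : ℕ}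
    (h : SmoothingParameters η κ θ ε K k M) {n x y t : ℝ} (hx : 0 < x) (hy : 0 ≤ y) (ht : 0 < t)
    (hyx : y ≤ 2 / θ * x) (hn : n * x ^ k ≤ 2 * y ^ k * t) :
    2 * n < t * Real.exp ((M + 1) / 8) := by
  have hn_le : n ≤ 2 * (2 / θ) ^ k * t := by
    refine le_of_mul_le_mul_right ?_ (pow_pos hx k)
    calc n * x ^ k ≤ 2 * y ^ k * t := hn
      _ ≤ 2 * (2 / θ * x) ^ k * t := by gcongr
      _ = 2 * (2 / θ) ^ k * t * x ^ k := by rw [mul_pow]; ring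
  linarith [mul_lt_mul_of_pos_right h.lt_exp ht]

variable {G : Type*} [AddCommGroup G] [DecidableEq G]

lemma le_smoothedDensity_zero {S A B : Finset G} (hA : A.Nonempty) (hB : B.Nonempty) {δ : ℝ}
    (h : ∑ a ∈ A, ∑ b ∈ B, (1 - indicator S (a - b)) ≤ δ * (#A * #B)) :
    1 - δ ≤ smoothedDensity S A B 0 := by
  have : (0 : ℝ) < #A := Nat.cast_pos.2 hA.card_pos
  have : (0 : ℝ) < #B := Nat.cast_pos.2 hB.card_pos
  simp only [smoothedDensity, shiftDensity, shiftCount]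
  rw [← sum_div, div_div, le_div_iff₀ (by positivity), sum_comm]
  simp only [sum_sub_distrib, sum_const, nsmul_eq_mul, mul_one] at h
  simp only [zero_sub, ← sub_eq_add_neg]
  linarith

lemma le_smoothedDensity_filter_zero {S A B P : Finset G} (hA : A.Nonempty) (hB : B.Nonempty)
    (hP : ∀ a ∈ A, ∀ b ∈ B, a - b ∈ P) {z : G} {δ : ℝ}
    (h : ∑ a ∈ A, ∑ b ∈ B, (1 - indicator S (a - (z + b))) ≤ δ * (#A * #B)) :
    1 - δ ≤ smoothedDensity {w ∈ P | w - z ∈ S} A B 0 := by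
  refine le_smoothedDensity_zero hA hB
    ((sum_congr rfl fun a ha => sum_congr rfl fun b hb => ?_).trans_le h)
  simp only [indicator, mem_filter, hP a ha b hb, true_and, sub_sub, add_comm z b]

lemma shiftCount_filter_sub_mem_le (S P X : Finset G) (z t : G) :
    shiftCount {w ∈ P | w - z ∈ S} X t ≤ shiftCount S X (t - z) := by
  refine sum_le_sum fun x _ => ?_
  rw [← add_sub_assoc]
  unfold indicator
  split_ifs with h h' <;> norm_num
  exact h' (mem_filter.1 h).2

variable [Fintype G]

lemma exists_almostPeriods_bohrSet (Γ : Finset (AddChar G ℂ)) (S : Finset G) {X B P : Finset G}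
    (hX : X.Nonempty) {r s τ : ℝ} (hr : 0 ≤ r) (hs : 0 ≤ s) (hBr : B ⊆ bohrSet Γ r)
    (hB : B.Nonempty) (hP : ∀ x ∈ X, ∀ t ∈ bohrSet Γ s, x + t ∈ P) {θ : ℝ}
    (hW : (#(bohrSet Γ (r + τ)) : ℝ) ≤ 8 / θ * #B) {ε : ℝ} (hε : 0 ≤ ε) {K k : ℕ} (hk : 0 < k)
    (hτ : 2 * K * s ≤ τ) :
    ∃ T ⊆ bohrSet Γ s, (#(bohrSet Γ s) : ℝ) * (#X : ℝ) ^ k ≤ 2 * (#P : ℝ) ^ k * #T ∧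
      T.Nonempty ∧
      |(diffAvg T)^[K] (smoothedDensity S X B) 0 - smoothedDensity S X B 0| ≤
        K * (2 * ε + 64 * Real.exp (-(k * ε ^ 2 / 2)) / θ) := by
  have hτ_nonneg : 0 ≤ τ := le_trans (by positivity) hτ
  obtain ⟨T, hTs, hTcard, hT⟩ := exists_almostPeriods S B hX
    (bohrSet_nonempty Γ (add_nonneg hr hτ_nonneg)) hP hε hk
  have hT_ne : T.Nonempty := by
    by_contra hempty
    have : (0 : ℝ) < #X := Nat.cast_pos.2 hX.card_pos
    have : 0 < (#(bohrSet Γ s) : ℝ) * (#X : ℝ) ^ k := by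
      have := card_bohrSet_pos Γ hs
      positivity
    rw [not_nonempty_iff_eq_empty.1 hempty, card_empty, Nat.cast_zero, mul_zero] at hTcard
    linarith
  have hdiff (t : G) (ht : t ∈ T) (t' : G) (ht' : t' ∈ T) : t - t' ∈ bohrSet Γ (2 * s) :=
    sub_mem_bohrSet (hTs ht) (hTs ht') (by linarith)
  refine ⟨T, hTs, hTcard, hT_ne, abs_iterate_diffAvg_sub_le hT_ne
    (K := K) (V := fun n => (bohrSet Γ (2 * n * s) : Set G)) ?_ ?_ K 0 (by omega) 0 ?_⟩
  · intro n u hu t ht t' ht'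
    exact add_mem_bohrSet hu (hdiff t ht t' ht') (by push_cast; linarith)
  · intro n hn u hu t ht t' ht'
    have hradius : 2 * n * s + 2 * s ≤ τ := by
      have : (n : ℝ) + 1 ≤ K := by exact_mod_cast hn
      nlinarith
    have hperiod := hT u t ht t' ht' fun b hb =>
      ⟨sub_mem_bohrSet hu (hBr hb) (by linarith),
        sub_mem_bohrSet (add_mem_bohrSet hu (hdiff t ht t' ht') le_rfl) (hBr hb) (by linarith)⟩
    have hB_pos : (0 : ℝ) < #B := Nat.cast_pos.2 hB.card_pos
    rw [smoothedDensity, smoothedDensity, ← sub_div, abs_div, abs_of_pos hB_pos,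
      div_le_iff₀ hB_pos]
    calc _ ≤ _ := hperiod
      _ ≤ 2 * ε * #B + 8 * Real.exp (-(k * ε ^ 2 / 2)) * (8 / θ * #B) := by gcongr
      _ = (2 * ε + 64 * Real.exp (-(k * ε ^ 2 / 2)) / θ) * #B := by ring
  · exact zero_mem_bohrSet Γ (by simp)

open Classical in
lemma exists_bohrSet_iterate_diffAvg_close {Γ : Finset (AddChar G ℂ)} {η κ θ ε : ℝ} {K k M : ℕ}
    (hpar : SmoothingParameters η κ θ ε K k M) (hΓ : ThinAnnuli Γ η κ) {S X B P : Finset G}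
    (hX : X.Nonempty) (hB : B.Nonempty) {r τ : ℝ} (hr : 0 ≤ r) (hτ : 0 < τ) (hτ_le : τ ≤ 1)
    (hBr : B ⊆ bohrSet Γ r) (hW : (#(bohrSet Γ (r + τ)) : ℝ) ≤ 8 / θ * #B)
    (hP : ∀ x ∈ X, ∀ t ∈ bohrSet Γ τ, x + t ∈ P) (hPcard : (#P : ℝ) ≤ 2 / θ * #X)
    (hSP : S ⊆ P) :
    ∃ T : Finset G, T.Nonempty ∧ ∃ Λ : Finset (AddChar G ℂ), #Λ ≤ M ∧
      ∀ x ∈ bohrSet (Γ ∪ Λ) (κ ^ 2 * τ),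
        |(diffAvg T)^[K] (smoothedDensity S X B) x - smoothedDensity S X B 0| ≤ 3 / 100 := by
  have hκ := hpar.κ_pos
  have hθ := hpar.θ_pos
  have hX_pos : (0 : ℝ) < #X := Nat.cast_pos.2 hX.card_pos
  set ρ := τ / (2 * K + 2)
  have hρ : 0 < ρ := by positivity
  have hρτ : ρ * (2 * K + 2) = τ := by simp only [ρ]; field_simp
  have hρ_le : ρ ≤ τ := by nlinarith [mul_nonneg hρ.le (Nat.cast_nonneg (α := ℝ) K)]
  have hκρ : 0 < κ * ρ := mul_pos hκ hρ
  obtain ⟨s, hρs, hsρ, hscard⟩ := hΓ ρ hρ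
  obtain ⟨T, hTs, hTcard, hT, hclose⟩ := exists_almostPeriods_bohrSet Γ S hX hr (s := s) (τ := τ)
    (by linarith) hBr hB (fun x hx t ht => hP x hx t (bohrSet_mono Γ (by linarith) ht)) hW
    hpar.ε_nonneg (K := K) hpar.k_pos (by nlinarith)
  have hlarge := hpar.two_mul_lt_mul_exp hX_pos (Nat.cast_nonneg _)
    (Nat.cast_pos.2 hT.card_pos) hPcard hTcard
  obtain ⟨Λ, hΛ, hspec⟩ := exists_spectrum_control hTs hlarge hκρ.le
    (bohrSet_mono Γ (by linarith : s ≤ s + κ * ρ)) hscard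
  refine ⟨T, hT, Λ, hΛ, fun x hx => ?_⟩
  have hradius : κ ^ 2 * τ ≤ κ * ρ := by
    have := mul_le_mul_of_nonneg_left hpar.κ_mul_le hκρ.le
    rw [← hρτ]
    linarith
  have hx' := mem_bohrSet.1 (bohrSet_mono _ hradius hx)
  have hη := hpar.η_nonneg
  have hsmooth := abs_iterate_diffAvg_sub_zero_le hT (smoothedDensity_eq_sum_char S X B) K
    (δ := M * (κ * ρ) + 2 * η * 2 ^ (M + 1)) (by positivity) fun γ hγ =>
      hspec γ hγ x (fun z hz => add_mem_bohrSet hz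
        (mem_bohrSet.2 fun γ hγ => hx' γ (mem_union_left _ hγ)) le_rfl)
        fun l hl => hx' l (mem_union_right _ hl)
  have hcoeff : ∑ γ, ‖smoothedCoeff S X B γ‖ ≤ 2 / θ :=
    sum_norm_smoothedCoeff_le_of_card_le hX B
      (by rw [le_div_iff₀ hθ]; linarith [hpar.θ_le_one])
      ((Nat.cast_le.2 (card_le_card hSP)).trans hPcard)
  have hspectral : (∑ γ, ‖smoothedCoeff S X B γ‖) *
      (M * (κ * ρ) + 2 * η * 2 ^ (M + 1) + 2 * (1 / 4) ^ K) ≤ 1 / 50 := by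
    refine le_trans ?_ hpar.spectral_error_le
    have : κ * ρ ≤ κ := mul_le_of_le_one_right hκ.le (hρ_le.trans hτ_le)
    gcongr
  have := hpar.sampling_error_le
  rw [abs_le] at hsmooth hclose ⊢
  constructor <;> linarith

open Classical in
lemma exists_bohrSet_shiftDensity_ge {Γ : Finset (AddChar G ℂ)} {η κ θ ε : ℝ} {K k M : ℕ}
    (hpar : SmoothingParameters η κ θ ε K k M) (hΓ : ThinAnnuli Γ η κ) {S A : Finset G} {r ρ : ℝ}
    (hρ : 0 < ρ) (hρ_le : ρ ≤ 1)
    (hrcard : (#(bohrSet Γ (r + κ * ρ)) : ℝ) ≤ (1 + η) * #(bohrSet Γ r))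
    (hA : A.Nonempty) (hAr : A ⊆ bohrSet Γ r) (hAcard : θ * #(bohrSet Γ r) ≤ #A)
    (hS : ∑ x ∈ A, ∑ y ∈ A, (1 - indicator S (x - y)) ≤ (#A : ℝ) ^ 2 / 100) :
    ∃ Λ : Finset (AddChar G ℂ), #Λ ≤ M ∧ ∀ X ⊆ bohrSet (Γ ∪ Λ) (κ ^ 4 * ρ), X.Nonempty →
      ∃ u, 0.93 ≤ shiftDensity S X u := by
  have hκ := hpar.κ_pos
  have hκ_le := hpar.κ_le_one
  have hθ := hpar.θ_pos
  have hη := hpar.η_le_one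
  have hκρ : 0 < κ * ρ := mul_pos hκ hρ
  have hκρ_le : κ * ρ ≤ 1 := mul_le_one₀ hκ_le hρ.le hρ_le
  have : κ * (κ * ρ) ≤ κ * ρ := mul_le_of_le_one_left hκρ.le hκ_le
  have hτ : 0 < κ * (κ * ρ) := mul_pos hκ hκρ
  set P := bohrSet Γ (r + κ * ρ)
  have hdouble {u v : ℝ} (h : (#(bohrSet Γ u) : ℝ) ≤ (1 + η) * #(bohrSet Γ v)) :
      θ * #(bohrSet Γ u) ≤ 2 * (θ * #(bohrSet Γ v)) := by
    have := mul_le_mul_of_nonneg_left (h.trans (mul_le_mul_of_nonneg_right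
      (by linarith : 1 + η ≤ 2) (Nat.cast_nonneg _))) hθ.le
    linarith
  have hPcard : θ * #P ≤ 2 * #A := by linarith [hdouble hrcard]
  obtain ⟨s, hρs, hsρ, hscard⟩ := hΓ (κ * ρ) hκρ
  have hs : 0 ≤ s := by linarith
  obtain ⟨z, B, hBs, -, hBcard, hzB⟩ := exists_localized_subset hA (bohrSet_nonempty Γ hs)
    (fun w => sub_nonneg.2 (indicator_le_one S w)) hθ.le hS
    (fun x hx y hy => sub_mem_bohrSet (hAr hx) hy (by linarith)) hPcard
  have hB : B.Nonempty := by
    have := card_bohrSet_pos Γ hs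
    exact card_pos.1 (Nat.cast_pos.1 (lt_of_lt_of_le (by positivity) hBcard))
  set S' := {w ∈ P | w - z ∈ S}
  have hzero : 1 - 1 / 40 ≤ smoothedDensity S' A B 0 := le_smoothedDensity_filter_zero hA hB
    (fun a ha b hb => sub_mem_bohrSet (hAr ha) (hBs hb) (by linarith)) (hzB.trans_eq (by ring))
  obtain ⟨T, hT, Λ, hΛ, hclose⟩ := exists_bohrSet_iterate_diffAvg_close (S := S') hpar hΓ hA hB hs
    hτ (by linarith) hBs
    (by
      rw [div_mul_eq_mul_div, le_div_iff₀' hθ]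
      linarith [hdouble hscard])
    (fun x hx t ht => add_mem_bohrSet (hAr hx) ht (by linarith))
    (by rwa [div_mul_eq_mul_div, le_div_iff₀' hθ]) (filter_subset _ _)
  refine ⟨Λ, hΛ, fun X hX hX_ne => ?_⟩
  have hlarge : 0.93 * (#X : ℝ) ≤ ∑ x ∈ X, (diffAvg T)^[K] (smoothedDensity S' A B) x := by
    rw [mul_comm, ← nsmul_eq_mul, ← sum_const]
    refine sum_le_sum fun x hx => ?_
    have := (abs_le.1 (hclose x (by convert hX hx using 2; ring))).1
    linarith
  obtain ⟨u, hu⟩ := exists_le_shiftCount_of_le_sum_iterate_diffAvg hA hB hT hlarge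
  exact ⟨u - z, (le_div_iff₀ (Nat.cast_pos.2 hX_ne.card_pos)).2
    (hu.trans (shiftCount_filter_sub_mem_le S P X z u))⟩

end AlmostPeriodicity

section DensityIncrementStep

variable {G : Type*} [AddCommGroup G] [Fintype G] [DecidableEq G]

/-- Numerical conditions under which a set without three-term arithmetic progressions that has
density `α` on a Bohr set has density `1.01 * α` on a smaller one; `p` is the exponent of the
moments of autocorrelations compared in the argument. -/
structure IncrementParameters (α η κ θ ε : ℝ) (p K k M : ℕ) : Prop
    extends SmoothingParameters η κ θ ε K k M where
  α_pos : 0 < α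
  η_le : η ≤ α / 200
  κ_le : κ ≤ 1 / 16
  even_p : Even p
  le_p : 16 ≤ p
  pow_le : (0.9 : ℝ) ^ p * 1.01 ≤ 0.96 ^ p * 0.95 * α
  θ_le : θ ≤ (α / 2) ^ (2 * (p + 1))

lemma IncrementParameters.mono {α β η κ θ ε : ℝ} {p K k M : ℕ}
    (h : IncrementParameters α η κ θ ε p K k M) (hαβ : α ≤ β) :
    IncrementParameters β η κ θ ε p K k M where
  toSmoothingParameters := h.toSmoothingParameters
  α_pos := h.α_pos.trans_le hαβ
  η_le := h.η_le.trans (by linarith)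
  κ_le := h.κ_le
  even_p := h.even_p
  le_p := h.le_p
  pow_le := h.pow_le.trans (by gcongr)
  θ_le := h.θ_le.trans (pow_le_pow_left₀ (by linarith [h.α_pos]) (by linarith) _)

lemma denseOnSubsets_of_le_shiftDensity_bohrSet {A : Finset G} {Γ : Finset (AddChar G ℂ)}
    {r δ α η : ℝ} (hr : 0 ≤ r) (hδ : 0 ≤ δ) (hα : 0 ≤ α) (hη : 0 ≤ η) (hη_le : η ≤ 1 / 200)
    (hcard : (#(bohrSet Γ (r + δ)) : ℝ) ≤ (1 + η) * #(bohrSet Γ r)) {s : G}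
    (hs : 1.03 * α ≤ shiftDensity A (bohrSet Γ r) s) : DenseOnSubsets A Γ δ (1.01 * α) := by
  refine (denseOnSubsets_of_le_shiftDensity (bohrSet_nonempty Γ (add_nonneg hr hδ))
    (fun _ hb _ hx => sub_mem_bohrSet hb hx le_rfl) (by positivity) hη hcard hs).mono le_rfl ?_
  rw [le_div_iff₀ (by linarith)]
  nlinarith

lemma denseOnSubsets_or_exists_le_shiftDensity {A : Finset G} {Γ : Finset (AddChar G ℂ)}
    {α η κ ρ : ℝ} (hΓ : ThinAnnuli Γ η κ) (hα : 0 ≤ α) (hη : 0 ≤ η) (hη_le : η ≤ 1 / 200)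
    (hκ : 0 ≤ κ) (hρ : 0 < ρ) (hA : DenseOnSubsets A Γ ρ α) {δ r r' : ℝ} (hδ : 0 ≤ δ)
    (hr : 0 ≤ r) (hr_le : r ≤ κ * ρ)
    (hrcard : (#(bohrSet Γ (r + δ)) : ℝ) ≤ (1 + η) * #(bohrSet Γ r))
    (hr' : 0 ≤ r') (hr'_le : r' ≤ κ * ρ)
    (hr'card : (#(bohrSet Γ (r' + δ)) : ℝ) ≤ (1 + η) * #(bohrSet Γ r')) :
    DenseOnSubsets A Γ δ (1.01 * α) ∨ ∃ s, 0.95 * α ≤ shiftDensity A (bohrSet Γ r) s ∧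
      0.95 * α ≤ shiftDensity A (bohrSet Γ r') s := by
  obtain ⟨R, hρR, hRρ, hRcard⟩ := hΓ ρ hρ
  have : 0 ≤ κ * ρ := mul_nonneg hκ hρ.le
  obtain ⟨t, ht⟩ := hA (bohrSet Γ R) (bohrSet_mono Γ (by linarith))
    (bohrSet_nonempty Γ (by linarith))
  obtain ⟨s, hs⟩ := exists_le_sum_shiftDensity univ (X := ![bohrSet Γ r, bohrSet Γ r'])
    (by simp [Fin.forall_fin_two, bohrSet_nonempty Γ hr, bohrSet_nonempty Γ hr'])
    (bohrSet_nonempty Γ (by linarith : 0 ≤ R + κ * ρ))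
    (by
      simp only [mem_univ, true_imp_iff, Fin.forall_fin_two]
      exact ⟨fun b hb x hx => sub_mem_bohrSet hb hx (by linarith),
        fun b hb x hx => sub_mem_bohrSet hb hx (by linarith)⟩) hα hη hRcard ht
  have hsum : 1.98 * α ≤ 2 * (α / (1 + η)) := by
    rw [← mul_div_assoc, le_div_iff₀ (by linarith)]
    nlinarith
  simp only [card_univ, Fintype.card_fin, Fin.sum_univ_two, Matrix.cons_val_zero,
    Matrix.cons_val_one] at hs
  push_cast at hs
  by_cases hdense : 1.03 * α ≤ shiftDensity A (bohrSet Γ r) s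
  · exact Or.inl (denseOnSubsets_of_le_shiftDensity_bohrSet hr hδ hα hη hη_le hrcard hdense)
  by_cases hdense' : 1.03 * α ≤ shiftDensity A (bohrSet Γ r') s
  · exact Or.inl (denseOnSubsets_of_le_shiftDensity_bohrSet hr' hδ hα hη hη_le hr'card hdense')
  · exact Or.inr ⟨s, by constructor <;> linarith⟩

lemma le_abs_autoconv_balancedIndicator {A A₁ B P : Finset G} (hA : ThreeAPFree (A : Set G))
    {s z : G} (hA₁ : ∀ a ∈ A₁, a + s ∈ A) (hz : z + s ∈ A) (hA₁B : A₁ ⊆ B) (hBP : B ⊆ P)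
    {α η : ℝ} (hα : 0 ≤ α) (hη : η ≤ α / 100) (hcard : (#P : ℝ) ≤ (1 + η) * #B)
    (hA₁card : (#A₁ : ℝ) = α * #B) (hlarge : 50 ≤ α * #A₁) (hsub : ∀ a ∈ B, z + z - a ∈ P) :
    0.96 * (α * #A₁) ≤ |autoconv (balancedIndicator A₁ B α) (z + z)| := by
  have := autoconv_balancedIndicator_le hA₁B hBP hα hA₁card hcard hsub
  have := autoconv_indicator_add_self_le_one hA hA₁ hz
  have : 2 * η * α * #B ≤ 0.02 * (α * #A₁) := by
    rw [mul_assoc _ α, ← hA₁card]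
    linarith [mul_le_mul_of_nonneg_right hη (Nat.cast_nonneg (α := ℝ) #A₁)]
  refine le_trans ?_ (neg_le_abs _)
  linarith

lemma autocorr_balancedIndicator_add_le {A B P : Finset G} (hA : A ⊆ B) (hBP : B ⊆ P) {α η : ℝ}
    (hα : 0 ≤ α) (hη : η ≤ α / 100) (hcard : (#P : ℝ) ≤ (1 + η) * #B)
    (hAcard : (#A : ℝ) = α * #B) {w : G} (hadd : ∀ a ∈ B, a + w ∈ P) (hsub : ∀ a ∈ B, a - w ∈ P) :
    autocorr (balancedIndicator A B α) w + 0.98 * (α * #A) ≤ autocorr (indicator A) w := by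
  have := autocorr_balancedIndicator_le hA hBP hα hAcard hcard hadd hsub
  have : 2 * η * α * #B ≤ 0.02 * (α * #A) := by
    rw [mul_assoc _ α, ← hAcard]
    linarith [mul_le_mul_of_nonneg_right hη (Nat.cast_nonneg (α := ℝ) #A)]
  linarith

/-- The doubled elements of `A₂` are values at which `A₁ + A₁` is much sparser than for a random
set, which forces a high moment of the autocorrelation of `A₁` to be large. -/
lemma pow_mul_card_sq_le_of_threeAPFree {half : G →+ G} (hhalf : ∀ x, half x + half x = x)
    {A : Finset G} (hA : ThreeAPFree (A : Set G)) {Γ : Finset (AddChar G ℂ)} {A₁ A₂ : Finset G}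
    {s : G} (hA₁ : ∀ a ∈ A₁, a + s ∈ A) (hA₂ : ∀ a ∈ A₂, a + s ∈ A) {r r' u δ α β η : ℝ}
    (hA₁r : A₁ ⊆ bohrSet Γ r) (hA₂r : A₂ ⊆ bohrSet Γ r') (hr' : 0 ≤ r') (hδ : 0 ≤ δ)
    (hr'δ : 2 * r' ≤ δ) (huδ : 4 * u ≤ δ)
    (hrcard : (#(bohrSet Γ (r + δ)) : ℝ) ≤ (1 + η) * #(bohrSet Γ r))
    (hr'card : (#(bohrSet Γ (r' + 2 * u)) : ℝ) ≤ 1.01 * #(bohrSet Γ r'))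
    (hα : 0 ≤ α) (hη : η ≤ α / 100) (hA₁card : (#A₁ : ℝ) = α * #(bohrSet Γ r))
    (hlarge : 50 ≤ α * #A₁) (hA₂card : 0.95 * β * #(bohrSet Γ r') ≤ #A₂) {p : ℕ} (hp : Even p)
    (hp12 : 12 ≤ p) (hpow : (0.9 : ℝ) ^ p * 1.01 ≤ 0.96 ^ p * 0.95 * β) :
    (1.5 * (α * #A₁)) ^ (2 * (p + 1)) * (#(bohrSet (pullback half Γ) u) : ℝ) ^ 2 ≤
      ∑ x ∈ bohrSet (pullback half Γ) u, ∑ y ∈ bohrSet (pullback half Γ) u,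
        autocorr (indicator A₁) (x - y) ^ (2 * (p + 1)) := by
  set D := bohrSet (pullback half Γ) u
  set T := bohrSet (pullback half Γ) (r' + 2 * u)
  set m := α * #A₁
  have hm : 0 < m := by linarith
  have hBP : bohrSet Γ r ⊆ bohrSet Γ (r + δ) := bohrSet_mono Γ (by linarith)
  have hdiff (x : G) (hx : x ∈ D) (y : G) (hy : y ∈ D) :
      x - y ∈ bohrSet (pullback half Γ) (2 * u) := sub_mem_bohrSet hx hy (by linarith)
  have hdiffδ (x : G) (hx : x ∈ D) (y : G) (hy : y ∈ D) : x - y ∈ bohrSet Γ δ :=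
    bohrSet_pullback_subset hhalf Γ (by linarith) (hdiff x hx y hy)
  refine pow_mul_card_sq_le_sum_autocorr_indicator_pow hm hp hp12
    (f := balancedIndicator A₁ (bohrSet Γ r) α) (fun x hx y hy => ?_) ?_
  · exact autocorr_balancedIndicator_add_le hA₁r hBP hα hη hrcard hA₁card
      (fun a ha => add_mem_bohrSet ha (hdiffδ x hx y hy) le_rfl)
      (fun a ha => sub_mem_bohrSet ha (hdiffδ x hx y hy) le_rfl)
  have hmoment := pow_mul_card_mul_card_sq_le (balancedIndicator A₁ (bohrSet Γ r) α)
    (D := D) (W := A₂.image fun z => z + z) (T := T) (fun _ => neg_mem_bohrSet) hp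
    (by positivity : 0 ≤ 0.96 * m)
    (forall_mem_image.2 fun z hz => le_abs_autoconv_balancedIndicator hA hA₁ (hA₂ z hz) hA₁r hBP hα
      hη hrcard hA₁card hlarge fun a ha => sub_mem_bohrSet
        (add_mem_bohrSet (hA₂r hz) (hA₂r hz) le_rfl) ha (by linarith))
    (fun x hx y hy => forall_mem_image.2 fun z hz => sub_mem_bohrSet
      ((add_self_mem_bohrSet_pullback hhalf).2 (hA₂r hz)) (hdiff x hx y hy) le_rfl)
  have hdouble : Function.Injective fun z : G => z + z := fun x y h => by
    simpa [hhalf] using congrArg half h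
  rw [card_image_of_injective _ hdouble] at hmoment
  have hb : 0 < 1.01 * (#(bohrSet Γ r') : ℝ) := by linarith [card_bohrSet_pos Γ hr']
  have hA₂m : 0.9 ^ p * (1.01 * #(bohrSet Γ r')) ≤ 0.96 ^ p * (#A₂ : ℝ) := by
    have := mul_le_mul_of_nonneg_right hpow (Nat.cast_nonneg (α := ℝ) #(bohrSet Γ r'))
    have := mul_le_mul_of_nonneg_left hA₂card (by positivity : (0 : ℝ) ≤ 0.96 ^ p)
    linarith
  refine le_of_mul_le_mul_left ?_ hb
  calc 1.01 * #(bohrSet Γ r') * ((0.9 * m) ^ p * (#D : ℝ) ^ 2)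
      = 0.9 ^ p * (1.01 * #(bohrSet Γ r')) * m ^ p * (#D : ℝ) ^ 2 := by ring
    _ ≤ 0.96 ^ p * #A₂ * m ^ p * (#D : ℝ) ^ 2 := by gcongr
    _ = (0.96 * m) ^ p * #A₂ * (#D : ℝ) ^ 2 := by ring
    _ ≤ _ := hmoment
    _ ≤ _ := mul_le_mul_of_nonneg_right (by rwa [card_bohrSet_pullback hhalf])
      (sum_autocorr_pow_nonneg _ _ _)

lemma sifting_inequality {n : ℕ} (hn : 34 ≤ n) : 100 * (1.3 : ℝ) ^ n + 1 < 1.5 ^ n := by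
  obtain ⟨j, rfl⟩ := Nat.exists_eq_add_of_le hn
  have hj : (1.3 : ℝ) ^ j ≤ 1.5 ^ j := pow_le_pow_left₀ (by norm_num) (by norm_num) j
  have hj_one : (1 : ℝ) ≤ 1.3 ^ j := one_le_pow₀ (by norm_num)
  rw [pow_add, pow_add]
  norm_num1
  linarith

open Classical in
/-- A large moment of the autocorrelation of `A₁` yields, by sifting and almost periodicity, a
density increment for `A`. -/
lemma exists_denseOnSubsets_of_le_sum_autocorr_pow {Γ : Finset (AddChar G ℂ)} {α η κ θ ε : ℝ}
    {p K k M : ℕ} (hpar : IncrementParameters α η κ θ ε p K k M) (hΓ : ThinAnnuli Γ η κ)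
    {A A₁ : Finset G} {s : G} (hA₁ : ∀ a ∈ A₁, a + s ∈ A) (hA₁_ne : A₁.Nonempty) {β : ℝ}
    (hαβ : 0.95 * α ≤ β) {r ρ : ℝ} (hr : 0 ≤ r) (hρ : 0 < ρ) (hρ_le : ρ ≤ 1)
    (hrcard : (#(bohrSet Γ (r + κ * ρ)) : ℝ) ≤ (1 + η) * #(bohrSet Γ r))
    (hmoment : (1.5 * (β * #A₁)) ^ (2 * (p + 1)) * (#(bohrSet Γ r) : ℝ) ^ 2 ≤
      ∑ x ∈ bohrSet Γ r, ∑ y ∈ bohrSet Γ r, autocorr (indicator A₁) (x - y) ^ (2 * (p + 1))) :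
    ∃ Λ : Finset (AddChar G ℂ), #Λ ≤ M ∧ DenseOnSubsets A (Γ ∪ Λ) (κ ^ 4 * ρ) (1.01 * α) := by
  have hα := hpar.α_pos
  have hA₁_pos : (0 : ℝ) < #A₁ := Nat.cast_pos.2 hA₁_ne.card_pos
  set q := 2 * (p + 1)
  set m := β * #A₁
  have hm : 0 < m := mul_pos (by linarith) hA₁_pos
  have hnum : 100 * (1.3 * m) ^ q + θ * (#A₁ : ℝ) ^ q < (1.5 * m) ^ q := by
    have hθ : θ ≤ β ^ q := hpar.θ_le.trans (pow_le_pow_left₀ (by positivity) (by linarith) q)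
    have hθ' : θ * (#A₁ : ℝ) ^ q ≤ m ^ q := by
      rw [mul_pow]
      exact mul_le_mul_of_nonneg_right hθ (by positivity)
    have := mul_lt_mul_of_pos_right (sifting_inequality (n := q) (by have := hpar.le_p; omega))
      (pow_pos hm q)
    rw [mul_pow 1.3, mul_pow 1.5]
    linarith
  obtain ⟨A', hA'r, hA'_ne, hA'card, hA'⟩ := exists_sifted_subset A₁ (bohrSet_nonempty Γ hr) hm.le
    hpar.θ_pos.le hmoment hnum
  set S : Finset G := {w | 1.3 * m ≤ autocorr (indicator A₁) w}
  obtain ⟨Λ, hΛ, hS⟩ := exists_bohrSet_shiftDensity_ge (S := S) hpar.toSmoothingParameters hΓ hρ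
    hρ_le hrcard hA'_ne hA'r hA'card (by
      convert hA' using 4 with x _ y _
      by_cases h : 1.3 * m ≤ autocorr (indicator A₁) (x - y)
      · simp [indicator, S, h, not_lt.2 h]
      · simp [indicator, S, h, not_le.1 h])
  refine ⟨Λ, hΛ, fun X hX hX_ne => ?_⟩
  obtain ⟨u, hu⟩ := hS X hX hX_ne
  obtain ⟨t, ht⟩ := exists_mul_shiftDensity_le_of_popular hA₁_ne hA₁ (S := S)
    (fun w hw => (mem_filter.1 hw).2) X u
  refine ⟨t, le_of_mul_le_mul_left ?_ hA₁_pos⟩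
  calc #A₁ * (1.01 * α) ≤ 1.3 * m * 0.93 := by
        have := mul_le_mul_of_nonneg_left hαβ hA₁_pos.le
        have : 0 ≤ #A₁ * α := by positivity
        simp only [m]
        linarith
    _ ≤ 1.3 * m * shiftDensity S X u := by gcongr
    _ ≤ _ := ht

lemma exists_denseOnSubsets_of_le_shiftDensity {half : G →+ G} (hhalf : ∀ x, half x + half x = x)
    {A : Finset G} (hA : ThreeAPFree (A : Set G)) {α η κ θ ε : ℝ} {p K k M : ℕ}
    (hpar : IncrementParameters α η κ θ ε p K k M) (hreg : ∀ Γ, ThinAnnuli (G := G) Γ η κ)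
    (hα_le : α ≤ 1) {Γ : Finset (AddChar G ℂ)} {σ ρ r r' : ℝ} (hρ : 0 < ρ) (hρσ : 8 * ρ ≤ κ * σ)
    (hρ_le : ρ ≤ 1) (hrcard : (#(bohrSet Γ (r + κ * σ)) : ℝ) ≤ (1 + η) * #(bohrSet Γ r))
    (hr : 0 ≤ r) (hr' : 0 ≤ r') (hr'_le : r' ≤ ρ)
    (hr'card : (#(bohrSet Γ (r' + κ * ρ)) : ℝ) ≤ (1 + η) * #(bohrSet Γ r'))
    (hlarge : 100 ≤ α ^ 2 * #(bohrSet Γ r)) {s : G}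
    (hs : 0.95 * α ≤ shiftDensity A (bohrSet Γ r) s)
    (hs' : 0.95 * α ≤ shiftDensity A (bohrSet Γ r') s) :
    ∃ Γ', #Γ' ≤ #Γ + M ∧ DenseOnSubsets A Γ' (κ ^ 5 * ρ / 2) (1.01 * α) := by
  classical
  have hα := hpar.α_pos
  have hη := hpar.η_le
  have hκ := hpar.κ_pos
  have hκρ : 0 < κ * ρ := mul_pos hκ hρ
  have hκρ_le : κ * ρ ≤ ρ := mul_le_of_le_one_left hρ.le hpar.κ_le_one
  obtain ⟨u, hu, hu_le, hucard⟩ := hreg (pullback half Γ) (κ * ρ / 2) (by positivity)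
  have : 0 < κ * (κ * ρ / 2) := by positivity
  rw [shiftDensity, shiftCount_eq_card] at hs hs'
  set B := bohrSet Γ r
  have hB : (0 : ℝ) < #B := card_bohrSet_pos Γ hr
  set A₁ : Finset G := {x ∈ B | x + s ∈ A}
  set β := (#A₁ : ℝ) / #B
  have hA₁card : (#A₁ : ℝ) = β * #B := (div_mul_cancel₀ _ hB.ne').symm
  have hlarge' : 50 ≤ β * #A₁ := by
    have := pow_le_pow_left₀ (by positivity) hs 2
    have := mul_le_mul_of_nonneg_right this hB.le
    rw [hA₁card]
    linarith
  have hA₁_ne : A₁.Nonempty := by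
    rw [nonempty_iff_ne_empty]
    intro hempty
    rw [hempty, card_empty] at hlarge'
    norm_num at hlarge'
  obtain ⟨Λ, hΛ, hdense⟩ := exists_denseOnSubsets_of_le_sum_autocorr_pow hpar
    (hreg (pullback half Γ)) (fun a ha => (mem_filter.1 ha).2) hA₁_ne hs (by linarith : 0 ≤ u)
    (by positivity : 0 < κ * ρ / 2) (by linarith) hucard
    (pow_mul_card_sq_le_of_threeAPFree hhalf hA (fun a ha => (mem_filter.1 ha).2)
      (fun a ha => (mem_filter.1 ha).2) (filter_subset _ B) (filter_subset _ (bohrSet Γ r')) hr'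
      (by linarith : 0 ≤ κ * σ) (by linarith) (by linarith) hrcard
      ((Nat.cast_le.2 (card_le_card (bohrSet_mono Γ (by linarith)))).trans (hr'card.trans
        (mul_le_mul_of_nonneg_right (by linarith) (Nat.cast_nonneg _))))
      (by linarith) (by linarith) hA₁card hlarge' ((le_div_iff₀ (card_bohrSet_pos Γ hr')).1 hs')
      hpar.even_p (by have := hpar.le_p; omega) hpar.pow_le)
  refine ⟨pullback half Γ ∪ Λ, (card_union_le _ _).trans (add_le_add (card_pullback_le half Γ) hΛ),
    hdense.mono (le_of_eq (by ring)) le_rfl⟩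

lemma exists_denseOnSubsets_of_threeAPFree {half : G →+ G} (hhalf : ∀ x, half x + half x = x)
    {A : Finset G} (hA : ThreeAPFree (A : Set G)) {α η κ θ ε : ℝ} {p K k M : ℕ}
    (hpar : IncrementParameters α η κ θ ε p K k M) (hreg : ∀ Γ, ThinAnnuli (G := G) Γ η κ)
    {Γ : Finset (AddChar G ℂ)} {ρ : ℝ} (hρ : 0 < ρ) (hρ_le : ρ ≤ 1)
    (hlarge : 100 ≤ α ^ 2 * #(bohrSet Γ (κ * ρ / 2))) (hdense : DenseOnSubsets A Γ ρ α) :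
    ∃ Γ', #Γ' ≤ #Γ + M ∧ DenseOnSubsets A Γ' (κ ^ 8 * ρ) (1.01 * α) := by
  have hα_le := hdense.le_one hρ.le
  have hα := hpar.α_pos.le
  have hη_le : η ≤ 1 / 200 := hpar.η_le.trans (by linarith)
  have hκ := hpar.κ_pos
  have hκ_le : κ ≤ 1 / 16 := hpar.κ_le
  set σ := κ * ρ
  have hσ : 0 < σ := mul_pos hκ hρ
  set τ := κ * σ / 8
  have hκσ : 0 < κ * σ := mul_pos hκ hσ
  have : κ * σ ≤ σ := mul_le_of_le_one_left hσ.le hpar.κ_le_one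
  have hτσ : 8 * τ = κ * σ := by simp only [τ]; ring
  have hτ : 0 < τ := by positivity
  have hκτ : 0 < κ * τ := mul_pos hκ hτ
  have : κ * τ ≤ τ := mul_le_of_le_one_left hτ.le hpar.κ_le_one
  have hσρ : σ ≤ ρ := mul_le_of_le_one_left hρ.le hpar.κ_le_one
  obtain ⟨r, hr, hr_le, hrcard⟩ := hreg Γ σ hσ
  obtain ⟨r', hr', hr'_le, hr'card⟩ := hreg Γ τ hτ
  have hrcard' : (#(bohrSet Γ (r + κ * τ)) : ℝ) ≤ (1 + η) * #(bohrSet Γ r) :=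
    (Nat.cast_le.2 (card_le_card (bohrSet_mono Γ (by linarith)))).trans hrcard
  have hradius : κ ^ 8 * ρ ≤ κ ^ 5 * τ / 2 := by
    have : κ ^ 8 * ρ = κ ^ 5 * τ / 2 * (16 * κ) := by simp only [τ, σ]; ring
    rw [this]
    exact mul_le_of_le_one_right (by positivity) (by linarith)
  have hradius' : κ ^ 5 * τ / 2 ≤ κ * τ := by
    have : κ ^ 5 * τ / 2 = κ * τ * (κ ^ 4 / 2) := by ring
    rw [this]
    exact mul_le_of_le_one_right hκτ.le (by linarith [pow_le_one₀ hκ.le hpar.κ_le_one (n := 4)])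
  obtain hinc | ⟨s, hs, hs'⟩ := denseOnSubsets_or_exists_le_shiftDensity (hreg Γ) hα hpar.η_nonneg
    hη_le hκ.le hρ hdense hκτ.le (by linarith) (by linarith) hrcard' (by linarith) (by linarith)
    hr'card
  · exact ⟨Γ, by omega, hinc.mono (hradius.trans hradius') le_rfl⟩
  · have hcard := Nat.cast_le (α := ℝ).2 (card_le_card (bohrSet_mono Γ hr))
    obtain ⟨Γ', hΓ', hinc⟩ := exists_denseOnSubsets_of_le_shiftDensity hhalf hA hpar hreg hα_le hτ
      (by linarith) (by linarith) hrcard (by linarith) (by linarith) (by linarith) hr'card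
      (hlarge.trans (mul_le_mul_of_nonneg_left hcard (sq_nonneg α))) hs hs'
    exact ⟨Γ', hΓ', hinc.mono hradius le_rfl⟩

lemma denseOnSubsets_univ {A : Finset G} {α : ℝ} (hα : 0 ≤ α)
    (hA : α * Fintype.card G ≤ #A) (ρ : ℝ) : DenseOnSubsets A ∅ ρ α := by
  simpa using denseOnSubsets_of_le_shiftDensity (A := A) (B := univ) (P := univ) (Γ := ∅) (ρ := ρ)
    (t := 0) univ_nonempty (fun _ _ _ _ => mem_univ _) hα le_rfl (by simp) (by
      rw [shiftDensity, shiftCount_eq_card, le_div_iff₀ (by simp [Fintype.card_pos])]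
      simpa using hA)

lemma exists_denseOnSubsets_pow {half : G →+ G} (hhalf : ∀ x, half x + half x = x)
    {A : Finset G} (hA : ThreeAPFree (A : Set G)) {α η κ θ ε : ℝ} {p K k M N : ℕ}
    (hpar : IncrementParameters α η κ θ ε p K k M) (hreg : ∀ Γ, ThinAnnuli (G := G) Γ η κ)
    (hlarge : ∀ Γ : Finset (AddChar G ℂ), #Γ ≤ N * M →
      100 ≤ α ^ 2 * #(bohrSet Γ (κ ^ (8 * N + 1) / 2)))
    (hAcard : α * Fintype.card G ≤ #A) {j : ℕ} (hj : j ≤ N) :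
    ∃ Γ, #Γ ≤ j * M ∧ DenseOnSubsets A Γ (κ ^ (8 * j)) (1.01 ^ j * α) := by
  have hα := hpar.α_pos
  have hκ := hpar.κ_pos
  induction j with
  | zero => exact ⟨∅, by simp, by simpa using denseOnSubsets_univ hα.le hAcard 1⟩
  | succ j ih =>
    obtain ⟨Γ, hΓ, hdense⟩ := ih (by omega)
    have hαj : α ≤ 1.01 ^ j * α := le_mul_of_one_le_left hα.le (one_le_pow₀ (by norm_num))
    have hradius : κ ^ (8 * N + 1) / 2 ≤ κ * κ ^ (8 * j) / 2 := by
      rw [← pow_succ']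
      gcongr ?_ / 2
      exact pow_le_pow_of_le_one hκ.le hpar.κ_le_one (by omega)
    have hlargej : 100 ≤ (1.01 ^ j * α) ^ 2 * #(bohrSet Γ (κ * κ ^ (8 * j) / 2)) := by
      refine (hlarge Γ (hΓ.trans (Nat.mul_le_mul_right _ (by omega)))).trans ?_
      have := card_le_card (bohrSet_mono Γ hradius)
      gcongr
    obtain ⟨Γ', hΓ', hdense'⟩ := exists_denseOnSubsets_of_threeAPFree hhalf hA (hpar.mono hαj) hreg
      (by positivity) (pow_le_one₀ hκ.le hpar.κ_le_one) hlargej hdense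
    refine ⟨Γ', by rw [Nat.succ_mul]; omega, ?_⟩
    convert hdense' using 1 <;> ring

end DensityIncrementStep

lemma card_lt_of_threeAPFree {G : Type*} [AddCommGroup G] [Fintype G] {half : G →+ G}
    (hhalf : ∀ x, half x + half x = x) {A : Finset G} (hA : ThreeAPFree (A : Set G))
    {α η κ θ ε : ℝ} {p K k M N : ℕ}
    (hpar : IncrementParameters α η κ θ ε p K k M) (hreg : ∀ Γ, ThinAnnuli (G := G) Γ η κ)
    (hlarge : ∀ Γ : Finset (AddChar G ℂ), #Γ ≤ N * M →
      100 ≤ α ^ 2 * #(bohrSet Γ (κ ^ (8 * N + 1) / 2))) (hN : 1 < 1.01 ^ N * α) :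
    #A < α * Fintype.card G := by
  classical
  by_contra! hAcard
  obtain ⟨Γ, -, hdense⟩ := exists_denseOnSubsets_pow hhalf hA hpar hreg hlarge hAcard le_rfl
  exact (hdense.le_one (pow_nonneg hpar.κ_pos.le _)).not_gt hN

section Parameters

lemma half_pow_mul_two_pow (n : ℕ) : (1 / 2 : ℝ) ^ n * 2 ^ n = 1 := by
  rw [← mul_pow]; norm_num

lemma half_pow_le_half_pow {m n : ℕ} (h : m ≤ n) : (1 / 2 : ℝ) ^ n ≤ (1 / 2) ^ m :=
  pow_le_pow_of_le_one (by norm_num) (by norm_num) h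

lemma add_one_le_two_pow (n : ℕ) : (n : ℝ) + 1 ≤ 2 ^ n :=
  mod_cast Nat.succ_le_of_lt n.lt_two_pow_self

lemma two_pow_le_exp (n : ℕ) : (2 : ℝ) ^ n ≤ Real.exp n := by
  have htwo : (2 : ℝ) ≤ Real.exp 1 := by linarith [Real.add_one_le_exp (1 : ℝ)]
  calc (2 : ℝ) ^ n ≤ Real.exp 1 ^ n := pow_le_pow_left₀ (by norm_num) htwo n
    _ = Real.exp n := by rw [← Real.exp_nat_mul, mul_one]

lemma mul_le_two_pow {K : ℕ} (hK : 20 ≤ K) : 12800 * (K : ℝ) ≤ 2 ^ K := by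
  induction K, hK using Nat.le_induction with
  | base => norm_num
  | succ n hn ih =>
    have : (20 : ℝ) ≤ n := mod_cast hn
    rw [pow_succ]
    push_cast
    linarith

lemma sampling_error_le {K : ℕ} (hK : 20 ≤ K) :
    K * (2 * (1 / (400 * K)) + 64 * Real.exp (-((640000 * K ^ 3 : ℕ) * (1 / (400 * K)) ^ 2 / 2)) /
      (1 / 2) ^ K) ≤ (1 / 100 : ℝ) := by
  have : (0 : ℝ) < K := mod_cast (by omega : 0 < K)
  have hexponent : -((640000 * K ^ 3 : ℕ) * (1 / (400 * K : ℝ)) ^ 2 / 2) = -(2 * K : ℕ) := by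
    push_cast
    field_simp
    norm_num
  have hexp : (Real.exp (2 * K : ℕ))⁻¹ ≤ ((2 : ℝ) ^ (2 * K))⁻¹ :=
    inv_anti₀ (by positivity) (two_pow_le_exp (2 * K))
  have htail : 64 * (Real.exp (2 * K : ℕ))⁻¹ / (1 / 2) ^ K ≤ 64 / 2 ^ K := by
    rw [one_div, inv_pow, div_inv_eq_mul]
    calc 64 * (Real.exp (2 * K : ℕ))⁻¹ * 2 ^ K ≤ 64 * ((2 : ℝ) ^ (2 * K))⁻¹ * 2 ^ K := by gcongr
      _ = 64 / 2 ^ K := by rw [two_mul, pow_add]; field_simp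
  rw [hexponent, Real.exp_neg]
  calc K * (2 * (1 / (400 * K)) + 64 * (Real.exp (2 * K : ℕ))⁻¹ / (1 / 2) ^ K)
      ≤ K * (2 * (1 / (400 * K)) + 64 / 2 ^ K) := by gcongr
    _ = 1 / 200 + 64 * K / 2 ^ K := by
      have : 2 * (1 / (400 * K)) = 1 / (200 * K : ℝ) := by field_simp; norm_num
      rw [this, mul_add, mul_div_assoc', mul_div_assoc', mul_comm (K : ℝ) 64]
      congr 1
      field_simp
    _ ≤ 1 / 200 + 1 / 200 := by
      gcongr 1 / 200 + ?_
      rw [div_le_div_iff₀ (by positivity) (by norm_num)]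
      linarith [mul_le_two_pow hK]
    _ = 1 / 100 := by norm_num

lemma two_div_half_pow (K : ℕ) : 2 / (1 / 2 : ℝ) ^ K = 2 * 2 ^ K := by
  rw [one_div, inv_pow, div_inv_eq_mul]

lemma four_mul_pow_lt_exp {K k M : ℕ} (hM : 8 * ((K + 1) * k + 2) ≤ M) :
    4 * (2 / (1 / 2 : ℝ) ^ K) ^ k < Real.exp ((M + 1) / 8) := by
  have hMr : (8 : ℝ) * ((K + 1) * k + 2) ≤ M := mod_cast hM
  calc 4 * (2 / (1 / 2 : ℝ) ^ K) ^ k = 2 ^ ((K + 1) * k + 2) := by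
        rw [two_div_half_pow, pow_add, pow_mul, pow_succ]; ring
    _ ≤ Real.exp (((K + 1) * k + 2 : ℕ) : ℝ) := two_pow_le_exp _
    _ < Real.exp ((M + 1) / 8) := Real.exp_lt_exp.2 (by push_cast; linarith)

lemma spectral_error_le {K M L : ℕ} (hK : 11 ≤ K) (hL : M + K + 13 ≤ L) :
    2 / (1 / 2) ^ K * (M * (1 / 2) ^ L + 2 * (1 / 2) ^ (M + K + 12) * 2 ^ (M + 1) +
      2 * (1 / 4) ^ K) ≤ (1 / 50 : ℝ) := by
  set θ : ℝ := (1 / 2) ^ K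
  have hθ : 0 < θ := by positivity
  have hradius : M * (1 / 2) ^ L ≤ (1 / 2) ^ 13 * θ := by
    calc M * (1 / 2 : ℝ) ^ L ≤ 2 ^ M * (1 / 2) ^ (M + (13 + K)) := by
          gcongr ?_ * ?_
          · linarith [add_one_le_two_pow M]
          · exact half_pow_le_half_pow (by omega)
      _ = (1 / 2) ^ M * 2 ^ M * ((1 / 2) ^ 13 * θ) := by rw [pow_add, pow_add]; ring
      _ = (1 / 2) ^ 13 * θ := by rw [half_pow_mul_two_pow, one_mul]
  have hannulus : 2 * (1 / 2) ^ (M + K + 12) * 2 ^ (M + 1) = (1 / 2) ^ 10 * θ := by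
    calc 2 * (1 / 2 : ℝ) ^ (M + K + 12) * 2 ^ (M + 1)
        = (1 / 2) ^ M * 2 ^ M * ((1 / 2) ^ 10 * θ) := by simp only [θ]; ring
      _ = (1 / 2) ^ 10 * θ := by rw [half_pow_mul_two_pow, one_mul]
  have haverage : 2 * (1 / 4) ^ K ≤ (1 / 2) ^ 10 * θ := by
    calc 2 * (1 / 4 : ℝ) ^ K = 2 * θ * θ := by rw [mul_assoc, ← mul_pow]; norm_num
      _ ≤ 2 * (1 / 2) ^ 11 * θ := by gcongr; exact half_pow_le_half_pow hK
      _ = (1 / 2) ^ 10 * θ := by ring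
  calc 2 / θ * (M * (1 / 2) ^ L + 2 * (1 / 2) ^ (M + K + 12) * 2 ^ (M + 1) + 2 * (1 / 4) ^ K)
      ≤ 2 / θ * ((1 / 2) ^ 13 * θ + (1 / 2) ^ 10 * θ + (1 / 2) ^ 10 * θ) := by
        rw [hannulus]; gcongr
    _ = 2 * ((1 / 2) ^ 13 + (1 / 2) ^ 10 + (1 / 2) ^ 10) := by field_simp
    _ ≤ 1 / 50 := by norm_num

lemma half_pow_mul_le_one {K L : ℕ} (hL : K + 1 ≤ L) : (1 / 2 : ℝ) ^ L * (2 * K + 2) ≤ 1 := by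
  calc (1 / 2 : ℝ) ^ L * (2 * K + 2) ≤ (1 / 2) ^ (K + 1) * (2 * 2 ^ K) := by
        gcongr ?_ * ?_
        · exact half_pow_le_half_pow hL
        · linarith [add_one_le_two_pow K]
    _ = 1 := by rw [← pow_succ', half_pow_mul_two_pow]

lemma ninety_pow_mul_le (l : ℕ) :
    (0.9 : ℝ) ^ (12 * (l + 4)) * 1.01 ≤ 0.96 ^ (12 * (l + 4)) * 0.95 * (1 / 2) ^ l := by
  have hbase : (2 : ℝ) * 0.9 ^ 12 ≤ 0.96 ^ 12 := by norm_num
  rw [pow_mul, pow_mul]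
  calc ((0.9 : ℝ) ^ 12) ^ (l + 4) * 1.01
      ≤ ((0.9 : ℝ) ^ 12) ^ (l + 4) * (2 ^ 4 * 0.95) := by gcongr; norm_num
    _ = (2 * 0.9 ^ 12) ^ (l + 4) * 0.95 * (1 / 2) ^ l := by
      rw [mul_pow 2, pow_add 2 l]
      linear_combination (-(2 ^ 4 * ((0.9 : ℝ) ^ 12) ^ (l + 4) * 0.95)) * half_pow_mul_two_pow l
    _ ≤ (0.96 ^ 12) ^ (l + 4) * 0.95 * (1 / 2) ^ l := by gcongr

lemma one_lt_pow_mul_half_pow (l : ℕ) : 1 < (1.01 : ℝ) ^ (70 * (l + 1)) * (1 / 2) ^ l := by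
  calc (1 : ℝ) < 2 := one_lt_two
    _ = 2 ^ (l + 1) * (1 / 2) ^ l := by linear_combination (-2) * half_pow_mul_two_pow l
    _ ≤ (1.01 ^ 70) ^ (l + 1) * (1 / 2) ^ l := by gcongr; norm_num
    _ = 1.01 ^ (70 * (l + 1)) * (1 / 2) ^ l := by rw [pow_mul]

/- The parameters for density `2 ^ (-l)` are polynomials in `l`; allowing `l` in any commutative
semiring lets them be read both as numbers and as elements of `ℝ[X]`. -/
variable {R : Type*} [CommSemiring R]

/-- The exponent of the moments compared at density `2 ^ (-l)`. -/
def momentExponent (l : R) : R := 12 * (l + 4)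

/-- The number of averagings over almost periods at density `2 ^ (-l)`; the sets involved have
relative density `2 ^ (-averagingLength l)`. -/
def averagingLength (l : R) : R := (l + 1) * (2 * (momentExponent l + 1))

/-- The number of samples used to find almost periods at density `2 ^ (-l)`. -/
def sampleSize (l : R) : R := 640000 * averagingLength l ^ 3

/-- The number of characters added to the Bohr set in a density increment from `2 ^ (-l)`. -/
def spectrumSize (l : R) : R := 8 * ((averagingLength l + 1) * sampleSize l + 2)

/-- The binary logarithm of the shrinking factor of the radii at density `2 ^ (-l)`. -/
def shrinkExponent (l : R) : R := l + (spectrumSize l + averagingLength l + 12) + 1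

/-- A number of density increments that is impossible when starting from density `2 ^ (-l)`. -/
def incrementCount (l : R) : R := 70 * (l + 1)

/-- The binary logarithm of a group order for which all Bohr sets in the density increment
argument at density `2 ^ (-l)` are large. -/
def orderExponent (l : R) : R :=
  7 + 2 * l + (shrinkExponent l * (8 * incrementCount l + 1) + 4) *
    (2 * (incrementCount l * spectrumSize l))

lemma map_orderExponent {S : Type*} [CommSemiring S] (f : R →+* S) (l : R) :
    f (orderExponent l) = orderExponent (f l) := by
  simp only [orderExponent, shrinkExponent, incrementCount, spectrumSize, sampleSize,
    averagingLength, momentExponent, map_add, map_mul, map_pow, map_one, map_ofNat]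

lemma eventually_polynomial_eval_le_two_pow (P : Polynomial ℝ) :
    ∀ᶠ l : ℕ in Filter.atTop, P.eval (l : ℝ) ≤ 2 ^ l := by
  have hlog : 0 < Real.log 2 := Real.log_pos one_lt_two
  set Q := P.comp (.C (Real.log 2)⁻¹ * .X)
  have hlim := (Polynomial.tendsto_div_exp_atTop Q).comp
    (tendsto_natCast_atTop_atTop.atTop_mul_const hlog)
  filter_upwards [hlim.eventually_le_const one_pos] with l hl
  have hexp : Real.exp (l * Real.log 2) = 2 ^ l := by
    rw [mul_comm, Real.exp_mul, Real.exp_log two_pos, Real.rpow_natCast]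
  have heval : Q.eval (l * Real.log 2) = P.eval (l : ℝ) := by
    rw [Polynomial.eval_comp, Polynomial.eval_mul, Polynomial.eval_C, Polynomial.eval_X,
      mul_comm (l : ℝ), inv_mul_cancel_left₀ hlog.ne']
  rwa [Function.comp_apply, hexp, heval, div_le_one (by positivity)] at hl

lemma eventually_orderExponent_le_two_pow :
    ∀ᶠ l : ℕ in Filter.atTop, orderExponent (2 * (l + 1)) ≤ 2 ^ l := by
  filter_upwards [eventually_polynomial_eval_le_two_pow
    (orderExponent (2 * (Polynomial.X + 1)))] with l hl
  rw [← Polynomial.coe_evalRingHom, map_orderExponent] at hl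
  have hcast : ((orderExponent (2 * (l + 1)) : ℕ) : ℝ) = orderExponent (2 * ((l : ℝ) + 1)) := by
    simpa using map_orderExponent (Nat.castRingHom ℝ) (2 * (l + 1))
  rw [← Nat.cast_le (α := ℝ), hcast]
  simpa using hl

lemma incrementParameters_half_pow (l : ℕ) :
    IncrementParameters ((1 / 2) ^ l) ((1 / 2) ^ (spectrumSize l + averagingLength l + 12))
      ((1 / 2) ^ shrinkExponent l) ((1 / 2) ^ averagingLength l) (1 / (400 * averagingLength l))
      (momentExponent l) (averagingLength l) (sampleSize l) (spectrumSize l) := by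
  have hK : 20 ≤ averagingLength l := by simp only [averagingLength, momentExponent]; nlinarith
  have hlK : l ≤ averagingLength l := by simp only [averagingLength]; nlinarith
  have hL : shrinkExponent l = l + (spectrumSize l + averagingLength l + 12) + 1 := rfl
  exact {
    η_nonneg := by positivity
    η_le_one := pow_le_one₀ (by norm_num) (by norm_num)
    κ_pos := by positivity
    κ_mul_le := half_pow_mul_le_one (by omega)
    θ_pos := by positivity
    θ_le_one := pow_le_one₀ (by norm_num) (by norm_num)
    K_pos := by omega
    k_pos := mul_pos (by norm_num) (pow_pos (by omega) 3)
    ε_nonneg := by positivity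
    sampling_error_le := sampling_error_le hK
    lt_exp := four_mul_pow_lt_exp le_rfl
    spectral_error_le := spectral_error_le (by omega) (by omega)
    α_pos := by positivity
    η_le := by
      calc (1 / 2 : ℝ) ^ (spectrumSize l + averagingLength l + 12) ≤ (1 / 2) ^ (l + 8) :=
            half_pow_le_half_pow (by omega)
        _ ≤ (1 / 2) ^ l / 200 := by
            rw [pow_add, div_eq_mul_one_div]
            exact mul_le_mul_of_nonneg_left (by norm_num) (by positivity)
    κ_le := (half_pow_le_half_pow (by omega : 4 ≤ shrinkExponent l)).trans (by norm_num)
    even_p := ⟨6 * (l + 4), by simp only [momentExponent]; omega⟩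
    le_p := by simp only [momentExponent]; omega
    pow_le := ninety_pow_mul_le l
    θ_le := by
      rw [averagingLength, pow_mul, pow_succ]
      exact le_of_eq (by ring) }

variable {G : Type*} [AddCommGroup G] [Fintype G]

lemma thinAnnuli_of_card_lt_two_pow (Γ : Finset (AddChar G ℂ)) {l : ℕ} (n : ℕ)
    (hG : Fintype.card G < 2 ^ 2 ^ l) : ThinAnnuli Γ ((1 / 2) ^ n) ((1 / 2) ^ (l + n + 1)) := by
  have hgrowth : (2 : ℝ) ≤ (1 + (1 / 2) ^ n) ^ 2 ^ n := by
    have hbernoulli := one_add_mul_le_pow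
      ((by norm_num : (-2 : ℝ) ≤ 0).trans (by positivity : 0 ≤ (1 / 2 : ℝ) ^ n)) (2 ^ n)
    push_cast at hbernoulli
    linarith [half_pow_mul_two_pow n]
  have hcard : (Fintype.card G : ℝ) < (1 + (1 / 2) ^ n) ^ (2 ^ (l + n)) := by
    calc (Fintype.card G : ℝ) < 2 ^ 2 ^ l := mod_cast hG
      _ ≤ ((1 + (1 / 2) ^ n) ^ 2 ^ n) ^ 2 ^ l := pow_le_pow_left₀ two_pos.le hgrowth _
      _ = (1 + (1 / 2) ^ n) ^ (2 ^ (l + n)) := by rw [← pow_mul, ← pow_add, add_comm n]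
  convert thinAnnuli_of_card_lt Γ (by positivity) hcard using 1
  push_cast
  rw [one_div_pow, pow_succ']

lemma two_pow_le_card_bohrSet {Γ : Finset (AddChar G ℂ)} {n r s : ℕ} (hΓ : #Γ ≤ s)
    (hG : 2 ^ (n + (r + 4) * (2 * s)) ≤ Fintype.card G) :
    (2 : ℝ) ^ n ≤ #(bohrSet Γ ((1 / 2) ^ r / 2)) := by
  have hcells : ((2 * (4 * 2 ^ r) + 1 : ℕ) : ℝ) ≤ 2 ^ (r + 4) := by
    push_cast
    rw [pow_add]
    linarith [one_le_pow₀ (one_le_two (α := ℝ)) (n := r)]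
  have hbohr := card_le_card_bohrSet_mul Γ (ρ := (1 / 2) ^ r / 2) (M := 4 * 2 ^ r) (by positivity)
    (by push_cast; linarith [half_pow_mul_two_pow r])
  refine le_of_mul_le_mul_right ?_ (by positivity : (0 : ℝ) < 2 ^ ((r + 4) * (2 * s)))
  calc (2 : ℝ) ^ n * 2 ^ ((r + 4) * (2 * s)) ≤ Fintype.card G := by
        rw [← pow_add]; exact_mod_cast hG
    _ ≤ #(bohrSet Γ ((1 / 2) ^ r / 2)) * ((2 * (4 * 2 ^ r) + 1 : ℕ) : ℝ) ^ (2 * #Γ) := hbohr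
    _ ≤ #(bohrSet Γ ((1 / 2) ^ r / 2)) * ((2 : ℝ) ^ (r + 4)) ^ (2 * s) := by
        gcongr ?_ * ?_
        exact (pow_le_pow_left₀ (by positivity) hcells _).trans
          (pow_le_pow_right₀ (one_le_pow₀ one_le_two) (by omega))
    _ = #(bohrSet Γ ((1 / 2) ^ r / 2)) * 2 ^ ((r + 4) * (2 * s)) := by rw [← pow_mul]

lemma exists_add_self_eq_of_odd_card (hG : Odd (Fintype.card G)) :
    ∃ half : G →+ G, ∀ x, half x + half x = x := by
  obtain ⟨m, hm⟩ := hG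
  refine ⟨nsmulAddMonoidHom (m + 1), fun x => ?_⟩
  have hcard : m + 1 + (m + 1) = Fintype.card G + 1 := by omega
  rw [nsmulAddMonoidHom_apply, ← add_nsmul, hcard, succ_nsmul, card_nsmul_eq_zero, zero_add]

theorem card_lt_half_pow_mul_of_threeAPFree (hodd : Odd (Fintype.card G)) {A : Finset G}
    (hA : ThreeAPFree (A : Set G)) {l : ℕ} (hlt : Fintype.card G < 2 ^ 2 ^ l)
    (hle : 2 ^ orderExponent l ≤ Fintype.card G) : #A < (1 / 2) ^ l * (Fintype.card G : ℝ) := by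
  obtain ⟨half, hhalf⟩ := exists_add_self_eq_of_odd_card hodd
  refine card_lt_of_threeAPFree (N := incrementCount l) hhalf hA (incrementParameters_half_pow l)
    (fun Γ => thinAnnuli_of_card_lt_two_pow Γ _ hlt) (fun Γ hΓ => ?_) (one_lt_pow_mul_half_pow l)
  rw [← pow_mul _ (shrinkExponent l)]
  calc (100 : ℝ) ≤ 2 ^ 7 * ((1 / 2) ^ l * 2 ^ l) ^ 2 := by rw [half_pow_mul_two_pow]; norm_num
    _ = ((1 / 2) ^ l) ^ 2 * 2 ^ (7 + 2 * l) := by ring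
    _ ≤ ((1 / 2) ^ l) ^ 2 * #(bohrSet Γ _) := by gcongr; exact two_pow_le_card_bohrSet hΓ hle

end Parameters

section Integers

lemma rothNumberNat_lt_half_pow_mul {m l : ℕ} (hlt : 2 * m + 1 < 2 ^ 2 ^ l)
    (hle : 2 ^ orderExponent l ≤ 2 * m + 1) :
    rothNumberNat m < (1 / 2) ^ l * ((2 * m + 1 : ℕ) : ℝ) := by
  have hm : ((Fin.ofNat (2 * m + 1) m : Fin (2 * m + 1)) : ℕ) = m :=
    Nat.mod_eq_of_lt (by omega)
  obtain ⟨A, -, hcard, hA⟩ := addRothNumber_spec (Iio (Fin.ofNat (2 * m + 1) m))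
  rw [Fin.addRothNumber_eq_rothNumberNat (by rw [hm]), hm] at hcard
  simpa [hcard] using card_lt_half_pow_mul_of_threeAPFree (G := Fin (2 * m + 1)) (l := l)
    (by simp) hA (by simpa using hlt) (by simpa using hle)

lemma log_sq_le_four_pow {m l : ℕ} (h : 2 * m + 1 < 2 ^ 2 ^ l) :
    Real.log (m + 1) ^ 2 ≤ 4 ^ l := by
  have hm : (m : ℝ) + 1 ≤ 2 ^ 2 ^ l := mod_cast (by omega : m + 1 ≤ 2 ^ 2 ^ l)
  have hlog : Real.log (m + 1) ≤ 2 ^ l := by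
    calc Real.log (m + 1) ≤ Real.log (2 ^ 2 ^ l) := Real.log_le_log (by positivity) hm
      _ = 2 ^ l * Real.log 2 := by rw [Real.log_pow]; push_cast; rfl
      _ ≤ 2 ^ l := mul_le_of_le_one_right (by positivity) (by linarith [Real.log_two_lt_d9])
  calc Real.log (m + 1) ^ 2 ≤ (2 ^ l) ^ 2 :=
        pow_le_pow_left₀ (Real.log_nonneg (by linarith [m.cast_nonneg (α := ℝ)])) hlog 2
    _ = 4 ^ l := by rw [← pow_mul, mul_comm, pow_mul]; norm_num

lemma exists_two_pow_two_pow_le_lt {l₀ n : ℕ} (h : 2 ^ 2 ^ l₀ ≤ n) :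
    ∃ l ≥ l₀, 2 ^ 2 ^ l ≤ n ∧ n < 2 ^ 2 ^ (l + 1) := by
  have hn : n ≠ 0 := (lt_of_lt_of_le (by positivity) h).ne'
  have hlog : Nat.log 2 n ≠ 0 :=
    (lt_of_lt_of_le (by positivity) (Nat.le_log_of_pow_le one_lt_two h)).ne'
  refine ⟨Nat.log 2 (Nat.log 2 n), Nat.le_log_of_pow_le one_lt_two
    (Nat.le_log_of_pow_le one_lt_two h), ?_, ?_⟩
  · exact (Nat.pow_le_pow_right two_pos (Nat.pow_log_le_self 2 hlog)).trans
      (Nat.pow_log_le_self 2 hn)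
  · exact (Nat.lt_pow_succ_log_self one_lt_two n).trans_le
      (Nat.pow_le_pow_right two_pos (Nat.lt_pow_succ_log_self one_lt_two _))

theorem exists_rothNumberNat_mul_log_sq_le :
    ∃ C : ℝ, 0 < C ∧ ∀ m : ℕ, rothNumberNat m * Real.log (m + 1) ^ 2 ≤ C * m := by
  obtain ⟨l₀, hl₀⟩ := Filter.eventually_atTop.1 eventually_orderExponent_le_two_pow
  refine ⟨3 * 4 ^ l₀, by positivity, fun m => ?_⟩
  obtain hsmall | hlarge := lt_or_ge (2 * m + 1) (2 ^ 2 ^ l₀)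
  · calc rothNumberNat m * Real.log (m + 1) ^ 2 ≤ m * 4 ^ l₀ := by
          gcongr
          · exact rothNumberNat_le m
          · exact log_sq_le_four_pow hsmall
      _ ≤ 3 * 4 ^ l₀ * m := by
          have : (0 : ℝ) ≤ m * 4 ^ l₀ := by positivity
          linarith
  obtain rfl | hm := m.eq_zero_or_pos
  · simp
  obtain ⟨l, hl, hle, hlt⟩ := exists_two_pow_two_pow_le_lt hlarge
  have hroth := rothNumberNat_lt_half_pow_mul (l := 2 * (l + 1))
    (hlt.trans_le (by gcongr <;> omega)) ((Nat.pow_le_pow_right two_pos (hl₀ l hl)).trans hle)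
  calc rothNumberNat m * Real.log (m + 1) ^ 2
      ≤ (1 / 2) ^ (2 * (l + 1)) * ((2 * m + 1 : ℕ) : ℝ) * 4 ^ (l + 1) := by
        gcongr
        exact log_sq_le_four_pow hlt
    _ = (1 / 4 * 4) ^ (l + 1) * ((2 * m + 1 : ℕ) : ℝ) := by rw [pow_mul, mul_pow]; norm_num; ring
    _ ≤ 3 * m := by
        have : (1 : ℝ) ≤ m := mod_cast hm
        push_cast
        norm_num
        linarith
    _ ≤ 3 * 4 ^ l₀ * m := by
        gcongr
        exact le_mul_of_one_le_right (by norm_num) (one_le_pow₀ (by norm_num))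

end Integers

end KelleyMeka

open Finset

section Radical

lemma natRadical_eq_radical (n : ℕ) : natRadical n = UniqueFactorizationMonoid.radical n :=
  Nat.radical_eq_prod_primeFactors.symm

lemma natRadical_pos (n : ℕ) : 0 < natRadical n := by
  rw [natRadical_eq_radical]; exact Nat.radical_pos n

lemma natRadical_mul_le (a b : ℕ) : natRadical (a * b) ≤ natRadical a * natRadical b := by
  refine Nat.le_of_dvd (Nat.mul_pos (natRadical_pos a) (natRadical_pos b)) ?_
  simpa only [natRadical_eq_radical] using UniqueFactorizationMonoid.radical_mul_dvd

lemma natRadical_pow (a : ℕ) {n : ℕ} (hn : n ≠ 0) : natRadical (a ^ n) = natRadical a := by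
  simpa only [natRadical_eq_radical] using UniqueFactorizationMonoid.radical_pow a hn

lemma natRadical_le {a : ℕ} (ha : a ≠ 0) : natRadical a ≤ a := by
  rw [natRadical_eq_radical]; exact Nat.radical_le_self_iff.2 ha

lemma natRadical_mono {a b : ℕ} (h : a ∣ b) (hb : b ≠ 0) : natRadical a ≤ natRadical b := by
  refine Nat.le_of_dvd (natRadical_pos b) ?_
  simpa only [natRadical_eq_radical] using UniqueFactorizationMonoid.radical_dvd_radical h hb

lemma IsSquarefull.natRadical_sq_le {n : ℕ} (h : IsSquarefull n) (hn : n ≠ 0) :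
    natRadical n ^ 2 ≤ n := by
  refine Nat.le_of_dvd (Nat.pos_of_ne_zero hn) ?_
  rw [natRadical, ← prod_pow]
  refine prod_dvd_of_isRelPrime (fun p hp q hq hpq => ?_) fun p hp =>
    h p (Nat.prime_of_mem_primeFactors hp) (Nat.dvd_of_mem_primeFactors hp)
  exact Nat.coprime_iff_isRelPrime.1 (Nat.Coprime.pow 2 2 ((Nat.coprime_primes
    (Nat.prime_of_mem_primeFactors hp) (Nat.prime_of_mem_primeFactors hq)).2 hpq))

lemma natRadical_mul_sq_mul_sq_le {a b c d : ℕ} (hd : d ≠ 0) :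
    natRadical (a * c * d ^ 2 * b ^ 2) ≤ natRadical a * natRadical b * natRadical c * d := by
  calc natRadical (a * c * d ^ 2 * b ^ 2)
      ≤ natRadical (a * c * d ^ 2) * natRadical (b ^ 2) := natRadical_mul_le _ _
    _ ≤ natRadical (a * c) * natRadical (d ^ 2) * natRadical (b ^ 2) := by
        gcongr; exact natRadical_mul_le _ _
    _ ≤ natRadical a * natRadical c * natRadical (d ^ 2) * natRadical (b ^ 2) := by
        gcongr; exact natRadical_mul_le _ _
    _ = natRadical a * natRadical b * natRadical c * natRadical d := by
        rw [natRadical_pow d two_ne_zero, natRadical_pow b two_ne_zero]; ring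
    _ ≤ natRadical a * natRadical b * natRadical c * d := by gcongr; exact natRadical_le hd

lemma natRadical_sq_le_of_isSquarefull_mul {a d e : ℕ} (ha : a ≠ 0) (hd : d ≠ 0) (he : e ≠ 0)
    (hda : d ≤ a) (h₀ : IsSquarefull (a * e)) (h₁ : IsSquarefull ((a + d) * e))
    (h₂ : IsSquarefull ((a + 2 * d) * e)) :
    natRadical (a * (a + 2 * d) * d ^ 2 * (a + d) ^ 2) ^ 2 ≤ 6 * (a * e) ^ 3 * (d * e) ^ 2 := by
  have hrad {b : ℕ} (hb : b ≠ 0) (h : IsSquarefull (b * e)) : natRadical b ^ 2 ≤ b * e :=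
    (Nat.pow_le_pow_left (natRadical_mono (dvd_mul_right b e) (mul_ne_zero hb he)) 2).trans
      (h.natRadical_sq_le (mul_ne_zero hb he))
  calc natRadical (a * (a + 2 * d) * d ^ 2 * (a + d) ^ 2) ^ 2
      ≤ (natRadical a * natRadical (a + d) * natRadical (a + 2 * d) * d) ^ 2 :=
        Nat.pow_le_pow_left (natRadical_mul_sq_mul_sq_le hd) 2
    _ = natRadical a ^ 2 * natRadical (a + d) ^ 2 * natRadical (a + 2 * d) ^ 2 * d ^ 2 := by ring
    _ ≤ a * e * ((a + d) * e) * ((a + 2 * d) * e) * (d * e) ^ 2 := by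
        gcongr
        · exact hrad ha h₀
        · exact hrad (by omega) h₁
        · exact hrad (by omega) h₂
        · exact Nat.le_mul_of_pos_right d (Nat.pos_of_ne_zero he)
    _ ≤ a * e * ((a + a) * e) * ((a + 2 * a) * e) * (d * e) ^ 2 := by gcongr
    _ = 6 * (a * e) ^ 3 * (d * e) ^ 2 := by ring

end Radical

section Progressions

lemma le_mul_rpow_of_sq_le_mul_rpow {C w R s : ℝ} (hC : 0 ≤ C) (hw : 0 < w) (hR : 0 ≤ R)
    (hRw : R ≤ 3 * w ^ 26) (hs : w ^ 14 ≤ s) (h : s ^ 2 ≤ C * R ^ (1 + 1 / 26 : ℝ)) :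
    w ≤ C * 3 ^ (1 + 1 / 26 : ℝ) := by
  have hpow : R ^ (1 + 1 / 26 : ℝ) ≤ 3 ^ (1 + 1 / 26 : ℝ) * w ^ 27 := by
    calc R ^ (1 + 1 / 26 : ℝ) ≤ (3 * w ^ 26) ^ (1 + 1 / 26 : ℝ) :=
          Real.rpow_le_rpow hR hRw (by norm_num)
      _ = 3 ^ (1 + 1 / 26 : ℝ) * w ^ 27 := by
          rw [Real.mul_rpow (by norm_num) (by positivity), ← Real.rpow_natCast w 26,
            ← Real.rpow_natCast w 27, ← Real.rpow_mul hw.le]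
          norm_num
  refine le_of_mul_le_mul_right ?_ (pow_pos hw 27)
  calc w * w ^ 27 = (w ^ 14) ^ 2 := by ring
    _ ≤ s ^ 2 := pow_le_pow_left₀ (by positivity) hs 2
    _ ≤ C * R ^ (1 + 1 / 26 : ℝ) := h
    _ ≤ C * (3 ^ (1 + 1 / 26 : ℝ) * w ^ 27) := by gcongr
    _ = C * 3 ^ (1 + 1 / 26 : ℝ) * w ^ 27 := by ring

lemma natRadical_le_three_mul_pow {a d e : ℕ} {w : ℝ} (ha : a ≠ 0) (hd : d ≠ 0) (he : e ≠ 0)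
    (hda : d ≤ a) (hw : 0 ≤ w) (haw : ((a * e : ℕ) : ℝ) = w ^ 16)
    (hdw : ((d * e : ℕ) : ℝ) ≤ w ^ 2) (h₀ : IsSquarefull (a * e))
    (h₁ : IsSquarefull ((a + d) * e)) (h₂ : IsSquarefull ((a + 2 * d) * e)) :
    (natRadical (a * (a + 2 * d) * d ^ 2 * (a + d) ^ 2) : ℝ) ≤ 3 * w ^ 26 := by
  refine le_of_pow_le_pow_left₀ two_ne_zero (mul_nonneg zero_le_three (pow_nonneg hw 26)) ?_
  calc (natRadical (a * (a + 2 * d) * d ^ 2 * (a + d) ^ 2) : ℝ) ^ 2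
      ≤ 6 * ((a * e : ℕ) : ℝ) ^ 3 * ((d * e : ℕ) : ℝ) ^ 2 :=
        mod_cast natRadical_sq_le_of_isSquarefull_mul ha hd he hda h₀ h₁ h₂
    _ ≤ 9 * (w ^ 16) ^ 3 * (w ^ 2) ^ 2 := by rw [haw]; gcongr; norm_num
    _ = (3 * w ^ 26) ^ 2 := by ring

/-- The abc-conjecture is applied to `a * (a + 2 * d) + d ^ 2 = (a + d) ^ 2`, where `a` and `d` are
the first term and the difference of the progression divided by their gcd `e`. -/
theorem ABCConjecture.exists_le_of_isSquarefull (habc : ABCConjecture) :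
    ∃ X : ℝ, ∀ n d : ℕ, 0 < n → 0 < d → d ^ 8 ≤ n → IsSquarefull n → IsSquarefull (n + d) →
      IsSquarefull (n + 2 * d) → (n : ℝ) ≤ X := by
  obtain ⟨C, hC, habc⟩ := habc (1 / 26) (by norm_num)
  refine ⟨(C * 3 ^ (1 + 1 / 26 : ℝ)) ^ 16, fun n d hn hd hdn h₀ h₁ h₂ => ?_⟩
  set w : ℝ := (n : ℝ) ^ (16⁻¹ : ℝ)
  have hw : 0 < w := by positivity
  have hw_pow : w ^ 16 = n := Real.rpow_inv_natCast_pow (n := 16) n.cast_nonneg (by norm_num)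
  have hdw : (d : ℝ) ≤ w ^ 2 := by
    refine le_of_pow_le_pow_left₀ (n := 8) (by norm_num) (by positivity) ?_
    rw [← pow_mul, hw_pow]
    exact_mod_cast hdn
  have hd_le : d ≤ n := (Nat.le_self_pow (by norm_num) d).trans hdn
  obtain ⟨a, b, hcop, hna, hdb⟩ := Nat.exists_coprime n d
  have hed : n.gcd d ≤ d := Nat.gcd_le_right n hd
  have he : 0 < n.gcd d := Nat.gcd_pos_of_pos_left d hn
  generalize n.gcd d = e at *
  subst hna hdb
  have ha : 0 < a := Nat.pos_of_mul_pos_right hn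
  have hb : 0 < b := Nat.pos_of_mul_pos_right hd
  have hcop' : Nat.Coprime (a * (a + 2 * b)) (b ^ 2) :=
    (hcop.mul_left ((Nat.coprime_add_mul_right_left a b 2).2 hcop)).pow_right 2
  have hbound := habc (a * (a + 2 * b)) (b ^ 2) ((a + b) ^ 2) (by positivity) (by positivity)
    (by positivity) hcop' (by ring)
  have hrad := natRadical_le_three_mul_pow ha.ne' hb.ne' he.ne'
    (Nat.le_of_mul_le_mul_right hd_le he) hw.le hw_pow.symm hdw h₀ (by rwa [add_mul])
    (by rwa [add_mul, mul_assoc])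
  have hwa : w ^ 14 ≤ a := by
    refine le_of_mul_le_mul_right ?_ (pow_pos hw 2)
    calc w ^ 14 * w ^ 2 = a * e := by rw [← pow_add, hw_pow, Nat.cast_mul]
      _ ≤ a * w ^ 2 := by gcongr; exact (Nat.cast_le.2 hed).trans hdw
  rw [← hw_pow]
  refine pow_le_pow_left₀ hw.le (le_mul_rpow_of_sq_le_mul_rpow hC.le hw (Nat.cast_nonneg _) hrad
    (s := (a + b : ℕ)) ?_ (mod_cast hbound)) 16
  push_cast
  linarith [b.cast_nonneg (α := ℝ)]

lemma threeAPFree_of_forall_notMem {S : Set ℕ}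
    (hS : ∀ n d, 0 < d → n ∈ S → n + d ∈ S → n + 2 * d ∉ S) : ThreeAPFree S := by
  intro a ha b hb c hc hsum
  obtain hab | hab | hba := lt_trichotomy a b
  · obtain ⟨d, rfl⟩ := Nat.exists_eq_add_of_le hab.le
    obtain rfl : c = a + 2 * d := by omega
    exact absurd hc (hS a d (by omega) ha hb)
  · exact hab
  · obtain ⟨d, rfl⟩ := Nat.exists_eq_add_of_le (by omega : c ≤ b)
    obtain rfl : a = c + 2 * d := by omega
    exact absurd ha (hS c d (by omega) hc hb)

lemma card_le_mul_rothNumberNat {S : Finset ℕ} {a n m : ℕ} (hm : 0 < m) (hS : S ⊆ Ico a (a + n))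
    (hfree : ∀ b, ThreeAPFree (S ∩ Ico b (b + m) : Set ℕ)) :
    #S ≤ rothNumberNat m * (n / m + 1) := by
  have hblock (j : ℕ) : #{t ∈ S | (t - a) / m = j} ≤ rothNumberNat m := by
    have hsub : {t ∈ S | (t - a) / m = j} ⊆ S ∩ Ico (a + j * m) (a + j * m + m) := by
      intro t ht
      obtain ⟨htS, rfl⟩ := mem_filter.1 ht
      have := (mem_Ico.1 (hS htS)).1
      have := Nat.div_mul_le_self (t - a) m
      have := Nat.lt_div_mul_add (a := t - a) hm
      exact mem_inter.2 ⟨htS, mem_Ico.2 ⟨by omega, by omega⟩⟩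
    calc #{t ∈ S | (t - a) / m = j} ≤ addRothNumber (Ico (a + j * m) (a + j * m + m)) :=
          ThreeAPFree.le_addRothNumber ((hfree _).mono (mod_cast hsub))
            (hsub.trans inter_subset_right)
      _ = rothNumberNat m := by rw [addRothNumber_Ico, Nat.add_sub_cancel_left]
  have hmaps : ∀ t ∈ S, (t - a) / m ∈ range (n / m + 1) := fun t ht => by
    have := mem_Ico.1 (hS ht)
    exact mem_range.2 (Nat.lt_succ_of_le (Nat.div_le_div_right (by omega)))
  simpa [mul_comm] using card_le_mul_card_image_of_maps_to hmaps _ fun j _ => hblock j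

end Progressions

section Counting

theorem ABCConjecture.exists_card_isSquarefull_le (habc : ABCConjecture) :
    ∃ X : ℕ, ∀ a b m : ℕ, X ≤ a → 0 < m → m ^ 8 ≤ a →
      ∀ S : Finset ℕ, S ⊆ Ioc a b → (∀ n ∈ S, IsSquarefull n) →
        #S ≤ rothNumberNat m * ((b - a) / m + 1) := by
  obtain ⟨X, hX⟩ := habc.exists_le_of_isSquarefull
  refine ⟨⌈X⌉₊, fun a b m ha hm hma S hS hfull => card_le_mul_rothNumberNat (a := a + 1) hm
    (fun n hn => ?_) fun c => threeAPFree_of_forall_notMem ?_⟩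
  · have := mem_Ioc.1 (hS hn)
    exact mem_Ico.2 ⟨by omega, by omega⟩
  rintro n d hd ⟨hn, hnc⟩ ⟨hnd, -⟩ ⟨hn2d, hn2dc⟩
  have han := (mem_Ioc.1 (hS hn)).1
  have hdm : d ≤ m := by
    have := (mem_Ico.1 (mem_coe.1 hnc)).1
    have := (mem_Ico.1 (mem_coe.1 hn2dc)).2
    omega
  have hdn : d ^ 8 ≤ n := (Nat.pow_le_pow_left hdm 8).trans (hma.trans han.le)
  have hnX : n ≤ ⌈X⌉₊ := Nat.cast_le.1
    ((hX n d (by omega) hd hdn (hfull n hn) (hfull _ hnd) (hfull _ hn2d)).trans (Nat.le_ceil X))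
  omega

lemma exists_pow_eight_le_and_log_le {y : ℝ} (hy : 1 ≤ y) :
    ∃ m : ℕ, 0 < m ∧ (m : ℝ) ^ 8 ≤ y ∧ Real.log (y + 1) ≤ 9 * Real.log (m + 1) := by
  set z : ℝ := y ^ (8⁻¹ : ℝ)
  have hz_pow : z ^ 8 = y := Real.rpow_inv_natCast_pow (n := 8) (by linarith) (by norm_num)
  have hz : 1 ≤ z := Real.one_le_rpow hy (by norm_num)
  have hfloor := Nat.lt_floor_add_one z
  have : 0 < ⌊z⌋₊ := Nat.floor_pos.2 hz
  have hone : (1 : ℝ) ≤ ⌊z⌋₊ := mod_cast this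
  refine ⟨⌊z⌋₊, this, ?_, ?_⟩
  · calc (⌊z⌋₊ : ℝ) ^ 8 ≤ z ^ 8 := pow_le_pow_left₀ (by positivity) (Nat.floor_le (by positivity)) 8
      _ = y := hz_pow
  · have hpow : y + 1 ≤ (⌊z⌋₊ + 1 : ℝ) ^ 9 := by
      calc y + 1 ≤ y * 2 := by linarith
        _ ≤ (⌊z⌋₊ + 1 : ℝ) ^ 8 * (⌊z⌋₊ + 1) := by
          rw [← hz_pow]
          gcongr
          linarith
        _ = (⌊z⌋₊ + 1 : ℝ) ^ 9 := (pow_succ _ 8).symm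
    calc Real.log (y + 1) ≤ Real.log ((⌊z⌋₊ + 1 : ℝ) ^ 9) := Real.log_le_log (by linarith) hpow
      _ = 9 * Real.log (⌊z⌋₊ + 1) := by rw [Real.log_pow]; norm_num

lemma exists_finset_isSquarefull_Ioc {x y : ℝ} (hx : 0 ≤ x) (hy : 0 ≤ y) :
    ∃ S ⊆ Ioc ⌊x⌋₊ ⌊x + y⌋₊, (∀ n ∈ S, IsSquarefull n) ∧
      {n : ℕ | x < n ∧ n ≤ x + y ∧ 0 < n ∧ IsSquarefull n}.ncard = #S := by
  classical
  refine ⟨{n ∈ Ioc ⌊x⌋₊ ⌊x + y⌋₊ | IsSquarefull n}, filter_subset _ _,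
    fun n hn => (mem_filter.1 hn).2, ?_⟩
  rw [← Set.ncard_coe_finset]
  congr 1
  ext n
  simp only [Set.mem_ofPred_eq, coe_filter, mem_Ioc, Nat.floor_lt hx,
    Nat.le_floor_iff (add_nonneg hx hy), and_assoc]
  exact ⟨fun h => ⟨h.1, h.2.1, h.2.2.2⟩, fun h => ⟨h.1, h.2.1, by
    exact_mod_cast hx.trans_lt h.1, h.2.2⟩⟩

lemma floor_add_sub_floor_le {x y : ℝ} (hx : 0 ≤ x) (hy : 0 ≤ y) :
    ((⌊x + y⌋₊ - ⌊x⌋₊ : ℕ) : ℝ) ≤ y + 1 := by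
  rw [Nat.cast_sub (Nat.floor_mono (by linarith))]
  linarith [Nat.floor_le (add_nonneg hx hy), Nat.lt_floor_add_one x]

lemma card_mul_log_sq_le_of_floor_lt {S : Finset ℕ} {x y : ℝ} {X : ℕ} (hy : 1 ≤ y) (hyx : y ≤ x)
    (hS : S ⊆ Ioc ⌊x⌋₊ ⌊x + y⌋₊) (hX : ⌊x⌋₊ < X) :
    (#S : ℝ) * Real.log (y + 1) ^ 2 ≤ 2 * X ^ 2 * y := by
  have hcard : (#S : ℝ) ≤ 2 * y := by
    have : (#S : ℝ) ≤ (⌊x + y⌋₊ - ⌊x⌋₊ : ℕ) :=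
      mod_cast (card_le_card hS).trans_eq (Nat.card_Ioc _ _)
    linarith [floor_add_sub_floor_le (by linarith : 0 ≤ x) (by linarith : 0 ≤ y)]
  have hlog : Real.log (y + 1) ≤ X := by
    have : x < X := (Nat.floor_lt (by linarith)).1 hX
    linarith [Real.log_le_sub_one_of_pos (by linarith : 0 < y + 1)]
  have hlog_nonneg : 0 ≤ Real.log (y + 1) := Real.log_nonneg (by linarith)
  calc (#S : ℝ) * Real.log (y + 1) ^ 2 ≤ 2 * y * X ^ 2 :=
        mul_le_mul hcard (pow_le_pow_left₀ hlog_nonneg hlog 2) (sq_nonneg _) (by linarith)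
    _ = 2 * X ^ 2 * y := by ring

lemma card_mul_log_sq_le_of_le_rothNumberNat {s m N : ℕ} {C y : ℝ} (hC : 0 ≤ C) (hy : 1 ≤ y)
    (hmy : (m : ℝ) ≤ y) (hN : (N : ℝ) ≤ y + 1)
    (hlog : Real.log (y + 1) ≤ 9 * Real.log (m + 1))
    (hroth : rothNumberNat m * Real.log (m + 1) ^ 2 ≤ C * m)
    (hs : s ≤ rothNumberNat m * (N / m + 1)) :
    (s : ℝ) * Real.log (y + 1) ^ 2 ≤ 243 * C * y := by
  have hlog_nonneg : 0 ≤ Real.log (y + 1) := Real.log_nonneg (by linarith)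
  have hNm : (m : ℝ) * ((N / m : ℕ) + 1) ≤ N + m := by
    exact_mod_cast (by linarith [Nat.mul_div_le N m] : m * (N / m + 1) ≤ N + m)
  calc (s : ℝ) * Real.log (y + 1) ^ 2
      ≤ (rothNumberNat m * ((N / m : ℕ) + 1)) * (9 * Real.log (m + 1)) ^ 2 := by
        gcongr
        exact_mod_cast hs
    _ = 81 * (rothNumberNat m * Real.log (m + 1) ^ 2) * ((N / m : ℕ) + 1) := by ring
    _ ≤ 81 * (C * m) * ((N / m : ℕ) + 1) := by gcongr
    _ = 81 * C * (m * ((N / m : ℕ) + 1)) := by ring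
    _ ≤ 81 * C * (3 * y) :=
        mul_le_mul_of_nonneg_left (by linarith) (mul_nonneg (by norm_num) hC)
    _ = 243 * C * y := by ring

theorem ABCConjecture.exists_ncard_isSquarefull_mul_log_sq_le (habc : ABCConjecture) :
    ∃ C : ℝ, 0 < C ∧ ∀ x y : ℝ, 1 ≤ y → y ≤ x →
      ({n : ℕ | x < n ∧ n ≤ x + y ∧ 0 < n ∧ IsSquarefull n}.ncard : ℝ) * Real.log (y + 1) ^ 2
        ≤ C * y := by
  obtain ⟨X, hX⟩ := habc.exists_card_isSquarefull_le
  obtain ⟨C, hC, hroth⟩ := KelleyMeka.exists_rothNumberNat_mul_log_sq_le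
  refine ⟨max (2 * X ^ 2) (243 * C), lt_max_of_lt_right (by positivity), fun x y hy hyx => ?_⟩
  obtain ⟨S, hS, hfull, hcard⟩ :=
    exists_finset_isSquarefull_Ioc (by linarith : 0 ≤ x) (by linarith : 0 ≤ y)
  rw [hcard]
  obtain hlt | hle := lt_or_ge ⌊x⌋₊ X
  · calc (#S : ℝ) * Real.log (y + 1) ^ 2 ≤ 2 * X ^ 2 * y :=
          card_mul_log_sq_le_of_floor_lt hy hyx hS hlt
      _ ≤ max (2 * (X : ℝ) ^ 2) (243 * C) * y := by gcongr; exact le_max_left _ _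
  · obtain ⟨m, hm, hmy, hlog⟩ := exists_pow_eight_le_and_log_le hy
    have hmx : m ^ 8 ≤ ⌊x⌋₊ := Nat.le_floor (by push_cast; exact hmy.trans hyx)
    have hm_le : (m : ℝ) ≤ y :=
      (le_self_pow₀ (mod_cast hm : (1 : ℝ) ≤ m) (by norm_num)).trans hmy
    calc (#S : ℝ) * Real.log (y + 1) ^ 2 ≤ 243 * C * y :=
          card_mul_log_sq_le_of_le_rothNumberNat hC.le hy hm_le
            (floor_add_sub_floor_le (by linarith) (by linarith)) hlog (hroth m)
            (hX _ _ m hle hm hmx S hS hfull)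
      _ ≤ max (2 * (X : ℝ) ^ 2) (243 * C) * y := by gcongr; exact le_max_right _ _

end Counting

/-- Assuming the abc-conjecture, there exist absolute constants `c > 0` and `C > 0`
such that for all real `x ≥ 1` and `1 ≤ y ≤ x`, the number of squarefull integers
in `(x, x + y]` is at most `C · y / (log (y + 1))^(1+c)`. -/
theorem squarefull_short_interval_log_power_saving_of_abc (habc : ABCConjecture) :
    ∃ c C : ℝ, 0 < c ∧ 0 < C ∧ ∀ x y : ℝ, 1 ≤ x → 1 ≤ y → y ≤ x →
      (({n : ℕ | x < (n : ℝ) ∧ (n : ℝ) ≤ x + y ∧ 0 < n ∧ IsSquarefull n}.ncard : ℝ))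
        ≤ C * y / Real.log (y + 1) ^ (1 + c) := by
  obtain ⟨C, hC, h⟩ := habc.exists_ncard_isSquarefull_mul_log_sq_le
  refine ⟨1, C, one_pos, hC, fun x y _ hy hyx => ?_⟩
  have hlog : 0 < Real.log (y + 1) := Real.log_pos (by linarith)
  rw [one_add_one_eq_two, Real.rpow_two, le_div_iff₀ (pow_pos hlog 2)]
  exact h x y hy hyx
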